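/- arXiv:2410.21700 — 3 statements merged into one kernel-verified Lean document; each statement's English description precedes it below -/
import Mathlib

section
/- Let λ > 1, let α be Diophantine, and let θ ∈ ℝ satisfy δ(α,θ) > ln λ. Then the almost Mathieu operator H_{λ,α,θ} has no eigenvalues: for every E ∈ ℝ, every u ∈ ℓ²(ℤ) satisfying u(n+1) + u(n−1) + 2λcos(2π(θ + nα))u(n) = E·u(n) for all n is identically zero. -/
noncomputable section

open Filter Real

def distToInt (x : ℝ) : ℝ := |x - round x|

def IsDiophantine (α : ℝ) : Prop :=
  ∃ κ τ : ℝ, 0 < κ ∧ 0 < τ ∧ ∀ k : ℤ, k ≠ 0 → τ / |(k : ℝ)| ^ κ ≤ distToInt (k * α)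

def deltaPhase (α θ : ℝ) : ℝ :=
  limsup (fun n : ℤ => -Real.log (distToInt (2 * θ + n * α)) / |(n : ℝ)|) cofinite

def amoPot (lam α θ : ℝ) : ℤ → ℝ := fun n => 2 * lam * Real.cos (2 * Real.pi * (θ + n * α))

def IsEigenfunction (g : ℤ → ℝ) (E : ℝ) (φ : ℤ → ℝ) : Prop :=
  ∀ n : ℤ, φ (n + 1) + φ (n - 1) + g n * φ n = E * φ n

def deltaPot (g : ℤ → ℝ) : ℝ :=
  limsup (fun n : ℤ => -Real.log (⨆ m : ℤ, |g (n - m) - g m|) / |(n : ℝ)|) cofinite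

def matNorm (M : Matrix (Fin 2) (Fin 2) ℝ) : ℝ := ⨆ p : Fin 2 × Fin 2, |M p.1 p.2|

def transfer (g : ℤ → ℝ) (E : ℝ) : ℕ → ℤ → Matrix (Fin 2) (Fin 2) ℝ
  | 0, _ => 1
  | n + 1, k => !![E - g (k + n), -1; 1, 0] * transfer g E n k

def LyapSup (g : ℤ → ℝ) (E : ℝ) : ℝ :=
  limsup (fun n : ℕ => ⨆ k : ℤ, Real.log (matNorm (transfer g E n k)) / n) atTop

def HasSULE (g : ℤ → ℝ) : Prop :=
  ∃ (Φ : HilbertBasis ℕ ℝ (lp (fun _ : ℤ => ℝ) 2)) (ns : ℕ → ℤ) (γ : ℝ),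
    0 < γ ∧
    (∀ s : ℕ, ∃ E : ℝ, IsEigenfunction g E (fun n => Φ s n)) ∧
    ∀ ε : ℝ, 0 < ε → ∃ C : ℝ,
      ∀ (s : ℕ) (n : ℤ),
        |Φ s n| ≤ C * Real.exp (ε * |(ns s : ℝ)|) * Real.exp (-γ * |(n : ℝ) - (ns s : ℝ)|)

/-!
Let `u ∈ ℓ²(ℤ)` be a nonzero eigenfunction. By Aubry duality its Fourier transform yields an
invariant section of the transfer cocycle of the dual operator, which has hopping `λ` and coupling
`1`. Divided by `λ`, this cocycle takes values in `SL(2)`. The section is nonzero almost everywhere,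
and where it is neither small nor large a frame of determinant one extending it is bounded; in such
frames the cocycle is unipotent, so its Lyapunov exponent vanishes. Thus the exponent of the dual
cocycle at the energy of `u` is `ln λ`.

On the other hand the density of states does not change when the two couplings are exchanged:
its moments are the diagonal matrix elements of the powers of the magnetic Laplacian on `ℤ²`, which
is invariant under rotation by a right angle. Hence the logarithms of the determinants of the
truncations of `H` and of its dual have the same mean growth. These determinants are the entries of
the transfer matrices, and since the rotation is uniquely ergodic the upper bound is uniform in the
phase: the transfer matrices of length `n` are `O(exp (n L'))` for every `L' > ln λ`.

Finally let `‖2θ + kα‖ ≤ exp (-L|k|)` with `L > L'`. The potential is almost invariant under the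
reflection `n ↦ k - n`, so the Wronskian of `u` and its reflection is small. Around `k / 2` it
factors, which makes `u` close there to its reflection up to a sign. The error grows at a
rate of at most `L'` on the way from `k / 2` to the sites `0` and `k`, so `u` is almost as small at
`0` and `-1` as it is near `k`. As `u` decays and there are infinitely many such `k`, it vanishes.
-/

open MeasureTheory Topology Matrix

open scoped Matrix.Norms.Operator

namespace AlmostMathieu

/-! ### Linear cocycles -/

section MatrixNorm

variable {ι κ R : Type*} [Fintype ι] [Fintype κ]

theorem sum_norm_le_linfty_opNorm [SeminormedAddCommGroup R] (A : Matrix ι κ R) (i : ι) :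
    ∑ j, ‖A i j‖ ≤ ‖A‖ := by
  rw [Matrix.linfty_opNorm_def]
  simpa [← NNReal.coe_le_coe] using
    Finset.le_sup (f := fun i => ∑ j, ‖A i j‖₊) (Finset.mem_univ i)

theorem norm_entry_le_linfty_opNorm [SeminormedAddCommGroup R] (A : Matrix ι κ R) (i : ι) (j : κ) :
    ‖A i j‖ ≤ ‖A‖ :=
  (Finset.single_le_sum (f := fun j => ‖A i j‖) (by simp) (Finset.mem_univ j)).trans
    (sum_norm_le_linfty_opNorm A i)

theorem linfty_opNorm_le [SeminormedAddCommGroup R] {A : Matrix ι κ R} {r : ℝ} (hr : 0 ≤ r)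
    (h : ∀ i, ∑ j, ‖A i j‖ ≤ r) : ‖A‖ ≤ r := by
  lift r to NNReal using hr
  rw [Matrix.linfty_opNorm_def, NNReal.coe_le_coe]
  exact Finset.sup_le fun i _ => by simpa [← NNReal.coe_le_coe] using h i

theorem norm_det_fin_two_le [NormedCommRing R] (A : Matrix (Fin 2) (Fin 2) R) :
    ‖A.det‖ ≤ ‖A‖ ^ 2 := by
  have h0 := sum_norm_le_linfty_opNorm A 0
  have h1 := sum_norm_le_linfty_opNorm A 1
  rw [Fin.sum_univ_two] at h0 h1
  calc ‖A.det‖ ≤ ‖A 0 0‖ * ‖A 1 1‖ + ‖A 0 1‖ * ‖A 1 0‖ := by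
        rw [Matrix.det_fin_two]
        exact (norm_sub_le _ _).trans (add_le_add (norm_mul_le _ _) (norm_mul_le _ _))
    _ ≤ (‖A 0 0‖ + ‖A 0 1‖) * (‖A 1 0‖ + ‖A 1 1‖) := by
        nlinarith [norm_nonneg (A 0 0), norm_nonneg (A 0 1), norm_nonneg (A 1 0),
          norm_nonneg (A 1 1)]
    _ ≤ ‖A‖ ^ 2 := by rw [sq]; gcongr

theorem one_le_norm_of_det_eq_one [NormedCommRing R] [NormOneClass R]
    {A : Matrix (Fin 2) (Fin 2) R} (hA : A.det = 1) : 1 ≤ ‖A‖ := by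
  have h := norm_det_fin_two_le A
  rw [hA, norm_one] at h
  exact (one_le_sq_iff₀ (norm_nonneg _)).1 h

end MatrixNorm

section Cocycle

variable {R X Y M N : Type*} {T : X → X}

/-- The linear cocycle over `T` generated by `A`: the product of `A` along the first `n` points of
the orbit of `x`, most recent factor on the left. -/
def cocycle [Monoid M] (T : X → X) (A : X → M) : ℕ → X → M
  | 0, _ => 1
  | n + 1, x => A (T^[n] x) * cocycle T A n x

theorem cocycle_add [Monoid M] (A : X → M) (m n : ℕ) (x : X) :
    cocycle T A (m + n) x = cocycle T A m (T^[n] x) * cocycle T A n x := by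
  induction m with
  | zero => simp [cocycle]
  | succ m ih =>
    rw [Nat.add_right_comm, cocycle, ih, cocycle, ← Function.iterate_add_apply, mul_assoc]

theorem cocycle_succ' [Monoid M] (A : X → M) (n : ℕ) (x : X) :
    cocycle T A (n + 1) x = cocycle T A n (T x) * A x := by
  rw [cocycle_add]
  simp [cocycle]

theorem map_cocycle [Monoid M] [Monoid N] (φ : M →* N) (A : X → M) (n : ℕ) (x : X) :
    φ (cocycle T A n x) = cocycle T (φ ∘ A) n x := by
  induction n with
  | zero => exact map_one φ
  | succ n ih => rw [cocycle, map_mul, ih]; rfl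

theorem cocycle_semiconj [Monoid M] {S : Y → Y} {f : Y → X} (h : Function.Semiconj f S T)
    (A : X → M) (n : ℕ) (y : Y) : cocycle T A n (f y) = cocycle S (A ∘ f) n y := by
  induction n with
  | zero => rfl
  | succ n ih => rw [cocycle, ih, ← (h.iterate_right n).eq]; rfl

theorem cocycle_smul [CommMonoid R] [Monoid M] [MulAction R M] [IsScalarTower R M M]
    [SMulCommClass R M M] (c : R) (A : X → M) (n : ℕ) (x : X) :
    cocycle T (c • A) n x = c ^ n • cocycle T A n x := by
  induction n with
  | zero => rw [pow_zero, one_smul]; rfl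
  | succ n ih => rw [cocycle, ih, Pi.smul_apply, smul_mul_smul_comm, ← pow_succ', cocycle]

theorem continuous_cocycle [TopologicalSpace X] [TopologicalSpace M] [Monoid M] [ContinuousMul M]
    {A : X → M} (hT : Continuous T) (hA : Continuous A) (n : ℕ) : Continuous (cocycle T A n) := by
  induction n with
  | zero => exact continuous_const
  | succ n ih => exact (hA.comp (hT.iterate n)).mul ih

theorem norm_cocycle_le [NormedRing M] [NormOneClass M] {A : X → M} {K : ℝ} (hA : ∀ x, ‖A x‖ ≤ K)
    (n : ℕ) (x : X) : ‖cocycle T A n x‖ ≤ K ^ n := by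
  induction n with
  | zero => simp [cocycle]
  | succ n ih =>
    rw [cocycle, pow_succ']
    exact norm_mul_le_of_le (hA _) ih

theorem subadditive_integral_log_norm_cocycle [NormedRing M] [MeasurableSpace X] {μ : Measure X}
    (hT : MeasurePreserving T μ μ) {A : X → M} (hne : ∀ n x, cocycle T A n x ≠ 0)
    (hintegrable : ∀ n, Integrable (fun x => log ‖cocycle T A n x‖) μ) :
    Subadditive fun n => ∫ x, log ‖cocycle T A n x‖ ∂μ := by
  intro m n
  have hmap := (hT.iterate n).map_eq
  have hcomp : ∫ x, log ‖cocycle T A m (T^[n] x)‖ ∂μ = ∫ x, log ‖cocycle T A m x‖ ∂μ := by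
    conv_rhs => rw [← hmap]
    exact (integral_map (hT.iterate n).aemeasurable
      (hmap.symm ▸ (hintegrable m).aestronglyMeasurable)).symm
  have hintegrable' : Integrable (fun x => log ‖cocycle T A m (T^[n] x)‖) μ :=
    (hT.iterate n).integrable_comp_of_integrable (hintegrable m)
  beta_reduce
  rw [← hcomp, ← integral_add hintegrable' (hintegrable n)]
  refine integral_mono (hintegrable _) (hintegrable'.add (hintegrable n)) fun x => ?_
  beta_reduce
  rw [← log_mul (norm_ne_zero_iff.2 (hne _ _)) (norm_ne_zero_iff.2 (hne _ _)), cocycle_add]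
  exact log_le_log (norm_pos_iff.2 (cocycle_add A m n x ▸ hne _ _)) (norm_mul_le _ _)

/-- Variation of constants: the error made at each step is transported by a cocycle of norm at
most `B`. -/
theorem norm_sub_cocycle_mulVec_le {ι R : Type*} [Fintype ι] [DecidableEq ι] [NormedRing R]
    {A : X → Matrix ι ι R} {B η : ℝ} (n : ℕ) (hB : ∀ m < n, ∀ y, ‖cocycle T A m y‖ ≤ B) (x : X)
    (P : ℕ → ι → R) (hP : ∀ j < n, ‖P (j + 1) - A (T^[j] x) *ᵥ P j‖ ≤ η) :
    ‖P n - cocycle T A n x *ᵥ P 0‖ ≤ n * (B * η) := by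
  induction n generalizing x P with
  | zero => simp [cocycle]
  | succ n ih =>
    have htail := ih (fun m hm => hB m (by omega)) (T x) (fun j => P (j + 1))
      fun j hj => hP (j + 1) (by omega)
    have hhead : ‖cocycle T A n (T x) *ᵥ (P 1 - A x *ᵥ P 0)‖ ≤ B * η :=
      (Matrix.linfty_opNorm_mulVec _ _).trans <| mul_le_mul (hB n n.lt_succ_self _)
        (hP 0 n.succ_pos) (norm_nonneg _) ((norm_nonneg _).trans (hB n n.lt_succ_self x))
    calc ‖P (n + 1) - cocycle T A (n + 1) x *ᵥ P 0‖
        = ‖(P (n + 1) - cocycle T A n (T x) *ᵥ P 1) +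
            cocycle T A n (T x) *ᵥ (P 1 - A x *ᵥ P 0)‖ := by
          rw [cocycle_succ', Matrix.mulVec_sub, Matrix.mulVec_mulVec, sub_add_sub_cancel]
      _ ≤ n * (B * η) + B * η := norm_add_le_of_le htail hhead
      _ = ↑(n + 1) * (B * η) := by push_cast; ring

end Cocycle

/-! ### Jacobi matrices and transfer matrices -/

section JacobiOperator

variable {R S : Type*} [CommRing R] [CommRing S]

/-- The discrete Schrödinger operator `f ↦ a (f (· + 1) + f (· - 1)) + v f` on two-sided sequences,
with constant hopping `a` and potential `v`, over an arbitrary commutative ring. -/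
def jacobiOp (a : R) (v : ℤ → R) : Module.End R (ℤ → R) where
  toFun f n := a * (f (n + 1) + f (n - 1)) + v n * f n
  map_add' f g := by ext n; simp only [Pi.add_apply]; ring
  map_smul' c f := by ext n; simp only [Pi.smul_apply, smul_eq_mul, RingHom.id_apply]; ring

/-- The restriction of `jacobiOp a v` to the sites `0, …, n - 1`. -/
def jacobiMatrix (a : R) (v : ℤ → R) (n : ℕ) : Matrix (Fin n) (Fin n) R :=
  Matrix.of fun i j => jacobiOp a v (Pi.single ((j : ℕ) : ℤ) 1) (i : ℕ)

theorem jacobiOp_apply (a : R) (v f : ℤ → R) (n : ℤ) :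
    jacobiOp a v f n = a * (f (n + 1) + f (n - 1)) + v n * f n := rfl

theorem jacobiMatrix_apply (a : R) (v : ℤ → R) {n : ℕ} (i j : Fin n) :
    jacobiMatrix a v n i j = jacobiOp a v (Pi.single ((j : ℕ) : ℤ) 1) (i : ℕ) := rfl

theorem jacobiOp_pow_succ_apply (a : R) (v f : ℤ → R) (k : ℕ) :
    (jacobiOp a v ^ (k + 1)) f = jacobiOp a v ((jacobiOp a v ^ k) f) := by
  rw [pow_succ', Module.End.mul_apply]

theorem map_jacobiOp_pow (φ : R →+* S) (a : R) (v f : ℤ → R) (k : ℕ) (m : ℤ) :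
    φ ((jacobiOp a v ^ k) f m) = (jacobiOp (φ a) (φ ∘ v) ^ k) (φ ∘ f) m := by
  induction k generalizing m with
  | zero => rfl
  | succ k ih => simp only [jacobiOp_pow_succ_apply, jacobiOp_apply, map_add, map_mul, ih]; rfl

theorem jacobiOp_pow_single_shift (a : R) (v : ℤ → R) (j : ℤ) (k : ℕ) (m : ℤ) :
    (jacobiOp a v ^ k) (Pi.single j 1) (m + j) =
      (jacobiOp a (fun i => v (i + j)) ^ k) (Pi.single 0 1) m := by
  induction k generalizing m with
  | zero => simp [Pi.single_apply]
  | succ k ih =>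
    simp only [jacobiOp_pow_succ_apply, jacobiOp_apply, ← ih]
    rw [add_right_comm m j 1, add_sub_right_comm]

theorem jacobiOp_pow_single_eq_zero (a : R) (v : ℤ → R) (j : ℤ) {k : ℕ} {m : ℤ}
    (hm : k < |m - j|) : (jacobiOp a v ^ k) (Pi.single j 1) m = 0 := by
  induction k generalizing m with
  | zero =>
    have : m ≠ j := by rintro rfl; simp at hm
    simp [this]
  | succ k ih =>
    rw [jacobiOp_pow_succ_apply, jacobiOp_apply, ih, ih, ih]
    · simp
    all_goals push_cast at hm; grind

theorem jacobiMatrix_mulVec (a : R) (v g : ℤ → R) (n : ℕ) (hl : g (-1) = 0) (hr : g n = 0)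
    (i : Fin n) : ∑ j, jacobiMatrix a v n i j * g (j : ℕ) = jacobiOp a v g (i : ℕ) := by
  set g' : ℤ → R := ∑ j : Fin n, g (j : ℕ) • Pi.single ((j : ℕ) : ℤ) 1
  have hg' : ∀ m : ℤ, -1 ≤ m → m ≤ n → g' m = g m := by
    intro m hm hmn
    simp only [g', Finset.sum_apply, Pi.smul_apply, Pi.single_apply, smul_eq_mul, mul_ite, mul_one,
      mul_zero]
    rcases hm.eq_or_lt with rfl | hm
    · rw [hl]
      exact Finset.sum_eq_zero fun j _ => if_neg (by omega)
    rcases hmn.eq_or_lt with rfl | hmn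
    · rw [hr]
      exact Finset.sum_eq_zero fun j _ => if_neg (by omega)
    lift m to ℕ using by omega
    rw [Finset.sum_eq_single (⟨m, by omega⟩ : Fin n)]
    · simp
    · exact fun j _ hj => if_neg fun h => hj (Fin.ext (by simpa using h.symm))
    · simp
  calc ∑ j, jacobiMatrix a v n i j * g (j : ℕ) = jacobiOp a v g' (i : ℕ) := by
        simp [g', jacobiMatrix_apply, mul_comm]
    _ = jacobiOp a v g (i : ℕ) := by
        rw [jacobiOp_apply, jacobiOp_apply, hg', hg', hg'] <;> omega

/-- Away from the boundary the truncation is not felt, because `jacobiOp` moves mass by one site. -/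
theorem jacobiMatrix_pow_apply (a : R) (v : ℤ → R) {n k : ℕ} (i j : Fin n) (hl : k ≤ j)
    (hr : j + k < n) :
    (jacobiMatrix a v n ^ k) i j = (jacobiOp a v ^ k) (Pi.single ((j : ℕ) : ℤ) 1) (i : ℕ) := by
  induction k generalizing i with
  | zero => simp [Matrix.one_apply, Pi.single_apply, Fin.ext_iff]
  | succ k ih =>
    rw [pow_succ', Matrix.mul_apply, jacobiOp_pow_succ_apply, ← jacobiMatrix_mulVec]
    · exact Finset.sum_congr rfl fun l _ => by rw [ih l (by omega) (by omega)]
    all_goals apply jacobiOp_pow_single_eq_zero; grind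

theorem isHermitian_jacobiMatrix [StarRing R] {a : R} {v : ℤ → R} (ha : IsSelfAdjoint a)
    (hv : ∀ m, IsSelfAdjoint (v m)) (n : ℕ) : (jacobiMatrix a v n).IsHermitian := by
  ext i j
  simp only [Matrix.conjTranspose_apply, jacobiMatrix_apply, jacobiOp_apply, Pi.single_apply]
  by_cases h : i = j
  · subst h; simp [(hv _).star_eq]
  · have hij : ((i : ℕ) : ℤ) ≠ j := by omega
    have e1 : ((j : ℕ) : ℤ) + 1 = i ↔ ((i : ℕ) : ℤ) - 1 = j := by omega
    have e2 : ((j : ℕ) : ℤ) - 1 = i ↔ ((i : ℕ) : ℤ) + 1 = j := by omega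
    simp only [e1, e2, hij, hij.symm, if_false, mul_zero, add_zero, star_mul', star_add,
      ha.star_eq, apply_ite (star : R → R), star_one, star_zero]
    ring

end JacobiOperator

section JacobiNorm

variable {R : Type*} [NormedCommRing R] {a : R} {v : ℤ → R} {V : ℝ}

theorem norm_jacobiOp_pow_le (hv : ∀ m, ‖v m‖ ≤ V) {f : ℤ → R} {c : ℝ} (hf : ∀ m, ‖f m‖ ≤ c)
    (k : ℕ) (m : ℤ) : ‖(jacobiOp a v ^ k) f m‖ ≤ (2 * ‖a‖ + V) ^ k * c := by
  induction k generalizing m with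
  | zero => simpa using hf m
  | succ k ih =>
    rw [jacobiOp_pow_succ_apply, jacobiOp_apply, pow_succ']
    have hhop := norm_mul_le_of_le le_rfl (norm_add_le_of_le (ih (m + 1)) (ih (m - 1))) (a₁ := a)
    have hpot := norm_mul_le_of_le (hv m) (ih m)
    linarith [norm_add_le_of_le hhop hpot]

theorem norm_jacobiMatrix_le [NormOneClass R] (hv : ∀ m, ‖v m‖ ≤ V) (n : ℕ) :
    ‖jacobiMatrix a v n‖ ≤ 2 * ‖a‖ + V := by
  have hV : 0 ≤ V := (norm_nonneg _).trans (hv 0)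
  refine linfty_opNorm_le (by positivity) fun i => ?_
  set χ : ℤ → ℝ := (Set.Ico 0 (n : ℤ)).indicator 1 with hχ
  have hχ1 : ∀ m, ‖χ m‖ ≤ 1 := fun m => (norm_indicator_le_norm_self _ _).trans (by simp)
  have hentry : ∀ j : Fin n, ‖jacobiMatrix a v n i j‖ ≤
      jacobiMatrix ‖a‖ (fun m => ‖v m‖) n i j * χ (j : ℕ) := by
    intro j
    have hsingle : ∀ m, ‖(Pi.single ((j : ℕ) : ℤ) 1 : ℤ → R) m‖ =
        (Pi.single ((j : ℕ) : ℤ) 1 : ℤ → ℝ) m :=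
      fun m => by by_cases h : m = (j : ℕ) <;> simp [h]
    have hj : χ (j : ℕ) = 1 := by simp [hχ]
    simp only [hj, mul_one, jacobiMatrix_apply, jacobiOp_apply, ← hsingle]
    exact norm_add_le_of_le (norm_mul_le_of_le le_rfl (norm_add_le _ _)) (norm_mul_le _ _)
  calc ∑ j, ‖jacobiMatrix a v n i j‖
      ≤ jacobiOp ‖a‖ (fun m => ‖v m‖) χ (i : ℕ) :=
        (Finset.sum_le_sum fun j _ => hentry j).trans_eq
          (jacobiMatrix_mulVec _ _ _ _ (by simp [hχ]) (by simp [hχ]) i)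
    _ ≤ 2 * ‖a‖ + V := by
        have := norm_jacobiOp_pow_le (a := ‖a‖) (v := fun m => ‖v m‖) (by simpa using hv) hχ1 1
          (i : ℕ)
        simpa using (le_abs_self _).trans this

theorem norm_trace_jacobiMatrix_pow_sub_le [NormOneClass R] (hv : ∀ m, ‖v m‖ ≤ V) (n k : ℕ) :
    ‖(jacobiMatrix a v n ^ k).trace -
        ∑ j ∈ Finset.range n, (jacobiOp a v ^ k) (Pi.single (j : ℤ) 1) j‖ ≤
      2 * k * (2 * (2 * ‖a‖ + V) ^ k) := by
  have hV : 0 ≤ V := (norm_nonneg _).trans (hv 0)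
  have hone : ∀ j m : ℤ, ‖(Pi.single j 1 : ℤ → R) m‖ ≤ 1 := fun j m => by
    by_cases h : m = j <;> simp [h]
  have hterm : ∀ j : Fin n, ‖(jacobiMatrix a v n ^ k) j j -
      (jacobiOp a v ^ k) (Pi.single ((j : ℕ) : ℤ) 1) (j : ℕ)‖ ≤
        if (j : ℕ) < k ∨ n ≤ j + k then 2 * (2 * ‖a‖ + V) ^ k else 0 := by
    intro j
    split_ifs with h
    · have : Nonempty (Fin n) := ⟨j⟩
      have hmat : ‖(jacobiMatrix a v n ^ k) j j‖ ≤ (2 * ‖a‖ + V) ^ k :=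
        (norm_entry_le_linfty_opNorm _ j j).trans <| (norm_pow_le _ k).trans <|
          pow_le_pow_left₀ (norm_nonneg _) (norm_jacobiMatrix_le hv n) k
      have hop := norm_jacobiOp_pow_le (a := a) hv (hone (j : ℕ)) k (j : ℕ)
      linarith [norm_sub_le_of_le hmat hop]
    · push Not at h
      rw [jacobiMatrix_pow_apply a v j j h.1 h.2, sub_self, norm_zero]
  have hcard : (Finset.univ.filter fun j : Fin n => (j : ℕ) < k ∨ n ≤ j + k).card ≤ 2 * k := by
    rw [← Finset.card_map Fin.valEmbedding]
    refine (Finset.card_le_card (t := Finset.range k ∪ Finset.Ico (n - k) n) fun i hi => ?_).trans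
      ((Finset.card_union_le _ _).trans (by simp; omega))
    obtain ⟨j, hj, rfl⟩ := Finset.mem_map.1 hi
    simp only [Finset.mem_filter_univ, Finset.mem_union, Finset.mem_range, Finset.mem_Ico,
      Fin.valEmbedding_apply] at hj ⊢
    omega
  rw [Matrix.trace, ← Fin.sum_univ_eq_sum_range
    (fun j : ℕ => (jacobiOp a v ^ k) (Pi.single (j : ℤ) 1) (j : ℤ)), ← Finset.sum_sub_distrib]
  refine (norm_sum_le_of_le _ fun j _ => hterm j).trans ?_
  rw [← Finset.sum_filter, Finset.sum_const, nsmul_eq_mul]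
  exact mul_le_mul_of_nonneg_right (by exact_mod_cast hcard) (by positivity)

theorem abs_eigenvalues_le_norm {n : ℕ} {A : Matrix (Fin n) (Fin n) ℂ} (hA : A.IsHermitian)
    (i : Fin n) : |hA.eigenvalues i| ≤ ‖A‖ := by
  have : Nonempty (Fin n) := ⟨i⟩
  have hmem : ((hA.eigenvalues i : ℝ) : ℂ) ∈ spectrum ℂ A := by
    rw [hA.spectrum_eq_image_range]
    exact ⟨_, ⟨i, rfl⟩, rfl⟩
  simpa using spectrum.norm_le_norm_of_mem hmem

theorem trace_pow_eq_sum_eigenvalues_pow {n : ℕ} {A : Matrix (Fin n) (Fin n) ℂ}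
    (hA : A.IsHermitian) (k : ℕ) : (A ^ k).trace = ∑ i, ((hA.eigenvalues i : ℝ) : ℂ) ^ k := by
  conv_lhs => rw [hA.spectral_theorem]
  rw [← map_pow, Unitary.conjStarAlgAut_apply, Matrix.trace_mul_comm, ← mul_assoc]
  simp [Matrix.diagonal_pow, Matrix.trace_diagonal]

end JacobiNorm

section TransferMatrix

variable {R : Type*} [CommRing R]

/-- The transfer matrix of `jacobiOp a v f = z f` at a site where the potential is `v`, normalised
to be polynomial in `a`: for `a = 1` it maps `(f n, f (n - 1))` to `(f (n + 1), f n)`. -/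
def stepMatrix (a z v : R) : Matrix (Fin 2) (Fin 2) R := !![z - v, -a; a, 0]

/-- The characteristic polynomial of `jacobiMatrix a v n`, evaluated at `z`. -/
def jacobiDet (a z : R) (v : ℤ → R) (n : ℕ) : R :=
  (Matrix.scalar (Fin n) z - jacobiMatrix a v n).det

/-- The left shift on potentials. -/
def shift (v : ℤ → R) : ℤ → R := fun m => v (m + 1)

theorem det_of_tridiagonal_corner {n : ℕ} (J : Matrix (Fin (n + 2)) (Fin (n + 2)) R)
    (hrow : ∀ i : Fin n, J 0 i.succ.succ = 0) (hcol : ∀ i : Fin n, J i.succ.succ 0 = 0) :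
    J.det = J 0 0 * (J.submatrix Fin.succ Fin.succ).det -
      J 0 1 * J 1 0 * ((J.submatrix Fin.succ Fin.succ).submatrix Fin.succ Fin.succ).det := by
  have hminor : (J.submatrix Fin.succ (Fin.succAbove (Fin.succ 0))).det =
      J 1 0 * ((J.submatrix Fin.succ Fin.succ).submatrix Fin.succ Fin.succ).det := by
    have hsub : (J.submatrix Fin.succ (Fin.succAbove (Fin.succ 0))).submatrix (Fin.succAbove 0)
        Fin.succ = (J.submatrix Fin.succ Fin.succ).submatrix Fin.succ Fin.succ := by
      ext i j
      simp
    rw [Matrix.det_succ_column_zero, Fin.sum_univ_succ, Finset.sum_eq_zero, hsub]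
    · simp
    · intro i _
      simp [hcol]
  rw [Matrix.det_succ_row_zero, Fin.sum_univ_succ, Fin.sum_univ_succ, Finset.sum_eq_zero, hminor]
  · simp only [Fin.coe_ofNat_eq_mod, Nat.zero_mod, Nat.one_mod, Fin.succ_zero_eq_one,
      Fin.succAbove_zero, submatrix_submatrix, pow_zero, pow_one, add_zero]
    ring
  · intro i _
    simp [hrow]

theorem scalar_sub_jacobiMatrix_succ (a z : R) (v : ℤ → R) (n : ℕ) :
    (Matrix.scalar (Fin (n + 1)) z - jacobiMatrix a v (n + 1)).submatrix Fin.succ Fin.succ =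
      Matrix.scalar (Fin n) z - jacobiMatrix a (shift v) n := by
  ext i j
  simp [jacobiMatrix_apply, jacobiOp_apply, Pi.single_apply, shift, Matrix.diagonal_apply,
    sub_eq_iff_eq_add]

theorem jacobiDet_add_two (a z : R) (v : ℤ → R) (n : ℕ) :
    jacobiDet a z v (n + 2) =
      (z - v 0) * jacobiDet a z (shift v) (n + 1) - a ^ 2 * jacobiDet a z (shift (shift v)) n := by
  rw [jacobiDet, det_of_tridiagonal_corner, scalar_sub_jacobiMatrix_succ,
    scalar_sub_jacobiMatrix_succ]
  · simp [jacobiMatrix_apply, jacobiOp_apply, jacobiDet, sq]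
  all_goals
    intro i
    have h0 : (0 : ℤ) ≠ i + 1 + 1 := by omega
    have h1 : (i : ℤ) + 1 ≠ 0 := by omega
    have h2 : (-1 : ℤ) ≠ i + 1 + 1 := by omega
    have h3 : (i : ℤ) + 1 + 1 + 1 ≠ 0 := by omega
    simp [jacobiMatrix_apply, jacobiOp_apply, Fin.ext_iff, h0, h0.symm, h1, h2, h3]

theorem cocycle_shift_zero_zero (a z : R) (v : ℤ → R) (n : ℕ) :
    cocycle shift (fun v => stepMatrix a z (v 0)) n v 0 0 = jacobiDet a z v n := by
  induction n using Nat.twoStepInduction generalizing v with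
  | zero => simp [cocycle, jacobiDet]
  | one => simp [cocycle, jacobiDet, stepMatrix, jacobiMatrix_apply, jacobiOp_apply]
  | more n ih ih' =>
    rw [jacobiDet_add_two, ← ih, ← ih', cocycle_succ', cocycle_succ']
    simp only [stepMatrix, Matrix.mul_apply, Fin.sum_univ_two, of_apply, cons_val',
      cons_val_fin_one, cons_val_zero, cons_val_one]
    ring

theorem cocycle_shift_add_two (a z : R) (v : ℤ → R) (n : ℕ) :
    cocycle shift (fun v => stepMatrix a z (v 0)) (n + 2) v =
      !![jacobiDet a z v (n + 2), -a * jacobiDet a z (shift v) (n + 1);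
        a * jacobiDet a z v (n + 1), -a ^ 2 * jacobiDet a z (shift v) n] := by
  set P := cocycle shift (fun v => stepMatrix a z (v 0)) with hP
  have h01 : ∀ n v, P (n + 1) v 0 1 = -a * P n (shift v) 0 0 := fun n v => by
    rw [hP, cocycle_succ']
    simp [stepMatrix, Matrix.mul_apply, Fin.sum_univ_two, mul_comm]
  have h1 : ∀ n v j, P (n + 1) v 1 j = a * P n v 0 j := fun n v j => by
    simp [hP, cocycle, stepMatrix, Matrix.mul_apply, Fin.sum_univ_two]
  simp only [← cocycle_shift_zero_zero, ← hP]
  ext i j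
  fin_cases i <;> fin_cases j <;> simp [h01, h1]
  ring

theorem norm_cocycle_shift_add_two_le {R : Type*} [NormedCommRing R] (a z : R) {v : ℤ → R} {n : ℕ}
    {c : ℝ} (hv : ∀ m ∈ Set.Icc n (n + 2), ‖jacobiDet a z v m‖ ≤ c)
    (hsv : ∀ m ∈ Set.Icc n (n + 2), ‖jacobiDet a z (shift v) m‖ ≤ c) :
    ‖cocycle shift (fun v => stepMatrix a z (v 0)) (n + 2) v‖ ≤ (1 + ‖a‖) ^ 2 * c := by
  have hc : 0 ≤ c := (norm_nonneg _).trans (hv n (by simp))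
  have ha := norm_nonneg a
  have h01 : ‖-a * jacobiDet a z (shift v) (n + 1)‖ ≤ ‖a‖ * c :=
    norm_mul_le_of_le (norm_neg a).le (hsv (n + 1) (by simp))
  have h10 : ‖a * jacobiDet a z v (n + 1)‖ ≤ ‖a‖ * c :=
    norm_mul_le_of_le le_rfl (hv (n + 1) (by simp))
  have h11 : ‖-a ^ 2 * jacobiDet a z (shift v) n‖ ≤ ‖a‖ ^ 2 * c :=
    norm_mul_le_of_le ((norm_neg _).trans_le (norm_pow_le' a two_pos)) (hsv n (by simp))
  rw [cocycle_shift_add_two]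
  refine linfty_opNorm_le (by positivity) fun i => ?_
  rw [Fin.sum_univ_two]
  fin_cases i
  · refine (add_le_add (hv (n + 2) (by simp)) h01).trans ?_
    nlinarith [mul_nonneg ha hc, mul_nonneg (mul_nonneg ha ha) hc]
  · refine (add_le_add h10 h11).trans ?_
    nlinarith [mul_nonneg ha hc]

end TransferMatrix

/-! ### Duality of the density of states -/

section Harper

open LaurentPolynomial (C T)

/-- The function `2 cos (2 π x)` on the circle. -/
def cosPot (x : UnitAddCircle) : ℝ := 2 * (fourier 1 x : ℂ).re

/-- The potential `m ↦ b · 2 cos (2 π (x + m α))`, with complex values. -/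
def harperPot (b : ℝ) (α x : UnitAddCircle) : ℤ → ℂ := fun m => ↑(b * cosPot (x + m • α))

/-- The truncation to `n` sites of the two-coupling almost Mathieu (Harper) operator with hopping
`a` and potential strength `b`; Aubry duality exchanges the couplings `a` and `b`. -/
def harperMatrix (a b : ℝ) (α x : UnitAddCircle) (n : ℕ) : Matrix (Fin n) (Fin n) ℂ :=
  jacobiMatrix (a : ℂ) (harperPot b α x) n

theorem cosPot_eq_fourier_add (x : UnitAddCircle) :
    (cosPot x : ℂ) = fourier 1 x + fourier (-1) x := by
  rw [fourier_neg, Complex.add_conj, cosPot]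

theorem norm_fourier_apply (m : ℤ) (x : UnitAddCircle) : ‖(fourier m x : ℂ)‖ = 1 := by
  rw [fourier_apply]; exact Circle.norm_coe _

theorem abs_cosPot_le (x : UnitAddCircle) : |cosPot x| ≤ 2 := by
  have h := Complex.abs_re_le_norm (fourier 1 x : ℂ)
  rw [norm_fourier_apply] at h
  rw [cosPot, abs_mul, abs_two]
  linarith

theorem norm_harperPot_le (b : ℝ) (α x : UnitAddCircle) (m : ℤ) :
    ‖harperPot b α x m‖ ≤ 2 * |b| := by
  rw [harperPot, Complex.norm_real, norm_mul, mul_comm, Real.norm_eq_abs, Real.norm_eq_abs]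
  exact mul_le_mul_of_nonneg_right (abs_cosPot_le _) (abs_nonneg b)

theorem shift_harperPot (b : ℝ) (α x : UnitAddCircle) (j : ℤ) :
    (fun m => harperPot b α x (m + j)) = harperPot b α (x + j • α) := by
  ext m
  rw [harperPot, harperPot, add_smul, add_comm (m • α), add_assoc]

theorem isHermitian_harperMatrix (a b : ℝ) (α x : UnitAddCircle) (n : ℕ) :
    (harperMatrix a b α x n).IsHermitian :=
  isHermitian_jacobiMatrix (Complex.conj_ofReal _) (fun _ => Complex.conj_ofReal _) n

theorem abs_eigenvalues_harperMatrix_le (a b : ℝ) (α x : UnitAddCircle) {n : ℕ} (i : Fin n) :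
    |(isHermitian_harperMatrix a b α x n).eigenvalues i| ≤ 2 * |a| + 2 * |b| :=
  (abs_eigenvalues_le_norm _ i).trans <|
    (norm_jacobiMatrix_le (norm_harperPot_le b α x) n).trans_eq (by simp)

/-- The Harper potential with the character `fourier 1 x` of the phase replaced by the formal
variable `T`. -/
def laurentPot (b : ℝ) (α : UnitAddCircle) : ℤ → LaurentPolynomial ℂ := fun n =>
  C (b : ℂ) * (C (fourier n α) * T 1 + C (fourier (-n) α) * T (-1))

/-- Evaluation of a Laurent polynomial as a trigonometric polynomial, `T ↦ fourier 1 x`. -/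
def fourierEval (x : UnitAddCircle) : LaurentPolynomial ℂ →ₐ[ℂ] ℂ :=
  AddMonoidAlgebra.lift ℂ ℂ ℤ
    { toFun := fun n => fourier (Multiplicative.toAdd n) x
      map_one' := by simp
      map_mul' := by intro m n; simp [add_zsmul, AddCircle.toCircle_add] }

theorem fourierEval_T (x : UnitAddCircle) (m : ℤ) :
    fourierEval x (T m) = fourier m x := by
  rw [fourierEval, LaurentPolynomial.T, AddMonoidAlgebra.lift_single]; simp

theorem fourierEval_C (x : UnitAddCircle) (c : ℂ) : fourierEval x (C c) = c := by
  rw [← LaurentPolynomial.single_eq_C, fourierEval, AddMonoidAlgebra.lift_single]; simp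

theorem fourier_add_zsmul (m n : ℤ) (α x : UnitAddCircle) :
    (fourier m (x + n • α) : ℂ) = fourier (m * n) α * fourier m x := by
  simp only [fourier_apply, smul_add, smul_smul, AddCircle.toCircle_add]
  push_cast; ring

theorem fourierEval_comp_laurentPot (b : ℝ) (α x : UnitAddCircle) :
    (fourierEval x : LaurentPolynomial ℂ → ℂ) ∘ laurentPot b α = harperPot b α x := by
  ext n
  simp [laurentPot, harperPot, fourierEval_T, fourierEval_C, cosPot_eq_fourier_add,
    fourier_add_zsmul, -fourier_apply]

/-- `⟨δ₀, H ^ k δ₀⟩` for the Harper operator `H`, as a Laurent polynomial in the phase. -/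
def momentPoly (a b : ℝ) (α : UnitAddCircle) (k : ℕ) : LaurentPolynomial ℂ :=
  (jacobiOp (C (a : ℂ)) (laurentPot b α) ^ k) (Pi.single 0 1) 0

theorem fourierEval_momentPoly (a b : ℝ) (α x : UnitAddCircle) (k : ℕ) :
    fourierEval x (momentPoly a b α k) =
      (jacobiOp (a : ℂ) (harperPot b α x) ^ k) (Pi.single 0 1) 0 := by
  have h := map_jacobiOp_pow (fourierEval x : LaurentPolynomial ℂ →+* ℂ) (C (a : ℂ))
    (laurentPot b α) (Pi.single 0 1) k 0
  have hsingle : (fourierEval x : LaurentPolynomial ℂ → ℂ) ∘ (Pi.single 0 1 : ℤ → _) =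
      Pi.single 0 1 := by
    ext m; by_cases hm : m = 0 <;> simp [hm]
  simpa [momentPoly, fourierEval_comp_laurentPot, fourierEval_C, hsingle] using h

end Harper

section AubryDuality

/-- The magnetic Laplacian on `ℤ²` with couplings `a` and `b`: it is the Harper operator acting on
Laurent coefficients, the second index being the Fourier index of the phase. -/
def magneticOp (a b : ℝ) (α : UnitAddCircle) (F : ℤ → ℤ → ℂ) : ℤ → ℤ → ℂ := fun n m =>
  a * (F (n + 1) m + F (n - 1) m) + b * (fourier n α * F n (m - 1) + fourier (-n) α * F n (m + 1))

/-- The rotation of `ℤ²` by a right angle, with the phase that makes it intertwine the magnetic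
Laplacians with couplings `(a, b)` and `(b, a)`. -/
def magneticRotation (α : UnitAddCircle) (F : ℤ → ℤ → ℂ) : ℤ → ℤ → ℂ := fun n m =>
  fourier (n * m) α * F m (-n)

theorem semiconj_magneticRotation (a b : ℝ) (α : UnitAddCircle) :
    Function.Semiconj (magneticRotation α) (magneticOp b a α) (magneticOp a b α) := by
  intro F
  ext n m
  have hadd : ∀ i j : ℤ, (fourier (i + j) α : ℂ) = fourier i α * fourier j α :=
    fun i j => fourier_add
  have hup : (fourier ((n + 1) * m) α : ℂ) = fourier (n * m) α * fourier m α := by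
    rw [← hadd, add_one_mul]
  have hdown : (fourier ((n - 1) * m) α : ℂ) = fourier (n * m) α * fourier (-m) α := by
    rw [← hadd, sub_one_mul, sub_eq_add_neg]
  have hleft : (fourier n α : ℂ) * fourier (n * (m - 1)) α = fourier (n * m) α := by
    rw [← hadd, mul_sub_one, add_sub_cancel]
  have hright : (fourier (-n) α : ℂ) * fourier (n * (m + 1)) α = fourier (n * m) α := by
    rw [← hadd, mul_add_one, neg_add_cancel_comm_assoc]
  simp only [magneticOp, magneticRotation]
  rw [hup, hdown, ← mul_assoc (fourier n α), ← mul_assoc (fourier (-n) α), hleft, hright,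
    neg_add', neg_sub', sub_neg_eq_add]
  ring

theorem coeff_jacobiOp_laurentPot (a b : ℝ) (α : UnitAddCircle) (f : ℤ → LaurentPolynomial ℂ) :
    (fun n m => (jacobiOp (LaurentPolynomial.C (a : ℂ)) (laurentPot b α) f n).coeff m) =
      magneticOp a b α fun n m => (f n).coeff m := by
  have hmonomial : ∀ (r : ℤ) (c : ℂ) (g : LaurentPolynomial ℂ) (m : ℤ),
      (LaurentPolynomial.C c * LaurentPolynomial.T r * g).coeff m = c * g.coeff (m - r) := by
    intro r c g m
    rw [← LaurentPolynomial.single_eq_C_mul_T, AddMonoidAlgebra.coeff_single_mul_apply,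
      neg_add_eq_sub]
  have hconst : ∀ (c : ℂ) (g : LaurentPolynomial ℂ) (m : ℤ),
      (LaurentPolynomial.C c * g).coeff m = c * g.coeff m := by
    intro c g m
    simpa using hmonomial 0 c g m
  ext n m
  simp only [jacobiOp_apply, laurentPot, magneticOp]
  rw [mul_assoc (LaurentPolynomial.C (b : ℂ)), AddMonoidAlgebra.coeff_add, Finsupp.add_apply,
    hconst, hconst, AddMonoidAlgebra.coeff_add, Finsupp.add_apply, add_mul,
    AddMonoidAlgebra.coeff_add, Finsupp.add_apply, hmonomial, hmonomial]
  simp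

theorem coeff_jacobiOp_laurentPot_pow (a b : ℝ) (α : UnitAddCircle) (k : ℕ) :
    (fun n m => ((jacobiOp (LaurentPolynomial.C (a : ℂ)) (laurentPot b α) ^ k)
      (Pi.single 0 1) n).coeff m) = (magneticOp a b α)^[k] (Pi.single 0 (Pi.single 0 1)) := by
  induction k with
  | zero =>
    ext n m
    by_cases hn : n = 0
    · subst hn
      simp [← LaurentPolynomial.T_zero, LaurentPolynomial.T_apply, Pi.single_apply, eq_comm]
    · simp [hn]
  | succ k ih =>
    rw [Function.iterate_succ_apply', ← ih, ← coeff_jacobiOp_laurentPot, ← jacobiOp_pow_succ_apply]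

theorem coeff_momentPoly_comm (a b : ℝ) (α : UnitAddCircle) (k : ℕ) :
    (momentPoly a b α k).coeff 0 = (momentPoly b a α k).coeff 0 := by
  have hfix : magneticRotation α (Pi.single 0 (Pi.single 0 1)) = Pi.single 0 (Pi.single 0 1) := by
    ext n m
    by_cases hm : m = 0 <;> by_cases hn : n = 0 <;>
      simp [magneticRotation, hm, hn]
  have h := (semiconj_magneticRotation a b α).iterate_right k (Pi.single 0 (Pi.single 0 1))
  rw [hfix, ← coeff_jacobiOp_laurentPot_pow, ← coeff_jacobiOp_laurentPot_pow] at h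
  have h00 := congrFun (congrFun h 0) 0
  simpa [magneticRotation, momentPoly] using h00.symm

end AubryDuality

section DensityOfStates

variable {α : UnitAddCircle}

theorem fourier_ne_one (hα : ¬IsOfFinAddOrder α) {m : ℤ} (hm : m ≠ 0) : (fourier m α : ℂ) ≠ 1 := by
  intro h
  have h1 : AddCircle.toCircle (m • α) = 1 := by
    rw [fourier_apply] at h
    exact Circle.coe_eq_one.1 h
  have h2 : m • α = 0 := AddCircle.injective_toCircle one_ne_zero (by simpa using h1)
  exact hα (isOfFinAddOrder_iff_zsmul_eq_zero.2 ⟨m, hm, h2⟩)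

theorem exists_norm_sum_fourier_le (hα : ¬IsOfFinAddOrder α) {m : ℤ} (hm : m ≠ 0) :
    ∃ B : ℝ, ∀ (n : ℕ) (x : UnitAddCircle),
      ‖∑ j ∈ Finset.range n, (fourier m (x + j • α) : ℂ)‖ ≤ B := by
  refine ⟨2 / ‖(fourier m α : ℂ) - 1‖, fun n x => ?_⟩
  have hgeom : ∀ j ∈ Finset.range n,
      (fourier m (x + j • α) : ℂ) = fourier m x * (fourier m α) ^ j := by
    intro j _
    simp only [fourier_apply, smul_add, AddCircle.toCircle_add, smul_comm m j,
      AddCircle.toCircle_nsmul]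
    push_cast; rfl
  rw [Finset.sum_congr rfl hgeom, ← Finset.mul_sum, geom_sum_eq (fourier_ne_one hα hm), norm_mul,
    norm_fourier_apply, one_mul, norm_div]
  gcongr
  refine (norm_sub_le _ _).trans ?_
  rw [norm_pow, norm_fourier_apply]; norm_num

theorem exists_norm_sum_fourierEval_sub_le (hα : ¬IsOfFinAddOrder α) (f : LaurentPolynomial ℂ) :
    ∃ B : ℝ, ∀ (n : ℕ) (x : UnitAddCircle),
      ‖∑ j ∈ Finset.range n, fourierEval (x + j • α) f - n * f.coeff 0‖ ≤ B := by
  induction f using LaurentPolynomial.induction_on' with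
  | add p q hp hq =>
    obtain ⟨B₁, h₁⟩ := hp
    obtain ⟨B₂, h₂⟩ := hq
    refine ⟨B₁ + B₂, fun n x => (norm_add_le_of_le (h₁ n x) (h₂ n x)).trans_eq' ?_⟩
    simp only [map_add, Finset.sum_add_distrib, AddMonoidAlgebra.coeff_add, Finsupp.add_apply]
    ring_nf
  | C_mul_T m c =>
    rcases eq_or_ne m 0 with rfl | hm
    · exact ⟨0, fun n x => by simp [fourierEval_C]⟩
    · obtain ⟨B, hB⟩ := exists_norm_sum_fourier_le hα hm
      refine ⟨‖c‖ * B, fun n x => ?_⟩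
      have hcoeff : (LaurentPolynomial.C c * LaurentPolynomial.T m).coeff 0 = 0 := by
        rw [← LaurentPolynomial.single_eq_C_mul_T, AddMonoidAlgebra.coeff_single,
          Finsupp.single_eq_of_ne hm.symm]
      simp only [hcoeff, map_mul, fourierEval_C, fourierEval_T, mul_zero, sub_zero,
        ← Finset.mul_sum, norm_mul]
      exact mul_le_mul_of_nonneg_left (hB n x) (norm_nonneg _)

theorem exists_norm_trace_harperMatrix_pow_sub_le (a b : ℝ) (hα : ¬IsOfFinAddOrder α) (k : ℕ) :
    ∃ B : ℝ, ∀ (n : ℕ) (x : UnitAddCircle),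
      ‖(harperMatrix a b α x n ^ k).trace - n * (momentPoly a b α k).coeff 0‖ ≤ B := by
  obtain ⟨B, hB⟩ := exists_norm_sum_fourierEval_sub_le hα (momentPoly a b α k)
  refine ⟨2 * k * (2 * (2 * ‖(a : ℂ)‖ + 2 * |b|) ^ k) + B, fun n x => ?_⟩
  have htrace := norm_trace_jacobiMatrix_pow_sub_le (a := (a : ℂ)) (norm_harperPot_le b α x) n k
  have hdiag : ∀ j ∈ Finset.range n,
      (jacobiOp (a : ℂ) (harperPot b α x) ^ k) (Pi.single (j : ℤ) 1) j =
        fourierEval (x + j • α) (momentPoly a b α k) := by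
    intro j _
    have h := jacobiOp_pow_single_shift (a : ℂ) (harperPot b α x) j k 0
    rwa [zero_add, shift_harperPot, natCast_zsmul, ← fourierEval_momentPoly] at h
  rw [Finset.sum_congr rfl hdiag] at htrace
  exact (norm_add_le_of_le htrace (hB n x)).trans_eq' (by rw [harperMatrix, sub_add_sub_cancel])

theorem exists_abs_sum_eval_eigenvalues_sub_le (a b : ℝ) (hα : ¬IsOfFinAddOrder α)
    (p : Polynomial ℝ) : ∃ B : ℝ, ∀ (n : ℕ) (x y : UnitAddCircle),
      |∑ i, p.eval ((isHermitian_harperMatrix a b α x n).eigenvalues i) -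
        ∑ i, p.eval ((isHermitian_harperMatrix b a α y n).eigenvalues i)| ≤ B := by
  induction p using Polynomial.induction_on' with
  | add p q hp hq =>
    obtain ⟨B₁, h₁⟩ := hp
    obtain ⟨B₂, h₂⟩ := hq
    refine ⟨B₁ + B₂, fun n x y => ?_⟩
    simp only [Polynomial.eval_add, Finset.sum_add_distrib, add_sub_add_comm]
    exact (abs_add_le _ _).trans (add_le_add (h₁ n x y) (h₂ n x y))
  | monomial k c =>
    obtain ⟨B₁, h₁⟩ := exists_norm_trace_harperMatrix_pow_sub_le a b hα k
    obtain ⟨B₂, h₂⟩ := exists_norm_trace_harperMatrix_pow_sub_le b a hα k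
    refine ⟨|c| * (B₁ + B₂), fun n x y => ?_⟩
    simp only [Polynomial.eval_monomial, ← Finset.mul_sum, ← mul_sub, abs_mul]
    refine mul_le_mul_of_nonneg_left ?_ (abs_nonneg _)
    have htrace := norm_sub_le_of_le (h₁ n x) (h₂ n y)
    rw [coeff_momentPoly_comm b a, sub_sub_sub_cancel_right,
      trace_pow_eq_sum_eigenvalues_pow (isHermitian_harperMatrix _ _ _ _ _),
      trace_pow_eq_sum_eigenvalues_pow (isHermitian_harperMatrix _ _ _ _ _)] at htrace
    rw [← Real.norm_eq_abs, ← Complex.norm_real]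
    push_cast
    exact htrace

/-- Aubry duality: the density of states is symmetric in the two couplings. -/
theorem eventually_abs_sum_eigenvalues_sub_le (a b : ℝ) (hα : ¬IsOfFinAddOrder α) {f : ℝ → ℝ}
    (hf : Continuous f) {ε : ℝ} (hε : 0 < ε) : ∀ᶠ n : ℕ in atTop, ∀ x y : UnitAddCircle,
      |∑ i, f ((isHermitian_harperMatrix a b α x n).eigenvalues i) -
        ∑ i, f ((isHermitian_harperMatrix b a α y n).eigenvalues i)| ≤ ε * n := by
  set r := 2 * |a| + 2 * |b|
  obtain ⟨p, hp⟩ := exists_polynomial_near_of_continuousOn (-r) r f hf.continuousOn (ε / 3)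
    (by positivity)
  have hsum : ∀ {n : ℕ} (g : Fin n → ℝ), (∀ i, |g i| ≤ r) →
      |∑ i, f (g i) - ∑ i, p.eval (g i)| ≤ n * (ε / 3) := by
    intro n g hg
    rw [← Finset.sum_sub_distrib]
    refine (Finset.abs_sum_le_sum_abs _ _).trans ?_
    refine (Finset.sum_le_card_nsmul _ _ (ε / 3) fun i _ => ?_).trans_eq (by simp)
    rw [abs_sub_comm]
    exact (hp _ (abs_le.1 (hg i))).le
  obtain ⟨B, hB⟩ := exists_abs_sum_eval_eigenvalues_sub_le a b hα p
  filter_upwards [eventually_ge_atTop ⌈B / (ε / 3)⌉₊] with n hn x y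
  have hBn : B ≤ n * (ε / 3) := (div_le_iff₀ (by positivity)).1 (Nat.ceil_le.1 hn)
  have hx := abs_le.1 (hsum _ fun i => abs_eigenvalues_harperMatrix_le a b α x (n := n) i)
  have hy := abs_le.1 (hsum _ fun i =>
    (abs_eigenvalues_harperMatrix_le b a α y (n := n) i).trans_eq (add_comm _ _))
  have hxy := abs_le.1 (hB n x y)
  exact abs_le.2 ⟨by linarith, by linarith⟩

theorem jacobiDet_harperPot_eq_prod (a b : ℝ) (z : ℂ) (α x : UnitAddCircle) (n : ℕ) :
    jacobiDet (a : ℂ) z (harperPot b α x) n =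
      ∏ i, (z - ((isHermitian_harperMatrix a b α x n).eigenvalues i : ℂ)) := by
  change (Matrix.scalar (Fin n) z - harperMatrix a b α x n).det = _
  rw [← Matrix.eval_charpoly, (isHermitian_harperMatrix a b α x n).charpoly_eq,
    Polynomial.eval_prod]
  simp

theorem sub_ofReal_ne_zero {z : ℂ} (hz : z.im ≠ 0) (t : ℝ) : z - t ≠ 0 := fun h =>
  hz (by simpa using congrArg Complex.im h)

theorem jacobiDet_harperPot_ne_zero (a b : ℝ) {z : ℂ} (hz : z.im ≠ 0) (α x : UnitAddCircle)
    (n : ℕ) : jacobiDet (a : ℂ) z (harperPot b α x) n ≠ 0 := by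
  rw [jacobiDet_harperPot_eq_prod]
  exact Finset.prod_ne_zero_iff.2 fun i _ => sub_ofReal_ne_zero hz _

theorem norm_jacobiDet_re_le (a b : ℝ) (z : ℂ) (α x : UnitAddCircle) (n : ℕ) :
    ‖jacobiDet (a : ℂ) z.re (harperPot b α x) n‖ ≤ ‖jacobiDet (a : ℂ) z (harperPot b α x) n‖ := by
  rw [jacobiDet_harperPot_eq_prod, jacobiDet_harperPot_eq_prod, norm_prod, norm_prod]
  refine Finset.prod_le_prod (fun _ _ => norm_nonneg _) fun i _ => ?_
  rw [← Complex.ofReal_sub, Complex.norm_real]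
  simpa using Complex.abs_re_le_norm (z - ((isHermitian_harperMatrix a b α x n).eigenvalues i : ℂ))

theorem eventually_log_norm_jacobiDet_le (a b : ℝ) (hα : ¬IsOfFinAddOrder α) {z : ℂ}
    (hz : z.im ≠ 0) {ε : ℝ} (hε : 0 < ε) : ∀ᶠ n : ℕ in atTop, ∀ x y : UnitAddCircle,
      log ‖jacobiDet (a : ℂ) z (harperPot b α x) n‖ ≤
        log ‖jacobiDet (b : ℂ) z (harperPot a α y) n‖ + ε * n := by
  have hne : ∀ t : ℝ, ‖z - t‖ ≠ 0 := fun t => norm_ne_zero_iff.2 (sub_ofReal_ne_zero hz t)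
  have hf : Continuous fun t : ℝ => log ‖z - t‖ := Continuous.log (by fun_prop) hne
  filter_upwards [eventually_abs_sum_eigenvalues_sub_le a b hα hf hε] with n hn x y
  rw [jacobiDet_harperPot_eq_prod, jacobiDet_harperPot_eq_prod, norm_prod, norm_prod,
    log_prod fun i _ => hne _, log_prod fun i _ => hne _]
  linarith [(abs_le.1 (hn x y)).2]

end DensityOfStates

/-! ### Cocycles with an invariant section -/

section SpecialLinear

variable {𝕜 : Type*} [NormedField 𝕜]

theorem linfty_opNorm_fin_two_le {A : Matrix (Fin 2) (Fin 2) 𝕜} {r : ℝ} (hr : 0 ≤ r)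
    (h0 : ‖A 0 0‖ + ‖A 0 1‖ ≤ r) (h1 : ‖A 1 0‖ + ‖A 1 1‖ ≤ r) : ‖A‖ ≤ r :=
  linfty_opNorm_le hr fun i => by fin_cases i <;> simpa [Fin.sum_univ_two]

theorem norm_adjugate_fin_two_le (A : Matrix (Fin 2) (Fin 2) 𝕜) : ‖A.adjugate‖ ≤ 2 * ‖A‖ := by
  have hentry := norm_entry_le_linfty_opNorm A
  refine linfty_opNorm_fin_two_le (by positivity) ?_ ?_ <;> simp only [Matrix.adjugate_fin_two,
    Matrix.of_apply, Matrix.cons_val', Matrix.cons_val_zero, Matrix.cons_val_one,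
    Matrix.cons_val_fin_one, norm_neg] <;>
  linarith [hentry 0 0, hentry 0 1, hentry 1 0, hentry 1 1]

theorem adjugate_mulVec_mulVec_of_det_eq_one {A : Matrix (Fin 2) (Fin 2) 𝕜} (hA : A.det = 1)
    (v : Fin 2 → 𝕜) : A.adjugate *ᵥ (A *ᵥ v) = v := by
  rw [Matrix.mulVec_mulVec, Matrix.adjugate_mul, hA, one_smul, Matrix.one_mulVec]

theorem eq_unipotent_of_det_eq_one {A : Matrix (Fin 2) (Fin 2) 𝕜} (hA : A.det = 1)
    (hcol : A *ᵥ ![1, 0] = ![1, 0]) : A = !![1, A 0 1; 0, 1] := by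
  have h00 : A 0 0 = 1 := by simpa [Matrix.mulVec, dotProduct] using congrFun hcol 0
  have h10 : A 1 0 = 0 := by simpa [Matrix.mulVec, dotProduct] using congrFun hcol 1
  have h11 : A 1 1 = 1 := by simpa [Matrix.det_fin_two, h00, h10] using hA
  conv_lhs => rw [Matrix.eta_fin_two A, h00, h10, h11]

theorem exists_det_eq_one_mulVec_eq {v : Fin 2 → 𝕜} {ρ : ℝ} (hρ : 0 < ρ) (hv : ρ ≤ ‖v‖)
    (hv' : ‖v‖ ≤ ρ⁻¹) : ∃ B : Matrix (Fin 2) (Fin 2) 𝕜,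
      B.det = 1 ∧ B *ᵥ ![1, 0] = v ∧ ‖B‖ ≤ 2 * ρ⁻¹ ∧ ‖B.adjugate‖ ≤ 2 * ρ⁻¹ := by
  have hle : ∀ i, ‖v i‖ ≤ ρ⁻¹ := fun i => (norm_le_pi_norm v i).trans hv'
  have hinv : ∀ i, ρ ≤ ‖v i‖ → v i ≠ 0 ∧ ‖(v i)⁻¹‖ ≤ ρ⁻¹ := fun i hi =>
    ⟨norm_pos_iff.1 (hρ.trans_le hi), by rw [norm_inv]; exact inv_anti₀ hρ hi⟩
  have hpos : 0 ≤ 2 * ρ⁻¹ := by positivity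
  have hsome : ρ ≤ ‖v 0‖ ∨ ρ ≤ ‖v 1‖ := by
    by_contra! h
    exact hv.not_gt <| (pi_norm_lt_iff hρ).2 (Fin.forall_fin_two.2 h)
  rcases hsome with h | h
  · obtain ⟨hne, hnorm⟩ := hinv 0 h
    refine ⟨!![v 0, 0; v 1, (v 0)⁻¹], by simp [hne], by ext i; fin_cases i <;> simp,
      linfty_opNorm_fin_two_le hpos ?_ ?_, linfty_opNorm_fin_two_le hpos ?_ ?_⟩ <;>
    simp only [Matrix.adjugate_fin_two, of_apply, cons_val', cons_val_zero, cons_val_one,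
      cons_val_fin_one, norm_neg, norm_zero] <;>
    linarith [hle 0, hle 1, norm_nonneg (v 0)]
  · obtain ⟨hne, hnorm⟩ := hinv 1 h
    refine ⟨!![v 0, -(v 1)⁻¹; v 1, 0], by simp [hne], by ext i; fin_cases i <;> simp,
      linfty_opNorm_fin_two_le hpos ?_ ?_, linfty_opNorm_fin_two_le hpos ?_ ?_⟩ <;>
    simp only [Matrix.adjugate_fin_two, of_apply, cons_val', cons_val_zero, cons_val_one,
      cons_val_fin_one, norm_neg, norm_zero] <;>
    linarith [hle 0, hle 1, norm_nonneg (v 1)]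

theorem exists_mul_eq_mul_unipotent {A B B' : Matrix (Fin 2) (Fin 2) 𝕜} (hA : A.det = 1)
    (hB : B.det = 1) (hB' : B'.det = 1) (hcol : B' *ᵥ ![1, 0] = A *ᵥ (B *ᵥ ![1, 0])) :
    ∃ t : 𝕜, ‖t‖ ≤ ‖B'.adjugate‖ * (‖A‖ * ‖B‖) ∧ A * B = B' * !![1, t; 0, 1] := by
  set V := B'.adjugate * (A * B) with hVdef
  have hV : V = !![1, V 0 1; 0, 1] := by
    refine eq_unipotent_of_det_eq_one (by simp [hVdef, Matrix.det_adjugate, hA, hB, hB']) ?_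
    rw [hVdef, ← Matrix.mulVec_mulVec, ← Matrix.mulVec_mulVec, ← hcol,
      adjugate_mulVec_mulVec_of_det_eq_one hB']
  refine ⟨V 0 1, (norm_entry_le_linfty_opNorm V 0 1).trans <|
    norm_mul_le_of_le le_rfl (norm_mul_le _ _), ?_⟩
  rw [← hV, hVdef, ← mul_assoc, Matrix.mul_adjugate, hB', one_smul, one_mul]

end SpecialLinear

section InvariantDirection

variable {𝕜 X : Type*} [NormedField 𝕜] {T : X → X} {A : X → Matrix (Fin 2) (Fin 2) 𝕜} {K : ℝ}

theorem det_cocycle_eq_one (hdet : ∀ x, (A x).det = 1) (n : ℕ) (x : X) :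
    (cocycle T A n x).det = 1 := by
  induction n with
  | zero => simp [cocycle]
  | succ n ih => rw [cocycle, Matrix.det_mul, hdet, ih, one_mul]

theorem exists_cocycle_mul_eq_mul_unipotent (hdet : ∀ x, (A x).det = 1) {c : ℝ} {n : ℕ} {x : X}
    {v : Fin 2 → 𝕜} {B : ℕ → Matrix (Fin 2) (Fin 2) 𝕜} (hB : ∀ j ≤ n, (B j).det = 1)
    (hcol : ∀ j ≤ n, B j *ᵥ ![1, 0] = cocycle T A j x *ᵥ v)
    (hc : ∀ j < n, ‖(B (j + 1)).adjugate‖ * (‖A (T^[j] x)‖ * ‖B j‖) ≤ c) :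
    ∃ s : 𝕜, ‖s‖ ≤ n * c ∧ cocycle T A n x * B 0 = B n * !![1, s; 0, 1] := by
  induction n with
  | zero => exact ⟨0, by simp, by simp [cocycle, ← Matrix.one_fin_two]⟩
  | succ n ih =>
    obtain ⟨s, hs, hMs⟩ := ih (fun j hj => hB j (by omega)) (fun j hj => hcol j (by omega))
      fun j hj => hc j (by omega)
    obtain ⟨t, ht, hAt⟩ := exists_mul_eq_mul_unipotent (hdet (T^[n] x)) (hB n n.le_succ)
      (hB (n + 1) le_rfl) <| by
        rw [hcol n n.le_succ, hcol (n + 1) le_rfl, cocycle, Matrix.mulVec_mulVec]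
    refine ⟨t + s, (norm_add_le_of_le (ht.trans (hc n n.lt_succ_self)) hs).trans_eq
      (by push_cast; ring), ?_⟩
    rw [cocycle, mul_assoc, hMs, ← mul_assoc, hAt, mul_assoc]
    simp [add_comm]

/-- In frames of determinant one whose first vector follows an orbit that stays bounded and bounded
away from zero, the cocycle is unipotent, so it grows at most linearly. -/
theorem norm_cocycle_le_of_norm_mulVec (hdet : ∀ x, (A x).det = 1) (hA : ∀ x, ‖A x‖ ≤ K)
    {ρ : ℝ} (hρ : 0 < ρ) (n : ℕ) (x : X) (v : Fin 2 → 𝕜)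
    (hv : ∀ j ≤ n, ρ ≤ ‖cocycle T A j x *ᵥ v‖ ∧ ‖cocycle T A j x *ᵥ v‖ ≤ ρ⁻¹) :
    ‖cocycle T A n x‖ ≤ 16 * K * (n + 1) * ρ⁻¹ ^ 4 := by
  have hK : 1 ≤ K := (one_le_norm_of_det_eq_one (hdet x)).trans (hA x)
  have hρ1 : 1 ≤ ρ⁻¹ := by
    have hinv := (hv 0 n.zero_le).1.trans (hv 0 n.zero_le).2
    rw [← one_div, le_div_iff₀ hρ] at hinv
    rw [one_le_inv₀ hρ]
    nlinarith
  choose! B hBdet hBcol hBnorm hBadj using fun j (hj : j ≤ n) =>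
    exists_det_eq_one_mulVec_eq hρ (hv j hj).1 (hv j hj).2
  obtain ⟨s, hs, hMs⟩ := exists_cocycle_mul_eq_mul_unipotent hdet (c := (2 * ρ⁻¹) ^ 2 * K)
    hBdet hBcol fun j hj => calc
      ‖(B (j + 1)).adjugate‖ * (‖A (T^[j] x)‖ * ‖B j‖) ≤ 2 * ρ⁻¹ * (K * (2 * ρ⁻¹)) :=
        mul_le_mul (hBadj (j + 1) hj) (mul_le_mul (hA _) (hBnorm j hj.le) (norm_nonneg _)
          ((norm_nonneg _).trans (hA x))) (by positivity) (by positivity)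
      _ = (2 * ρ⁻¹) ^ 2 * K := by ring
  have hunip : ‖(!![1, s; 0, 1] : Matrix (Fin 2) (Fin 2) 𝕜)‖ ≤ 1 + ‖s‖ :=
    linfty_opNorm_fin_two_le (by positivity) (by simp) (by simp)
  calc ‖cocycle T A n x‖ = ‖B n * !![1, s; 0, 1] * (B 0).adjugate‖ := by
        rw [← hMs, mul_assoc, Matrix.mul_adjugate, hBdet 0 n.zero_le, one_smul, mul_one]
    _ ≤ 2 * ρ⁻¹ * (1 + n * ((2 * ρ⁻¹) ^ 2 * K)) * (2 * ρ⁻¹) := by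
        refine norm_mul_le_of_le (norm_mul_le_of_le (hBnorm n le_rfl) ?_) (hBadj 0 n.zero_le)
        linarith
    _ = 4 * ρ⁻¹ ^ 2 + 16 * K * n * ρ⁻¹ ^ 4 := by ring
    _ ≤ 16 * K * ρ⁻¹ ^ 4 + 16 * K * n * ρ⁻¹ ^ 4 := by
        gcongr ?_ * ?_ + _
        · linarith
        · exact pow_le_pow_right₀ hρ1 (by norm_num)
    _ = 16 * K * (n + 1) * ρ⁻¹ ^ 4 := by ring

theorem abs_log_norm_mulVec_sub_le {B : Matrix (Fin 2) (Fin 2) 𝕜} (hB : B.det = 1) (hBK : ‖B‖ ≤ K)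
    {w : Fin 2 → 𝕜} (hw : w ≠ 0) : |log ‖B *ᵥ w‖ - log ‖w‖| ≤ log (2 * K) := by
  have hK : 1 ≤ K := (one_le_norm_of_det_eq_one hB).trans hBK
  have hBw : B *ᵥ w ≠ 0 := fun h => hw <| by
    rw [← adjugate_mulVec_mulVec_of_det_eq_one hB w, h, Matrix.mulVec_zero]
  have hup : ‖B *ᵥ w‖ ≤ 2 * K * ‖w‖ := (Matrix.linfty_opNorm_mulVec _ _).trans <|
    mul_le_mul_of_nonneg_right (by linarith) (norm_nonneg w)
  have hlow : ‖w‖ ≤ 2 * K * ‖B *ᵥ w‖ := by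
    conv_lhs => rw [← adjugate_mulVec_mulVec_of_det_eq_one hB w]
    refine (Matrix.linfty_opNorm_mulVec _ _).trans ?_
    gcongr
    exact (norm_adjugate_fin_two_le B).trans (by linarith)
  have hwpos := norm_pos_iff.2 hw
  have hBwpos := norm_pos_iff.2 hBw
  have hlogup := log_le_log hBwpos hup
  have hloglow := log_le_log hwpos hlow
  rw [log_mul (by positivity) (by positivity)] at hlogup hloglow
  rw [abs_le]
  constructor <;> linarith

theorem abs_le_add_mul_sum_indicator {f : ℕ → ℝ} {M κ : ℝ} (hκ : 0 ≤ κ) {n : ℕ}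
    (hf : ∀ j < n, |f (j + 1) - f j| ≤ κ) (hgood : ∃ i ≤ n, |f i| ≤ M) {j : ℕ} (hj : j ≤ n) :
    |f j| ≤ M + κ * ∑ i ∈ Finset.range (n + 1), {t : ℝ | M < |t|}.indicator 1 (f i) := by
  set χ : ℝ → ℝ := {t : ℝ | M < |t|}.indicator 1
  have hχ : ∀ t, 0 ≤ χ t := Set.indicator_nonneg fun _ _ => zero_le_one
  have hbad : ∀ {t}, M < |t| → χ t = 1 := fun ht => Set.indicator_of_mem (s := {t | M < |t|}) ht 1
  induction n generalizing j with
  | zero =>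
    obtain ⟨i, hi, hiM⟩ := hgood
    obtain rfl : i = j := by omega
    exact hiM.trans (le_add_of_nonneg_right (mul_nonneg hκ (Finset.sum_nonneg fun i _ => hχ _)))
  | succ n ih =>
    rw [Finset.sum_range_succ]
    by_cases hgood' : ∃ i ≤ n, |f i| ≤ M
    · have hprev := fun {j} => ih (j := j) (fun i hi => hf i (by omega)) hgood'
      rcases hj.lt_or_eq with hj | rfl
      · linarith [hprev (Nat.lt_succ_iff.1 hj), mul_nonneg hκ (hχ (f (n + 1)))]
      · by_cases hM : |f (n + 1)| ≤ M
        · linarith [mul_nonneg hκ (hχ (f (n + 1))),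
            mul_nonneg hκ (Finset.sum_nonneg fun i (_ : i ∈ Finset.range (n + 1)) => hχ (f i))]
        · rw [hbad (not_le.1 hM)]
          linarith [hprev le_rfl, hf n n.lt_succ_self, abs_sub_abs_le_abs_sub (f (n + 1)) (f n)]
    · push Not at hgood'
      obtain ⟨i, hi, hiM⟩ := hgood
      obtain rfl : i = n + 1 := by
        by_contra hne
        exact (hgood' i (by omega)).not_ge hiM
      have hdist : dist (f j) (f (n + 1)) ≤ (n + 1 - j) * κ := by
        simpa [Nat.cast_sub hj] using dist_le_Ico_sum_of_dist_le (f := f) hj (d := fun _ => κ)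
          fun {k} _ hk => by rw [dist_comm]; exact hf k hk
      have hsum : ∑ i ∈ Finset.range (n + 1), χ (f i) = n + 1 := by
        rw [Finset.sum_congr rfl fun i hi => hbad (hgood' i (Finset.mem_range_succ_iff.1 hi))]
        simp
      have := abs_sub_abs_le_abs_sub (f j) (f (n + 1))
      rw [hsum]
      rw [Real.dist_eq] at hdist
      nlinarith [mul_nonneg hκ (hχ (f (n + 1))), mul_nonneg hκ j.cast_nonneg]

theorem log_norm_cocycle_le_of_mulVec (hdet : ∀ x, (A x).det = 1) (hA : ∀ x, ‖A x‖ ≤ K) {M : ℝ}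
    (hM : 0 ≤ M) (n : ℕ) (x : X) {v : Fin 2 → 𝕜} (hv : v ≠ 0) :
    log ‖cocycle T A n x‖ ≤ log (16 * K * (n + 1)) + 4 * (M + log (2 * K) *
      ∑ j ∈ Finset.range (n + 1), {t | M < |t|}.indicator (1 : ℝ → ℝ)
        (log ‖cocycle T A j x *ᵥ v‖)) := by
  have hK : 1 ≤ K := (one_le_norm_of_det_eq_one (hdet x)).trans (hA x)
  have hκ : 0 ≤ log (2 * K) := log_nonneg (by linarith)
  have hdetn := det_cocycle_eq_one (T := T) hdet
  have hne : ∀ j, cocycle T A j x *ᵥ v ≠ 0 := fun j h => hv <| by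
    rw [← adjugate_mulVec_mulVec_of_det_eq_one (hdetn j x) v, h, Matrix.mulVec_zero]
  have hpos : 0 < ‖cocycle T A n x‖ := one_pos.trans_le (one_le_norm_of_det_eq_one (hdetn n x))
  have hlog : 0 ≤ log (16 * K * (n + 1)) := log_nonneg (by nlinarith [n.cast_nonneg (α := ℝ)])
  set f : ℕ → ℝ := fun j => log ‖cocycle T A j x *ᵥ v‖ with hfdef
  set S := ∑ j ∈ Finset.range (n + 1), {t : ℝ | M < |t|}.indicator (1 : ℝ → ℝ) (f j) with hS
  by_cases hgood : ∃ i ≤ n, |f i| ≤ M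
  · have hstep : ∀ j < n, |f (j + 1) - f j| ≤ log (2 * K) := fun j _ => by
      simpa only [hfdef, cocycle, Matrix.mulVec_mulVec] using
        abs_log_norm_mulVec_sub_le (hdet (T^[j] x)) (hA _) (hne j)
    have hbound := norm_cocycle_le_of_norm_mulVec (T := T) hdet hA
      (exp_pos (-(M + log (2 * K) * S))) n x v fun j hj => by
        rw [← exp_neg, neg_neg, ← log_le_iff_le_exp (norm_pos_iff.2 (hne j)),
          ← le_log_iff_exp_le (norm_pos_iff.2 (hne j))]
        exact abs_le.1 (abs_le_add_mul_sum_indicator hκ hstep hgood hj)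
    rw [← exp_neg, neg_neg, ← exp_nat_mul] at hbound
    have := log_le_log hpos hbound
    rwa [log_mul (by positivity) (exp_ne_zero _), log_exp] at this
  · push Not at hgood
    have hsum : S = n + 1 := by
      rw [hS, Finset.sum_congr rfl fun i hi => Set.indicator_of_mem (s := {t | M < |t|})
        (hgood i (Finset.mem_range_succ_iff.1 hi)) (1 : ℝ → ℝ)]
      simp
    have htriv : log ‖cocycle T A n x‖ ≤ n * log (2 * K) := by
      rw [← log_pow]
      exact log_le_log hpos ((norm_cocycle_le hA n x).trans (by gcongr; linarith))
    rw [hsum]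
    nlinarith [mul_nonneg hκ n.cast_nonneg]

end InvariantDirection

section InvariantSection

variable {𝕜 X : Type*} [NormedField 𝕜] [MeasurableSpace X] {μ : Measure X} {T : X → X}
  {A : X → Matrix (Fin 2) (Fin 2) 𝕜} {Ψ : X → Fin 2 → 𝕜} {ω : 𝕜}

theorem ae_ne_zero_of_mulVec_eq [IsFiniteMeasure μ] (hT : Ergodic T μ)
    (hdet : ∀ x, (A x).det = 1) (hΨ : AEStronglyMeasurable Ψ μ)
    (heq : ∀ᵐ x ∂μ, A x *ᵥ Ψ x = ω • Ψ (T x)) (hne : ¬Ψ =ᵐ[μ] 0) : ∀ᵐ x ∂μ, Ψ x ≠ 0 := by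
  have hmeas : NullMeasurableSet {x | Ψ x ≠ 0} μ :=
    hΨ.nullMeasurableSet_support
  have hinv : {x | Ψ x ≠ 0} ≤ᵐ[μ] T ⁻¹' {x | Ψ x ≠ 0} := by
    filter_upwards [heq] with x hx hΨx hTx
    refine hΨx ?_
    rw [← adjugate_mulVec_mulVec_of_det_eq_one (hdet x) (Ψ x), hx,
      show Ψ (T x) = 0 from hTx, smul_zero, Matrix.mulVec_zero]
  rcases hT.ae_empty_or_univ_of_ae_le_preimage hmeas hinv with h | h
  · refine absurd ?_ hne
    filter_upwards [eventuallyEq_set.1 h] with x hx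
    simpa using hx
  · filter_upwards [eventuallyEq_set.1 h] with x hx
    exact hx.2 trivial

theorem ae_forall_cocycle_mulVec_eq (hT : Measure.QuasiMeasurePreserving T μ μ)
    (heq : ∀ᵐ x ∂μ, A x *ᵥ Ψ x = ω • Ψ (T x)) :
    ∀ᵐ x ∂μ, ∀ n, cocycle T A n x *ᵥ Ψ x = ω ^ n • Ψ (T^[n] x) := by
  filter_upwards [ae_all_iff.2 fun n => (hT.iterate n).ae heq] with x hx n
  induction n with
  | zero => simp [cocycle]
  | succ n ih =>
    rw [cocycle, ← Matrix.mulVec_mulVec, ih, Matrix.mulVec_smul, hx n, smul_smul, ← pow_succ,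
      Function.iterate_succ_apply']

theorem tendsto_measureReal_lt_abs [IsFiniteMeasure μ] {h : X → ℝ} (hh : AEMeasurable h μ) :
    Tendsto (fun M : ℕ => μ.real {x | (M : ℝ) < |h x|}) atTop (𝓝 0) := by
  have hempty : ⋂ M : ℕ, {x | (M : ℝ) < |h x|} = ∅ :=
    Set.eq_empty_of_forall_notMem fun x hx => by
      obtain ⟨M, hM⟩ := exists_nat_ge |h x|
      exact (Set.mem_iInter.1 hx M).not_ge hM
  have := tendsto_measure_iInter_atTop (μ := μ) (s := fun M : ℕ => {x | (M : ℝ) < |h x|})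
    (fun M => nullMeasurableSet_lt aemeasurable_const hh.abs)
    (fun M N hMN => Set.ofPred_subset_ofPred.2 fun x => (Nat.cast_le.2 hMN).trans_lt)
    ⟨0, measure_ne_top _ _⟩
  rw [hempty, measure_empty] at this
  exact (ENNReal.tendsto_toReal ENNReal.zero_ne_top).comp this

theorem integral_indicator_iterate [IsFiniteMeasure μ] (hT : MeasurePreserving T μ μ) {S : Set X}
    (hS : NullMeasurableSet S μ) (n : ℕ) :
    Integrable (fun x => S.indicator (1 : X → ℝ) (T^[n] x)) μ ∧
      ∫ x, S.indicator (1 : X → ℝ) (T^[n] x) ∂μ = μ.real S := by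
  have hpre : NullMeasurableSet (T^[n] ⁻¹' S) μ := hS.preimage (hT.iterate n).quasiMeasurePreserving
  have hcomp : (fun x => S.indicator (1 : X → ℝ) (T^[n] x)) = (T^[n] ⁻¹' S).indicator 1 := rfl
  rw [hcomp]
  refine ⟨(integrable_const 1).indicator₀ hpre, ?_⟩
  rw [integral_indicator₀ hpre]
  simp [measureReal_def, (hT.iterate n).measure_preimage hS]

theorem eventually_log_add_le {c b δ ε : ℝ} (hc : 0 < c) (hδ : δ < ε) :
    ∀ᶠ n : ℕ in atTop, log (c * (n + 1)) + b + δ * (n + 1) ≤ n * ε := by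
  have hlim : Tendsto (fun n : ℕ => c * ((n : ℝ) + 1)) atTop atTop :=
    (tendsto_atTop_add_const_right _ 1 tendsto_natCast_atTop_atTop).const_mul_atTop hc
  have hlog := hlim.eventually (isLittleO_log_id_atTop.bound (c := (ε - δ) / 2 / c)
    (div_pos (half_pos (sub_pos.2 hδ)) hc))
  have hlin := (tendsto_natCast_atTop_atTop (R := ℝ)).const_mul_atTop (half_pos (sub_pos.2 hδ))
  filter_upwards [hlog, hlin.eventually_ge_atTop ((ε - δ) / 2 + b + δ)] with n hn hn'
  have hpos : 0 ≤ c * ((n : ℝ) + 1) := by positivity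
  have : (ε - δ) / 2 / c * (c * (n + 1)) = (ε - δ) / 2 * (n + 1) := by field_simp
  rw [id, norm_of_nonneg hpos, this] at hn
  linarith [(le_norm_self (log (c * (n + 1)))).trans hn]

theorem exists_integral_log_norm_cocycle_le [IsProbabilityMeasure μ] (hT : Ergodic T μ)
    (hdet : ∀ x, (A x).det = 1) {K : ℝ} (hA : ∀ x, ‖A x‖ ≤ K) (hΨ : AEStronglyMeasurable Ψ μ)
    (hω : ‖ω‖ = 1) (heq : ∀ᵐ x ∂μ, A x *ᵥ Ψ x = ω • Ψ (T x)) (hne : ¬Ψ =ᵐ[μ] 0) {ε : ℝ}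
    (hε : 0 < ε) : ∃ m : ℕ, m ≠ 0 ∧ ∫ x, log ‖cocycle T A m x‖ ∂μ ≤ m * ε := by
  obtain ⟨x₀⟩ : Nonempty X := μ.nonempty_of_neZero
  have hK : 1 ≤ K := (one_le_norm_of_det_eq_one (hdet x₀)).trans (hA x₀)
  have hlog : AEMeasurable (fun x => log ‖Ψ x‖) μ :=
    measurable_log.comp_aemeasurable hΨ.norm.aemeasurable
  have hbad := ((tendsto_measureReal_lt_abs hlog).const_mul (4 * log (2 * K))).eventually_lt_const
    (by simpa using hε)
  obtain ⟨M, hM⟩ := hbad.exists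
  set S := {x | (M : ℝ) < |log ‖Ψ x‖|} with hSdef
  have hS : NullMeasurableSet S μ := nullMeasurableSet_lt aemeasurable_const hlog.abs
  obtain ⟨m, hm0, hm⟩ := ((eventually_ne_atTop 0).and
    (eventually_log_add_le (c := 16 * K) (b := 4 * M) (by positivity) hM)).exists
  refine ⟨m, hm0, ?_⟩
  have hind := integral_indicator_iterate hT.toMeasurePreserving hS
  have hle : ∀ᵐ x ∂μ, log ‖cocycle T A m x‖ ≤ log (16 * K * (m + 1)) + 4 * (M + log (2 * K) *
      ∑ j ∈ Finset.range (m + 1), S.indicator (1 : X → ℝ) (T^[j] x)) := by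
    filter_upwards [ae_ne_zero_of_mulVec_eq hT hdet hΨ heq hne,
      ae_forall_cocycle_mulVec_eq hT.quasiMeasurePreserving heq] with x hx hcoc
    simpa [hcoc, norm_smul, hω, hSdef, Set.indicator_apply] using
      log_norm_cocycle_le_of_mulVec (T := T) hdet hA M.cast_nonneg m x hx
  have hsum : Integrable
      (fun x => ∑ j ∈ Finset.range (m + 1), S.indicator (1 : X → ℝ) (T^[j] x)) μ :=
    integrable_finsetSum _ fun j _ => (hind j).1
  calc ∫ x, log ‖cocycle T A m x‖ ∂μ
      ≤ ∫ x, (log (16 * K * (m + 1)) + 4 * (M + log (2 * K) *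
          ∑ j ∈ Finset.range (m + 1), S.indicator (1 : X → ℝ) (T^[j] x))) ∂μ :=
        integral_mono_of_nonneg (Eventually.of_forall fun x => log_nonneg
          (one_le_norm_of_det_eq_one (det_cocycle_eq_one hdet m x))) (by fun_prop) hle
    _ = log (16 * K * (m + 1)) + 4 * M + 4 * log (2 * K) * μ.real S * (m + 1) := by
        rw [integral_add (by fun_prop) (by fun_prop), integral_const_mul,
          integral_add (by fun_prop) (by fun_prop), integral_const_mul,
          integral_finsetSum _ fun j _ => (hind j).1]
        simp [fun j => (hind j).2]
        ring
    _ ≤ m * ε := hm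

end InvariantSection

/-! ### The dual cocycle of an eigenfunction -/

section Fourier

variable {T : ℝ} [Fact (0 < T)]

theorem fourierCoeff_comp_add_right {F : Type*} [NormedAddCommGroup F] [NormedSpace ℂ F]
    (f : AddCircle T → F) (a : AddCircle T) (n : ℤ) :
    fourierCoeff (fun x => f (x + a)) n = (fourier n a : ℂ) • fourierCoeff f n := by
  calc fourierCoeff (fun x => f (x + a)) n
    _ = ∫ t, (fun t => (fourier n a : ℂ) • (fourier (-n) t : ℂ) • f t) (t + a)
          ∂AddCircle.haarAddCircle := by
      refine integral_congr_ae (Eventually.of_forall fun t => ?_)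
      beta_reduce
      rw [← mul_smul]
      simp only [fourier_apply, smul_add, AddCircle.toCircle_add, neg_smul,
        AddCircle.toCircle_neg, Circle.coe_mul]
      rw [mul_left_comm, ← Circle.coe_mul, mul_inv_cancel, Circle.coe_one, mul_one]
    _ = (fourier n a : ℂ) • fourierCoeff f n := by
      rw [integral_add_right_eq_self
        (fun t => (fourier n a : ℂ) • (fourier (-n) t : ℂ) • f t), integral_smul, fourierCoeff]

theorem fourierCoeff_fourier_smul {F : Type*} [NormedAddCommGroup F] [NormedSpace ℂ F]
    (f : AddCircle T → F) (k n : ℤ) :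
    fourierCoeff (fun x => (fourier k x : ℂ) • f x) n = fourierCoeff f (n - k) := by
  refine integral_congr_ae (Eventually.of_forall fun x => ?_)
  beta_reduce
  rw [← mul_smul, ← fourier_add, neg_sub, neg_add_eq_sub]

theorem ae_eq_zero_of_fourierCoeff_eq_zero {f : AddCircle T → ℂ}
    (hf : MemLp f 2 AddCircle.haarAddCircle) (h : ∀ n, fourierCoeff f n = 0) :
    f =ᵐ[AddCircle.haarAddCircle] 0 := by
  have hzero : hf.toLp f = 0 := fourierBasis.repr.injective <| by
    ext n
    rw [fourierBasis_repr, fourierCoeff_congr_ae hf.coeFn_toLp, h, map_zero, lp.coeFn_zero,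
      Pi.zero_apply]
  exact (MemLp.toLp_eq_toLp_iff hf MemLp.zero').1 hzero

theorem exists_memLp_fourierCoeff_eq {u : ℤ → ℂ} (hu : Memℓp u 2) :
    ∃ f : AddCircle T → ℂ, MemLp f 2 AddCircle.haarAddCircle ∧ ∀ n, fourierCoeff f n = u n := by
  refine ⟨_, Lp.memLp (fourierBasis.repr.symm ⟨u, hu⟩), fun n => ?_⟩
  rw [← fourierBasis_repr, LinearIsometryEquiv.apply_symm_apply]

theorem ergodic_add_right_haarAddCircle {α : AddCircle T} (hα : ¬IsOfFinAddOrder α) :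
    Ergodic (· + α) (AddCircle.haarAddCircle (T := T)) := by
  have hvol := AddCircle.ergodic_add_right.2 (addOrderOf_eq_zero hα)
  rw [AddCircle.volume_eq_smul_haarAddCircle] at hvol
  have hT : ENNReal.ofReal T ≠ 0 := (ENNReal.ofReal_pos.2 Fact.out).ne'
  simpa only [smul_smul, ENNReal.inv_mul_cancel hT ENNReal.ofReal_ne_top, one_smul] using
    hvol.smul_measure (ENNReal.ofReal T)⁻¹

end Fourier

section Dual

open AddCircle

-- Aubry duality: the Fourier transform exchanges translations with multiplication by characters.
theorem ae_dual_of_fourierCoeff {lam : ℝ} {z : ℂ} {α θ : UnitAddCircle} {f : UnitAddCircle → ℂ}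
    (hf : MemLp f 2 haarAddCircle) (heq : ∀ n, fourierCoeff f (n + 1) + fourierCoeff f (n - 1) +
      lam * cosPot (θ + n • α) * fourierCoeff f n = z * fourierCoeff f n) :
    ∀ᵐ x ∂haarAddCircle, lam * (fourier 1 θ * f (x + α) + fourier (-1) θ * f (x - α)) +
      cosPot x * f x = z * f x := by
  have htrans (a : UnitAddCircle) : MemLp (fun x => f (x + a)) 2 haarAddCircle :=
    hf.comp_measurePreserving (measurePreserving_add_right _ a)
  have hmod (k : ℤ) : MemLp (fun x => (fourier k x : ℂ) • f x) 2 haarAddCircle :=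
    hf.of_le ((map_continuous (fourier k)).aestronglyMeasurable.smul hf.1)
      (Eventually.of_forall fun x => by rw [norm_smul, norm_fourier_apply, one_mul])
  have h₁ := (htrans α).const_mul (lam * fourier 1 θ)
  have h₂ := (htrans (-α)).const_mul (lam * fourier (-1) θ)
  have h₃ := hf.const_mul (-z)
  have h12 := h₁.add h₂
  have hmods := (hmod 1).add (hmod (-1))
  have hzero := ae_eq_zero_of_fourierCoeff_eq_zero ((h12.add hmods).add h₃) fun n => by
    have hintegrable {g : UnitAddCircle → ℂ} (hg : MemLp g 2 haarAddCircle) :=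
      hg.integrable one_le_two
    have hneg : (fourier n (-α) : ℂ) = fourier (-n) α := by
      simp only [fourier_apply, smul_neg, neg_smul]
    rw [fourierCoeff.add (hintegrable (h12.add hmods)) (hintegrable h₃), Pi.add_apply,
      fourierCoeff.add (hintegrable h12) (hintegrable hmods), Pi.add_apply,
      fourierCoeff.add (hintegrable h₁) (hintegrable h₂), Pi.add_apply,
      fourierCoeff.add (hintegrable (hmod 1)) (hintegrable (hmod (-1))), Pi.add_apply,
      fourierCoeff.const_mul, fourierCoeff.const_mul, fourierCoeff.const_mul,
      fourierCoeff_fourier_smul, fourierCoeff_fourier_smul, fourierCoeff_comp_add_right,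
      fourierCoeff_comp_add_right, hneg, sub_neg_eq_add, smul_eq_mul, smul_eq_mul]
    have h := heq n
    rw [cosPot_eq_fourier_add, fourier_add_zsmul, fourier_add_zsmul, one_mul, neg_one_mul] at h
    linear_combination h
  filter_upwards [hzero] with x hx
  simp only [Pi.add_apply, Pi.zero_apply, smul_eq_mul] at hx
  rw [cosPot_eq_fourier_add, sub_eq_add_neg]
  linear_combination hx

/-- The transfer cocycle, over the rotation by `α`, of the two-coupling Harper operator with hopping
`a` and potential strength `b` at the energy `z`. -/
def harperCocycle (a b : ℝ) (z : ℂ) (α : UnitAddCircle) :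
    ℕ → UnitAddCircle → Matrix (Fin 2) (Fin 2) ℂ :=
  cocycle (· + α) fun x => stepMatrix (a : ℂ) z (b * cosPot x : ℝ)

theorem semiconj_harperPot (b : ℝ) (α : UnitAddCircle) :
    Function.Semiconj (harperPot b α) (· + α) shift := fun x => by
  have h := shift_harperPot b α x 1
  rw [one_zsmul] at h
  exact h.symm

theorem harperCocycle_eq_cocycle_shift (a b : ℝ) (z : ℂ) (α : UnitAddCircle) (n : ℕ)
    (x : UnitAddCircle) : harperCocycle a b z α n x =
      cocycle shift (fun v => stepMatrix (a : ℂ) z (v 0)) n (harperPot b α x) := by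
  rw [cocycle_semiconj (semiconj_harperPot b α), harperCocycle]
  congr 1
  ext1 x
  rw [Function.comp_apply, harperPot, zero_smul, add_zero]

theorem continuous_cosPot : Continuous cosPot :=
  continuous_const.mul (Complex.continuous_re.comp (map_continuous (fourier 1)))

theorem continuous_stepMatrix_cosPot (a b : ℝ) : Continuous fun p : ℂ × UnitAddCircle =>
    stepMatrix (a : ℂ) p.1 (b * cosPot p.2 : ℝ) := by
  have hpot : Continuous fun p : ℂ × UnitAddCircle => p.1 - ((b * cosPot p.2 : ℝ) : ℂ) :=
    continuous_fst.sub
      (Complex.continuous_ofReal.comp ((continuous_cosPot.comp continuous_snd).const_mul b))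
  exact continuous_matrix fun i j => by
    fin_cases i <;> fin_cases j <;> first | exact hpot | exact continuous_const

theorem continuous_harperCocycle (a b : ℝ) (α : UnitAddCircle) (n : ℕ) :
    Continuous fun p : ℂ × UnitAddCircle => harperCocycle a b p.1 α n p.2 := by
  refine (continuous_cocycle (T := Prod.map id (· + α)) (by fun_prop)
    (continuous_stepMatrix_cosPot a b) n).congr ?_
  rintro ⟨z, x⟩
  exact cocycle_semiconj (f := Prod.mk z) (fun _ => rfl) _ n x

theorem harperCocycle_ne_zero {a : ℝ} (ha : a ≠ 0) (b : ℝ) (z : ℂ) (α : UnitAddCircle) (n : ℕ)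
    (x : UnitAddCircle) : harperCocycle a b z α n x ≠ 0 := by
  suffices h : (harperCocycle a b z α n x).det ≠ 0 from fun h0 => h (by simp [h0])
  induction n with
  | zero => simp [harperCocycle, cocycle]
  | succ n ih =>
    rw [harperCocycle, cocycle, Matrix.det_mul]
    exact mul_ne_zero (by simp [stepMatrix, ha]) ih

theorem continuous_log_norm_harperCocycle {a : ℝ} (ha : a ≠ 0) (b : ℝ) (α : UnitAddCircle) (n : ℕ) :
    Continuous fun p : ℂ × UnitAddCircle => log ‖harperCocycle a b p.1 α n p.2‖ :=
  (continuous_harperCocycle a b α n).norm.log fun p =>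
    norm_ne_zero_iff.2 (harperCocycle_ne_zero ha b p.1 α n p.2)

theorem integrable_log_norm_harperCocycle {a : ℝ} (ha : a ≠ 0) (b : ℝ) (z : ℂ) (α : UnitAddCircle)
    (n : ℕ) : Integrable (fun x => log ‖harperCocycle a b z α n x‖) haarAddCircle :=
  ((continuous_log_norm_harperCocycle ha b α n).comp (by fun_prop : Continuous (Prod.mk z)))
    |>.integrable_of_hasCompactSupport (HasCompactSupport.of_compactSpace _)

theorem inv_smul_stepMatrix_mulVec {K : Type*} [Field K] {a : K} (ha : a ≠ 0) (z v p q : K) :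
    (a⁻¹ • stepMatrix a z v) *ᵥ ![p, q] = ![a⁻¹ * (z - v) * p - q, p] := by
  ext i
  fin_cases i <;> simp [stepMatrix, ha, sub_eq_add_neg, mul_comm]

theorem det_inv_smul_stepMatrix {K : Type*} [Field K] {a : K} (ha : a ≠ 0) (z v : K) :
    (a⁻¹ • stepMatrix a z v).det = 1 := by
  simp [stepMatrix, ha]

theorem log_norm_cocycle_inv_smul_stepMatrix {lam : ℝ} (hlam : lam ≠ 0) (b : ℝ) (z : ℂ)
    (α : UnitAddCircle) (n : ℕ) (x : UnitAddCircle) :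
    log ‖cocycle (· + α) (fun x => (lam : ℂ)⁻¹ • stepMatrix (lam : ℂ) z (b * cosPot x : ℝ)) n x‖ =
      log ‖harperCocycle lam b z α n x‖ - n * log |lam| := by
  have h : cocycle (· + α) (fun x => (lam : ℂ)⁻¹ • stepMatrix (lam : ℂ) z (b * cosPot x : ℝ)) n x =
      (lam : ℂ)⁻¹ ^ n • harperCocycle lam b z α n x :=
    cocycle_smul (lam : ℂ)⁻¹ (fun x => stepMatrix (lam : ℂ) z (b * cosPot x : ℝ)) n x
  rw [h, norm_smul, log_mul (by simp [hlam])
    (norm_ne_zero_iff.2 (harperCocycle_ne_zero hlam b z α n x)), norm_pow, norm_inv,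
    Complex.norm_real, log_pow, log_inv, Real.norm_eq_abs]
  ring

theorem inv_smul_stepMatrix_mulVec_eq_smul {lam : ℂ} (hlam : lam ≠ 0) {z v : ℂ}
    {α θ x : UnitAddCircle} {f : UnitAddCircle → ℂ}
    (h : lam * (fourier 1 θ * f (x + α) + fourier (-1) θ * f (x - α)) + v * f x = z * f x) :
    (lam⁻¹ • stepMatrix lam z v) *ᵥ ![f x, fourier (-1) θ * f (x - α)] =
      (fourier 1 θ : ℂ) • ![f (x + α), fourier (-1) θ * f (x + α - α)] := by
  have hinv : (fourier 1 θ : ℂ) * fourier (-1) θ = 1 := by rw [← fourier_add]; simp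
  simp only [inv_smul_stepMatrix_mulVec hlam, add_sub_cancel_right, Matrix.smul_cons, smul_eq_mul,
    Matrix.smul_empty, ← mul_assoc, hinv, one_mul]
  congr 1
  field_simp
  linear_combination -h

theorem exists_integral_log_norm_harperCocycle_le {lam : ℝ} (hlam : lam ≠ 0) {z : ℂ}
    {α θ : UnitAddCircle} (hα : ¬IsOfFinAddOrder α) {f : UnitAddCircle → ℂ}
    (hf : AEStronglyMeasurable f haarAddCircle) (hne : ¬f =ᵐ[haarAddCircle] 0)
    (heq : ∀ᵐ x ∂haarAddCircle, lam * (fourier 1 θ * f (x + α) + fourier (-1) θ * f (x - α)) +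
      cosPot x * f x = z * f x) {ε : ℝ} (hε : 0 < ε) :
    ∃ m : ℕ, m ≠ 0 ∧
      ∫ x, log ‖harperCocycle lam 1 z α m x‖ ∂haarAddCircle ≤ m * (log |lam| + ε) := by
  have hlamC : (lam : ℂ) ≠ 0 := Complex.ofReal_ne_zero.2 hlam
  let A : UnitAddCircle → Matrix (Fin 2) (Fin 2) ℂ :=
    fun x => (lam : ℂ)⁻¹ • stepMatrix (lam : ℂ) z (1 * cosPot x : ℝ)
  let Ψ : UnitAddCircle → Fin 2 → ℂ := fun x => ![f x, fourier (-1) θ * f (x - α)]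
  obtain ⟨K, hK⟩ := isCompact_univ.exists_bound_of_continuousOn (f := A)
    (((continuous_stepMatrix_cosPot lam 1).comp (Continuous.prodMk_right z)).const_smul
      (lam : ℂ)⁻¹).continuousOn
  have hΨ : AEStronglyMeasurable Ψ haarAddCircle := by
    have hsub := hf.comp_measurePreserving (measurePreserving_sub_right haarAddCircle α)
    have := hf.aemeasurable
    have := hsub.aemeasurable.const_mul (fourier (-1) θ : ℂ)
    exact (aemeasurable_pi_lambda _ fun i => by fin_cases i <;> assumption).aestronglyMeasurable
  have hΨ0 : ¬Ψ =ᵐ[haarAddCircle] 0 := fun h => hne (h.mono fun x hx => congrFun hx 0)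
  obtain ⟨m, hm0, hm⟩ := exists_integral_log_norm_cocycle_le (ergodic_add_right_haarAddCircle hα)
    (A := A) (Ψ := Ψ) (fun x => det_inv_smul_stepMatrix hlamC _ _) (fun x => hK x trivial) hΨ
    (norm_fourier_apply 1 θ)
    (heq.mono fun x hx => inv_smul_stepMatrix_mulVec_eq_smul hlamC (by simpa using hx)) hΨ0 hε
  refine ⟨m, hm0, ?_⟩
  simp only [A, log_norm_cocycle_inv_smul_stepMatrix hlam] at hm
  rw [integral_sub (integrable_log_norm_harperCocycle hlam 1 z α m) (integrable_const _)] at hm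
  simp only [integral_const, probReal_univ, one_smul] at hm
  linarith

theorem exists_integral_log_norm_harperCocycle_le_of_lp {lam : ℝ} (hlam : lam ≠ 0) {E : ℝ}
    {α θ : UnitAddCircle} (hα : ¬IsOfFinAddOrder α) {u : lp (fun _ : ℤ => ℝ) 2} (hu : u ≠ 0)
    (heq : ∀ n : ℤ, u (n + 1) + u (n - 1) + lam * cosPot (θ + n • α) * u n = E * u n) {ε : ℝ}
    (hε : 0 < ε) : ∃ m : ℕ, m ≠ 0 ∧
      ∫ x, log ‖harperCocycle lam 1 E α m x‖ ∂haarAddCircle ≤ m * (log |lam| + ε) := by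
  obtain ⟨f, hf, hfu⟩ := exists_memLp_fourierCoeff_eq (T := 1)
    (memℓp_norm_iff.1 (by simpa using memℓp_norm_iff.2 (lp.memℓp u)) : Memℓp (fun n => (u n : ℂ)) 2)
  refine exists_integral_log_norm_harperCocycle_le hlam hα hf.1 (fun h => hu ?_)
    (ae_dual_of_fourierCoeff (θ := θ) hf fun n => ?_) hε
  · ext n
    have h0 := hfu n
    rw [fourierCoeff_congr_ae h] at h0
    simpa [fourierCoeff] using h0.symm
  · simp only [hfu]
    exact_mod_cast heq n

end Dual

/-! ### Uniform growth of transfer matrices -/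

section UniformGrowth

open AddCircle

variable {a b : ℝ} {E : ℝ} {α : UnitAddCircle} {L : ℝ}

theorem continuous_integral_log_norm_harperCocycle (ha : a ≠ 0) (b : ℝ) (α : UnitAddCircle)
    (n : ℕ) : Continuous fun z : ℂ => ∫ x, log ‖harperCocycle a b z α n x‖ ∂haarAddCircle := by
  simpa only [Measure.restrict_univ] using continuous_parametric_integral_of_continuous
    (μ := haarAddCircle) (continuous_log_norm_harperCocycle ha b α n) isCompact_univ

theorem subadditive_integral_log_norm_harperCocycle (ha : a ≠ 0) (b : ℝ) (z : ℂ)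
    (α : UnitAddCircle) :
    Subadditive fun n => ∫ x, log ‖harperCocycle a b z α n x‖ ∂haarAddCircle :=
  subadditive_integral_log_norm_cocycle (measurePreserving_add_right _ α)
    (harperCocycle_ne_zero ha b z α) (integrable_log_norm_harperCocycle ha b z α)

theorem norm_jacobiDet_harperPot_le (a b : ℝ) (z : ℂ) (α : UnitAddCircle) (n : ℕ)
    (x : UnitAddCircle) :
    ‖jacobiDet (a : ℂ) z (harperPot b α x) n‖ ≤ ‖harperCocycle a b z α n x‖ := by
  rw [harperCocycle_eq_cocycle_shift, ← cocycle_shift_zero_zero]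
  exact norm_entry_le_linfty_opNorm _ 0 0

theorem eventually_log_norm_jacobiDet_le_integral (a : ℝ) (hb : b ≠ 0) (hα : ¬IsOfFinAddOrder α)
    {z : ℂ} (hz : z.im ≠ 0) {ε : ℝ} (hε : 0 < ε) : ∀ᶠ n : ℕ in atTop, ∀ x,
      log ‖jacobiDet (a : ℂ) z (harperPot b α x) n‖ ≤
        ∫ y, log ‖harperCocycle b a z α n y‖ ∂haarAddCircle + ε * n := by
  filter_upwards [eventually_log_norm_jacobiDet_le a b hα hz hε] with n hn x
  have hle := integral_mono (integrable_const _) (integrable_log_norm_harperCocycle hb a z α n)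
    fun y => (sub_le_iff_le_add.2 (hn x y)).trans <|
      log_le_log (norm_pos_iff.2 (jacobiDet_harperPot_ne_zero b a hz α y n))
        (norm_jacobiDet_harperPot_le b a z α n y)
  rw [integral_const, probReal_univ, one_smul] at hle
  linarith

theorem eventually_norm_jacobiDet_le_exp (hb : b ≠ 0) (hα : ¬IsOfFinAddOrder α) {m : ℕ}
    (hm : m ≠ 0) (hI : ∫ x, log ‖harperCocycle b a E α m x‖ ∂haarAddCircle < m * L) :
    ∀ᶠ n : ℕ in atTop, ∀ x, ‖jacobiDet (a : ℂ) E (harperPot b α x) n‖ ≤ exp (n * L) := by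
  have hm' : (0 : ℝ) < m := by positivity
  obtain ⟨L', hIL', hL'⟩ := exists_between ((div_lt_iff₀' hm').2 hI)
  rw [div_lt_iff₀' hm'] at hIL'
  -- Duality applies to `log ‖z - ·‖` only for `z` off the real axis, where it is continuous; the
  -- integral, being continuous in `z`, stays small after a small shift of the energy.
  obtain ⟨η, hηI, hη⟩ : ∃ η : ℝ,
      ∫ x, log ‖harperCocycle b a (E + η * Complex.I) α m x‖ ∂haarAddCircle < m * L' ∧ 0 < η := by
    have hcont : Continuous fun η : ℝ =>
        ∫ x, log ‖harperCocycle b a (E + η * Complex.I) α m x‖ ∂haarAddCircle :=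
      (continuous_integral_log_norm_harperCocycle hb a α m).comp (by fun_prop)
    have hnear := (hcont.tendsto 0).eventually_lt_const (by simpa using hIL')
    exact ((hnear.filter_mono nhdsWithin_le_nhds).and
      (eventually_mem_nhdsWithin (s := Set.Ioi 0))).exists
  set z : ℂ := E + η * Complex.I with hz
  have hre : z.re = E := by simp [hz]
  have him : z.im ≠ 0 := by simpa [hz] using hη.ne'
  filter_upwards [eventually_log_norm_jacobiDet_le_integral a hb hα him (sub_pos.2 hL'),
    (subadditive_integral_log_norm_harperCocycle hb a z α).eventually_div_lt_of_div_lt hm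
      ((div_lt_iff₀' hm').2 hηI), eventually_gt_atTop 0] with n hn hnI hn0 x
  rw [div_lt_iff₀' (by positivity)] at hnI
  have hdet := norm_jacobiDet_re_le a b z α x n
  rw [hre] at hdet
  refine hdet.trans ((log_le_iff_le_exp
    (norm_pos_iff.2 (jacobiDet_harperPot_ne_zero a b him α x n))).1 ?_)
  linarith [hn x]

theorem eventually_norm_harperCocycle_le_exp (hL : 0 ≤ L)
    (h : ∀ᶠ n : ℕ in atTop, ∀ x, ‖jacobiDet (a : ℂ) E (harperPot b α x) n‖ ≤ exp (n * L)) :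
    ∀ᶠ n : ℕ in atTop, ∀ x, ‖harperCocycle a b E α n x‖ ≤ (1 + |a|) ^ 2 * exp (n * L) := by
  obtain ⟨N, hN⟩ := eventually_atTop.1 h
  refine eventually_atTop.2 ⟨N + 2, fun n hn x => ?_⟩
  obtain ⟨k, rfl⟩ : ∃ k, n = k + 2 := ⟨n - 2, by omega⟩
  have hdet (y : UnitAddCircle) (m : ℕ) (hm : m ∈ Set.Icc k (k + 2)) :
      ‖jacobiDet (a : ℂ) E (harperPot b α y) m‖ ≤ exp ((k + 2 : ℕ) * L) :=
    (hN m (by have := hm.1; omega) y).trans <| exp_le_exp.2 <|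
      mul_le_mul_of_nonneg_right (Nat.cast_le.2 hm.2) hL
  rw [harperCocycle_eq_cocycle_shift]
  refine (norm_cocycle_shift_add_two_le (a : ℂ) (E : ℂ) (hdet x) ?_).trans_eq (by simp)
  rw [← semiconj_harperPot b α x]
  exact hdet _

theorem exists_norm_harperCocycle_le_exp (hb : b ≠ 0) (hα : ¬IsOfFinAddOrder α) (hL : 0 ≤ L) {m : ℕ}
    (hm : m ≠ 0) (hI : ∫ x, log ‖harperCocycle b a E α m x‖ ∂haarAddCircle < m * L) :
    ∃ C, ∀ n x, ‖harperCocycle a b E α n x‖ ≤ C * exp (n * L) := by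
  obtain ⟨N, hN⟩ := eventually_atTop.1
    (eventually_norm_harperCocycle_le_exp hL (eventually_norm_jacobiDet_le_exp hb hα hm hI))
  obtain ⟨K, hK⟩ := isCompact_univ.exists_bound_of_continuousOn
    ((continuous_stepMatrix_cosPot a b).comp (Continuous.prodMk_right (E : ℂ))).continuousOn
  have hK1 := le_max_right K 1
  refine ⟨max ((1 + |a|) ^ 2) (max K 1 ^ N), fun n x => ?_⟩
  rcases le_total N n with hn | hn
  · exact (hN n hn x).trans (by gcongr; exact le_max_left _ _)
  · calc ‖harperCocycle a b E α n x‖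
        ≤ max K 1 ^ n := norm_cocycle_le (fun y => (hK y trivial).trans (le_max_left _ _)) n x
      _ ≤ max K 1 ^ N * 1 := by rw [mul_one]; exact pow_le_pow_right₀ hK1 hn
      _ ≤ _ := by
        gcongr
        · exact le_max_right _ _
        · exact one_le_exp (by positivity)

end UniformGrowth

section Transfer

theorem norm_map_ofReal (A : Matrix (Fin 2) (Fin 2) ℝ) : ‖A.map ((↑) : ℝ → ℂ)‖ = ‖A‖ := by
  simp [Matrix.linfty_opNorm_def]

theorem transfer_eq_cocycle (g : ℤ → ℝ) (E : ℝ) (n : ℕ) (k : ℤ) :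
    transfer g E n k = cocycle (· + 1) (fun j => stepMatrix 1 E (g j)) n k := by
  induction n with
  | zero => rfl
  | succ n ih =>
    rw [transfer, cocycle, ih, add_right_iterate]
    simp [stepMatrix]

theorem cosPot_coe (x : ℝ) : cosPot (x : UnitAddCircle) = 2 * cos (2 * π * x) := by
  rw [cosPot, fourier_coe_apply]
  simp [Complex.exp_re]

theorem amoPot_eq_cosPot (lam α θ : ℝ) (n : ℤ) :
    amoPot lam α θ n = lam * cosPot ((θ : UnitAddCircle) + n • (α : UnitAddCircle)) := by
  rw [← AddCircle.coe_zsmul, ← AddCircle.coe_add, cosPot_coe, amoPot, zsmul_eq_mul]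
  ring

theorem map_transfer_amoPot (lam α θ E : ℝ) (n : ℕ) (k : ℤ) :
    (transfer (amoPot lam α θ) E n k).map ((↑) : ℝ → ℂ) =
      harperCocycle 1 lam E α n ((θ : UnitAddCircle) + k • (α : UnitAddCircle)) := by
  have hsemi : Function.Semiconj (fun k : ℤ => (θ : UnitAddCircle) + k • (α : UnitAddCircle))
      (· + 1) (· + (α : UnitAddCircle)) := fun k => by simp only [add_smul, one_smul, add_assoc]
  rw [transfer_eq_cocycle, harperCocycle,
    cocycle_semiconj (f := fun k : ℤ => (θ : UnitAddCircle) + k • (α : UnitAddCircle)) hsemi]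
  refine (map_cocycle (Complex.ofRealHom.mapMatrix : Matrix (Fin 2) (Fin 2) ℝ →+* _).toMonoidHom
    _ n k).trans ?_
  congr 1
  ext j i i' : 3
  fin_cases i <;> fin_cases i' <;> simp [stepMatrix, amoPot_eq_cosPot]

theorem not_isOfFinAddOrder_coe {α : ℝ} (hα : Irrational α) :
    ¬IsOfFinAddOrder (α : UnitAddCircle) := by
  rw [AddCircle.isOfFinAddOrder_iff_exists_rat_eq_div, div_one]
  exact hα

theorem exists_norm_transfer_amoPot_le {lam α θ E L : ℝ} (hlam : lam ≠ 0) (hα : Irrational α)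
    (hL : 0 ≤ L) (hlamL : log |lam| < L) {u : lp (fun _ : ℤ => ℝ) 2} (hu : u ≠ 0)
    (heq : IsEigenfunction (amoPot lam α θ) E u) :
    ∃ C, ∀ n k, ‖transfer (amoPot lam α θ) E n k‖ ≤ C * exp (n * L) := by
  have hα' := not_isOfFinAddOrder_coe hα
  have hu' (n : ℤ) := heq n
  simp only [amoPot_eq_cosPot] at hu'
  obtain ⟨L', hlamL', hL'⟩ := exists_between hlamL
  obtain ⟨m, hm, hI⟩ :=
    exists_integral_log_norm_harperCocycle_le_of_lp hlam hα' hu hu' (sub_pos.2 hlamL')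
  rw [add_sub_cancel] at hI
  have hm' : (0 : ℝ) < m := by positivity
  obtain ⟨C, hC⟩ := exists_norm_harperCocycle_le_exp hlam hα' hL hm
    (hI.trans_lt (mul_lt_mul_of_pos_left hL' hm'))
  refine ⟨C, fun n k => ?_⟩
  rw [← norm_map_ofReal, map_transfer_amoPot]
  exact hC n _

end Transfer

/-! ### Reflection -/

section Reflection

variable {g : ℤ → ℝ} {E : ℝ}

theorem hasSum_sq_lp_two {ι : Type*} (u : lp (fun _ : ι => ℝ) 2) :
    HasSum (fun n => u n ^ 2) (‖u‖ ^ 2) := by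
  simpa using lp.hasSum_norm (by norm_num) u

theorem tendsto_cofinite_zero_of_summable_sq {ι : Type*} {φ : ι → ℝ}
    (hφ : Summable fun n => φ n ^ 2) : Tendsto φ cofinite (𝓝 0) := by
  have h := hφ.tendsto_cofinite_zero.sqrt
  simp only [sqrt_sq_eq_abs, sqrt_zero] at h
  exact (tendsto_zero_iff_abs_tendsto_zero φ).2 h

/-- The discrete Wronskian, whose vanishing at `n` says that the Cauchy data of `φ` and `ψ` at the
sites `n`, `n + 1` are proportional. -/
def wronskian (φ ψ : ℤ → ℝ) (n : ℤ) : ℝ := φ n * ψ (n + 1) - φ (n + 1) * ψ n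

theorem wronskian_sub_wronskian_add_one {g' φ ψ : ℤ → ℝ} (hφ : IsEigenfunction g E φ)
    (hψ : IsEigenfunction g' E ψ) (n : ℤ) :
    wronskian φ ψ n - wronskian φ ψ (n + 1) =
      (g' (n + 1) - g (n + 1)) * (φ (n + 1) * ψ (n + 1)) := by
  have hφ' := hφ (n + 1)
  have hψ' := hψ (n + 1)
  rw [add_sub_cancel_right] at hφ' hψ'
  simp only [wronskian]
  linear_combination ψ (n + 1) * hφ' - φ (n + 1) * hψ'

theorem tendsto_wronskian {φ ψ : ℤ → ℝ} (hφ : Tendsto φ cofinite (𝓝 0))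
    (hψ : Tendsto ψ cofinite (𝓝 0)) : Tendsto (wronskian φ ψ) cofinite (𝓝 0) := by
  have hinj := (add_left_injective (1 : ℤ)).tendsto_cofinite
  have h := (hφ.mul (hψ.comp hinj)).sub ((hφ.comp hinj).mul hψ)
  rwa [mul_zero, sub_zero] at h

theorem abs_le_tsum_of_abs_sub_le {f a : ℤ → ℝ} (hf : Tendsto f cofinite (𝓝 0)) (ha : Summable a)
    (h : ∀ n, |f (n - 1) - f n| ≤ a n) (n : ℤ) : |f n| ≤ ∑' j, a j := by
  have hinj : Function.Injective fun i : ℕ => n + (i : ℤ) :=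
    (add_right_injective n).comp Nat.cast_injective
  have hinj' : Function.Injective fun i : ℕ => n + (i : ℤ) + 1 :=
    (add_left_injective 1).comp hinj
  have hlim : Tendsto (fun i : ℕ => f (n + i)) atTop (𝓝 0) := by
    rw [← Nat.cofinite_eq_atTop]
    exact hf.comp hinj.tendsto_cofinite
  have hdist := dist_le_tsum_of_dist_le_of_tendsto₀ (fun i : ℕ => a (n + i + 1))
    (fun i => by simpa [dist_eq, ← add_assoc] using h (n + i + 1)) (ha.comp_injective hinj') hlim
  rw [Nat.cast_zero, add_zero, dist_zero_right, norm_eq_abs] at hdist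
  exact hdist.trans (tsum_comp_le_tsum_of_inj ha (fun j => (abs_nonneg _).trans (h j)) hinj')

theorem abs_wronskian_le {g' φ ψ : ℤ → ℝ} {e : ℝ} (hφ : IsEigenfunction g E φ)
    (hψ : IsEigenfunction g' E ψ) (hφ2 : Summable fun n => φ n ^ 2)
    (hψ2 : Summable fun n => ψ n ^ 2) (he : ∀ n, |g n - g' n| ≤ e) (n : ℤ) :
    |wronskian φ ψ n| ≤ e * ∑' j, (φ j ^ 2 + ψ j ^ 2) / 2 := by
  have hinc (j : ℤ) : |wronskian φ ψ (j - 1) - wronskian φ ψ j| ≤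
      e * ((φ j ^ 2 + ψ j ^ 2) / 2) := by
    have hW := wronskian_sub_wronskian_add_one hφ hψ (j - 1)
    have hAMGM := two_mul_le_add_sq |φ j| |ψ j|
    rw [sq_abs, sq_abs, mul_assoc, ← abs_mul] at hAMGM
    rw [sub_add_cancel] at hW
    rw [hW, abs_mul, abs_sub_comm]
    exact mul_le_mul (he j) ((le_div_iff₀' two_pos).2 hAMGM) (abs_nonneg _)
      ((abs_nonneg _).trans (he j))
  rw [← tsum_mul_left]
  exact abs_le_tsum_of_abs_sub_le (tendsto_wronskian
    (tendsto_cofinite_zero_of_summable_sq hφ2) (tendsto_cofinite_zero_of_summable_sq hψ2))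
    (((hφ2.add hψ2).div_const 2).mul_left e) hinc n

theorem isEigenfunction_reflect {φ : ℤ → ℝ} (hφ : IsEigenfunction g E φ) (k : ℤ) :
    IsEigenfunction (fun n => g (k - n)) E (fun n => φ (k - n)) := fun n => by
  have h := hφ (k - n)
  rw [sub_add, sub_sub] at h
  linarith

theorem abs_wronskian_reflect_le {u : lp (fun _ : ℤ => ℝ) 2} {e : ℝ} {k : ℤ}
    (hu : IsEigenfunction g E u) (he : ∀ n, |g n - g (k - n)| ≤ e) (n : ℤ) :
    |wronskian u (fun n => u (k - n)) n| ≤ e * ‖u‖ ^ 2 := by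
  have hs := hasSum_sq_lp_two u
  have hs' : HasSum (fun n => u (k - n) ^ 2) (‖u‖ ^ 2) := (Equiv.subLeft k).hasSum_iff.2 hs
  have h := abs_wronskian_le hu (isEigenfunction_reflect hu k) hs.summable hs'.summable he n
  rwa [((hs.add hs').div_const 2).tsum_eq, add_self_div_two] at h

theorem abs_le_sqrt_or_of_abs_mul_le {a b q : ℝ} (h : |a * b| ≤ q) : |a| ≤ √q ∨ |b| ≤ √q := by
  by_contra! hc
  have hq := mul_lt_mul'' hc.1 hc.2 (sqrt_nonneg q) (sqrt_nonneg q)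
  rw [mul_self_sqrt ((abs_nonneg _).trans h), ← abs_mul] at hq
  exact hq.not_ge h

/-- The values of `φ` at two consecutive sites, in the order on which `transfer` acts. -/
def cauchyData (φ : ℤ → ℝ) (n : ℤ) : Fin 2 → ℝ := ![φ (n + 1), φ n]

theorem norm_cauchyData_le_iff {φ : ℤ → ℝ} {n : ℤ} {r : ℝ} :
    ‖cauchyData φ n‖ ≤ r ↔ |φ n| ≤ r ∧ |φ (n + 1)| ≤ r := by
  simp [pi_norm_le_iff_of_nonempty, cauchyData, Fin.forall_fin_two, and_comm]

-- Around the centre of the reflection the Wronskian factors, so one of its factors is small.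
theorem exists_norm_cauchyData_add_reflect_two_mul_le {φ : ℤ → ℝ} (hφ : IsEigenfunction g E φ)
    (m : ℤ) {q : ℝ} (hW : |wronskian φ (fun n => φ (2 * m - n)) m| ≤ q) :
    ∃ σ : ℝ, |σ| = 1 ∧
      ‖cauchyData (fun n => φ n + σ * φ (2 * m - n)) m‖ ≤ (2 + |E - g m|) * √q := by
  have hs := sqrt_nonneg q
  have hQ := mul_nonneg (abs_nonneg (E - g m)) hs
  have hm : 2 * m - m = m := by ring
  have hm' : 2 * m - (m + 1) = m - 1 := by ring
  simp only [norm_cauchyData_le_iff, add_mul, wronskian, hm, hm'] at hW ⊢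
  rw [mul_comm (φ (m + 1)), ← mul_sub] at hW
  obtain h | h := abs_le_sqrt_or_of_abs_mul_le hW
  · refine ⟨1, abs_one, ?_, ?_⟩
    · rw [one_mul, ← two_mul, abs_mul, abs_two]
      linarith
    · have heq : φ (m + 1) + 1 * φ (m - 1) = (E - g m) * φ m := by linear_combination hφ m
      rw [heq, abs_mul]
      linarith [mul_le_mul_of_nonneg_left h (abs_nonneg (E - g m))]
  · refine ⟨-1, by simp, ?_, ?_⟩
    · rw [neg_one_mul, add_neg_cancel, abs_zero]
      positivity
    · rw [neg_one_mul, ← sub_eq_add_neg, abs_sub_comm]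
      linarith

theorem exists_norm_cauchyData_add_reflect_two_mul_add_one_le (φ : ℤ → ℝ) (m : ℤ) {q : ℝ}
    (hW : |wronskian φ (fun n => φ (2 * m + 1 - n)) m| ≤ q) :
    ∃ σ : ℝ, |σ| = 1 ∧ ‖cauchyData (fun n => φ n + σ * φ (2 * m + 1 - n)) m‖ ≤ √q := by
  have hm : 2 * m + 1 - m = m + 1 := by ring
  have hm' : 2 * m + 1 - (m + 1) = m := by ring
  simp only [norm_cauchyData_le_iff, wronskian, hm, hm'] at hW ⊢
  rw [mul_self_sub_mul_self] at hW
  obtain h | h := abs_le_sqrt_or_of_abs_mul_le hW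
  · refine ⟨1, abs_one, ?_, ?_⟩
    · rwa [one_mul]
    · rwa [one_mul, add_comm]
  · refine ⟨-1, by simp, ?_, ?_⟩
    · rwa [neg_one_mul, ← sub_eq_add_neg]
    · rwa [neg_one_mul, ← sub_eq_add_neg, abs_sub_comm]

theorem exists_norm_cauchyData_add_reflect_le {φ : ℤ → ℝ} (hφ : IsEigenfunction g E φ) (k : ℤ)
    {q : ℝ} (hW : |wronskian φ (fun n => φ (k - n)) (k / 2)| ≤ q) :
    ∃ σ : ℝ, |σ| = 1 ∧ ‖cauchyData (fun n => φ n + σ * φ (k - n)) (k / 2)‖ ≤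
      (2 + |E - g (k / 2)|) * √q := by
  obtain hk | hk : k = 2 * (k / 2) ∨ k = 2 * (k / 2) + 1 := by omega
  · generalize k / 2 = m at *
    subst hk
    exact exists_norm_cauchyData_add_reflect_two_mul_le hφ m hW
  · generalize k / 2 = m at *
    subst hk
    obtain ⟨σ, hσ, h⟩ := exists_norm_cauchyData_add_reflect_two_mul_add_one_le φ m hW
    have hone : 1 ≤ 2 + |E - g m| := by linarith [abs_nonneg (E - g m)]
    exact ⟨σ, hσ, h.trans (le_mul_of_one_le_left (sqrt_nonneg q) hone)⟩

theorem cauchyData_sub_stepMatrix_mulVec (φ : ℤ → ℝ) (n : ℤ) :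
    cauchyData φ (n + 1) - stepMatrix 1 E (g (n + 1)) *ᵥ cauchyData φ n =
      ![φ (n + 1 + 1) + φ n + g (n + 1) * φ (n + 1) - E * φ (n + 1), 0] := by
  ext i
  fin_cases i <;> simp [cauchyData, stepMatrix]
  ring

theorem norm_cauchyData_add_le {φ : ℤ → ℝ} {η B : ℝ} {n : ℕ}
    (hB : ∀ j ≤ n, ∀ k, ‖transfer g E j k‖ ≤ B)
    (hφ : ∀ j, |φ (j + 1) + φ (j - 1) + g j * φ j - E * φ j| ≤ η) (m : ℤ) :
    ‖cauchyData φ (m + n)‖ ≤ B * (‖cauchyData φ m‖ + n * η) := by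
  have hη : 0 ≤ η := (abs_nonneg _).trans (hφ 0)
  simp only [transfer_eq_cocycle] at hB
  have hP (j : ℕ) : ‖cauchyData φ (m + (j + 1 : ℕ)) -
      stepMatrix 1 E (g ((· + 1)^[j] (m + 1))) *ᵥ cauchyData φ (m + j)‖ ≤ η := by
    have hj := hφ (m + j + 1)
    rw [add_sub_cancel_right] at hj
    have hsite : (· + 1)^[j] (m + 1) = m + j + 1 := by
      simp only [add_right_iterate, nsmul_eq_mul, mul_one, add_right_comm m 1]
    rw [hsite, Nat.cast_succ, ← add_assoc, cauchyData_sub_stepMatrix_mulVec,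
      pi_norm_le_iff_of_nonneg hη]
    simpa [Fin.forall_fin_two, hη] using hj
  have herr := norm_sub_cocycle_mulVec_le n (fun j hj => hB j hj.le) (m + 1)
    (fun j => cauchyData φ (m + j)) fun j _ => hP j
  have hmain := (Matrix.linfty_opNorm_mulVec _ (cauchyData φ m)).trans
    (mul_le_mul_of_nonneg_right (hB n le_rfl (m + 1)) (norm_nonneg _))
  rw [Nat.cast_zero, add_zero] at herr
  linarith [norm_le_norm_add_norm_sub' (cauchyData φ (m + n)) (cocycle (· + 1)
    (fun j => stepMatrix 1 E (g j)) n (m + 1) *ᵥ cauchyData φ m)]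

theorem abs_sub_le_norm_transfer_one (g : ℤ → ℝ) (E : ℝ) (n : ℤ) :
    |E - g n| ≤ ‖transfer g E 1 n‖ := by
  simpa [transfer] using norm_entry_le_linfty_opNorm (transfer g E 1 n) 0 0

theorem add_reflect_equation {φ : ℤ → ℝ} (hφ : IsEigenfunction g E φ) (σ : ℝ) (k n : ℤ) :
    φ (n + 1) + σ * φ (k - (n + 1)) + (φ (n - 1) + σ * φ (k - (n - 1))) +
      g n * (φ n + σ * φ (k - n)) - E * (φ n + σ * φ (k - n)) =
      (g n - g (k - n)) * (σ * φ (k - n)) := by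
  linear_combination hφ n + σ * isEigenfunction_reflect hφ k n

theorem exists_norm_cauchyData_max_add_reflect_le {C L e : ℝ} (hL : 0 ≤ L)
    (hT : ∀ n k, ‖transfer g E n k‖ ≤ C * exp (n * L)) {u : lp (fun _ : ℤ => ℝ) 2}
    (hu : IsEigenfunction g E u) {k : ℤ} (he : ∀ n, |g n - g (k - n)| ≤ e) :
    ∃ σ : ℝ, |σ| = 1 ∧ ‖cauchyData (fun n => u n + σ * u (k - n)) (max 0 k)‖ ≤
      C * exp ((|(k : ℝ)| / 2 + 1) * L) *
        ((2 + C * exp L) * √e + (|(k : ℝ)| / 2 + 1) * e) * ‖u‖ := by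
  have he0 : 0 ≤ e := (abs_nonneg _).trans (he 0)
  have hC : 0 ≤ C := by simpa using (norm_nonneg _).trans (hT 0 0)
  have hpot : |E - g (k / 2)| ≤ C * exp L := by
    simpa using (abs_sub_le_norm_transfer_one g E (k / 2)).trans (hT 1 (k / 2))
  obtain ⟨σ, hσ, hmid⟩ := exists_norm_cauchyData_add_reflect_le hu k
    (abs_wronskian_reflect_le hu he (k / 2))
  refine ⟨σ, hσ, ?_⟩
  rw [sqrt_mul he0, sqrt_sq (norm_nonneg u)] at hmid
  obtain ⟨n, hn⟩ : ∃ n : ℕ, max 0 k = k / 2 + n := ⟨(max 0 k - k / 2).toNat, by omega⟩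
  have hnk : (n : ℝ) ≤ |(k : ℝ)| / 2 + 1 := by
    have h : 2 * (n : ℤ) ≤ |k| + 2 := by
      rcases abs_cases k with h | h <;> omega
    have h' : 2 * (n : ℝ) ≤ |(k : ℝ)| + 2 := by exact_mod_cast h
    linarith
  have herr (j : ℤ) : |u (j + 1) + σ * u (k - (j + 1)) + (u (j - 1) + σ * u (k - (j - 1))) +
      g j * (u j + σ * u (k - j)) - E * (u j + σ * u (k - j))| ≤ e * ‖u‖ := by
    rw [add_reflect_equation hu, abs_mul, abs_mul, hσ, one_mul]
    exact mul_le_mul (he j) (lp.norm_apply_le_norm two_ne_zero u _) (abs_nonneg _) he0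
  have hB : ∀ j ≤ n, ∀ i, ‖transfer g E j i‖ ≤ C * exp (n * L) := fun j hj i =>
    (hT j i).trans (by gcongr)
  rw [hn]
  calc ‖cauchyData (fun n => u n + σ * u (k - n)) (k / 2 + n)‖
      ≤ C * exp (n * L) * ((2 + |E - g (k / 2)|) * (√e * ‖u‖) + n * (e * ‖u‖)) :=
        (norm_cauchyData_add_le hB herr (k / 2)).trans (by gcongr)
    _ ≤ C * exp ((|(k : ℝ)| / 2 + 1) * L) *
          ((2 + C * exp L) * (√e * ‖u‖) + (|(k : ℝ)| / 2 + 1) * (e * ‖u‖)) := by gcongr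
    _ = _ := by ring

theorem tendsto_exp_mul_sqrt_add_mul_exp {L L' : ℝ} (hL : L < L') (hL' : 0 < L') (Q : ℝ) {c : ℝ}
    (hc : 0 ≤ c) :
    Tendsto (fun x : ℝ => exp ((x / 2 + 1) * L) *
      (Q * √(c * exp (-L' * x)) + (x / 2 + 1) * (c * exp (-L' * x)))) atTop (𝓝 0) := by
  have h0 (b : ℝ) (hb : 0 < b) : Tendsto (fun x : ℝ => exp (-b * x)) atTop (𝓝 0) := by
    simpa using tendsto_rpow_mul_exp_neg_mul_atTop_nhds_zero 0 b hb
  have h1 (b : ℝ) (hb : 0 < b) : Tendsto (fun x : ℝ => x * exp (-b * x)) atTop (𝓝 0) := by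
    simpa using tendsto_rpow_mul_exp_neg_mul_atTop_nhds_zero 1 b hb
  have hb : 0 < (L' - L) / 2 := by linarith
  have hb' : 0 < L' - L / 2 := by linarith
  have h := ((h0 _ hb).const_mul (exp L * Q * √c)).add
    ((((h1 _ hb').const_mul (1 / 2)).add (h0 _ hb')).const_mul (exp L * c))
  simp only [mul_zero, add_zero] at h
  refine h.congr fun x => ?_
  have hexp : exp ((x / 2 + 1) * L) * exp (-L' * x / 2) = exp L * exp (-((L' - L) / 2) * x) := by
    rw [← exp_add, ← exp_add]
    congr 1
    ring
  have hexp' : exp ((x / 2 + 1) * L) * exp (-L' * x) = exp L * exp (-(L' - L / 2) * x) := by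
    rw [← exp_add, ← exp_add]
    congr 1
    ring
  rw [sqrt_mul hc, ← exp_half]
  linear_combination -Q * √c * hexp - (x / 2 + 1) * c * hexp'

theorem eq_zero_of_eq_zero_of_add_one_eq_zero {φ : ℤ → ℝ} (hφ : IsEigenfunction g E φ) {m : ℤ}
    (h0 : φ m = 0) (h1 : φ (m + 1) = 0) : φ = 0 := by
  suffices h : ∀ n, φ n = 0 ∧ φ (n + 1) = 0 from funext fun n => (h n).1
  intro n
  induction n using Int.inductionOn' with
  | b => exact m
  | zero => exact ⟨h0, h1⟩
  | succ n _ ih =>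
    have h := hφ (n + 1)
    rw [add_sub_cancel_right, ih.1, ih.2] at h
    exact ⟨ih.2, by simpa using h⟩
  | pred n _ ih =>
    have h := hφ n
    rw [ih.1, ih.2] at h
    exact ⟨by simpa using h, by simpa using ih.1⟩

-- For `k ≥ 0` the sites `k`, `k + 1` are reflected to `0`, `-1`; for `k ≤ 0` the sites `0`, `1`
-- are reflected to `k`, `k - 1`.
theorem abs_le_of_norm_cauchyData_max_add_reflect_le {φ : ℤ → ℝ} {σ r : ℝ} {k : ℤ} (hσ : |σ| = 1)
    (h : ‖cauchyData (fun n => φ n + σ * φ (k - n)) (max 0 k)‖ ≤ r) :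
    |φ 0| ≤ r + |φ k| ∧ (|φ (-1)| ≤ r + |φ (k + 1)| ∨ |φ 1| ≤ r + |φ (k - 1)|) := by
  have hl {a b : ℝ} (hab : |a + σ * b| ≤ r) : |a| ≤ r + |b| := by
    have := abs_sub_abs_le_abs_add a (σ * b)
    rw [abs_mul, hσ, one_mul] at this
    linarith
  have hr {a b : ℝ} (hab : |a + σ * b| ≤ r) : |b| ≤ r + |a| := by
    have := abs_sub_abs_le_abs_add (σ * b) a
    rw [abs_mul, hσ, one_mul, add_comm (σ * b)] at this
    linarith
  rw [norm_cauchyData_le_iff] at h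
  obtain hk | hk := le_total 0 k
  · simp only [max_eq_right hk, sub_self, sub_add_cancel_left] at h
    exact ⟨hr h.1, Or.inl (hr h.2)⟩
  · simp only [max_eq_left hk, sub_zero, zero_add] at h
    exact ⟨hl h.1, Or.inr (hl h.2)⟩

theorem eq_zero_of_frequently_abs_sub_reflect_le {C L L' c : ℝ} (hL : 0 ≤ L) (hLL' : L < L')
    (hT : ∀ n k, ‖transfer g E n k‖ ≤ C * exp (n * L))
    (hg : ∃ᶠ k : ℤ in cofinite, ∀ n, |g n - g (k - n)| ≤ c * exp (-L' * |(k : ℝ)|))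
    {u : lp (fun _ : ℤ => ℝ) 2} (hu : IsEigenfunction g E u) : u = 0 := by
  have hc : 0 ≤ c := by
    obtain ⟨k, hk⟩ := hg.exists
    exact nonneg_of_mul_nonneg_left ((abs_nonneg _).trans (hk 0)) (exp_pos _)
  set R : ℝ → ℝ := fun x => C * (exp ((x / 2 + 1) * L) * ((2 + C * exp L) *
    √(c * exp (-L' * x)) + (x / 2 + 1) * (c * exp (-L' * x)))) * ‖u‖ with hRdef
  have hR : Tendsto (fun k : ℤ => R |(k : ℝ)|) cofinite (𝓝 0) := by
    have h := ((tendsto_exp_mul_sqrt_add_mul_exp hLL' (hL.trans_lt hLL') (2 + C * exp L)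
      hc).const_mul C).mul_const ‖u‖
    rw [mul_zero, zero_mul] at h
    exact h.comp ((tendsto_norm_cocompact_atTop (E := ℝ)).comp Int.tendsto_coe_cofinite)
  have hlim {f : ℤ → ℤ} (hf : Function.Injective f) :
      Tendsto (fun k : ℤ => R |(k : ℝ)| + |u (f k)|) cofinite (𝓝 0) := by
    have h := tendsto_cofinite_zero_of_summable_sq (hasSum_sq_lp_two u).summable
    simpa using hR.add (h.comp hf.tendsto_cofinite).abs
  have hfreq : ∃ᶠ k : ℤ in cofinite, |u 0| ≤ R |(k : ℝ)| + |u k| ∧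
      (|u (-1)| ≤ R |(k : ℝ)| + |u (k + 1)| ∨ |u 1| ≤ R |(k : ℝ)| + |u (k - 1)|) := by
    refine hg.mono fun k hk => ?_
    obtain ⟨σ, hσ, h⟩ := exists_norm_cauchyData_max_add_reflect_le hL hT hu hk
    exact abs_le_of_norm_cauchyData_max_add_reflect_le hσ (h.trans_eq (by simp only [hRdef]; ring))
  have hu0 : u 0 = 0 := abs_nonpos_iff.1 <|
    ge_of_tendsto_of_frequently (hlim Function.injective_id) (hfreq.mono fun k hk => hk.1)
  refine lp.ext ?_
  obtain h | h := frequently_or_distrib.1 (hfreq.mono fun k hk => hk.2)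
  · have hu1 : u (-1) = 0 := abs_nonpos_iff.1 <|
      ge_of_tendsto_of_frequently (hlim (add_left_injective 1)) h
    exact eq_zero_of_eq_zero_of_add_one_eq_zero hu hu1 hu0
  · have hu1 : u 1 = 0 := abs_nonpos_iff.1 <|
      ge_of_tendsto_of_frequently (hlim sub_left_injective) h
    exact eq_zero_of_eq_zero_of_add_one_eq_zero hu hu0 hu1

end Reflection

section Potential

theorem distToInt_nonneg (x : ℝ) : 0 ≤ distToInt x := abs_nonneg _

theorem abs_sin_pi_mul_le (x : ℝ) : |sin (π * x)| ≤ π * distToInt x := by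
  have hx : π * x = π * (x - round x) + round x * π := by ring
  rw [hx, sin_add_int_mul_pi, abs_mul, abs_neg_one_zpow, one_mul]
  exact abs_sin_le_abs.trans_eq (by rw [abs_mul, abs_of_pos pi_pos, distToInt])

theorem abs_amoPot_sub_reflect_le (lam α θ : ℝ) (k n : ℤ) :
    |amoPot lam α θ n - amoPot lam α θ (k - n)| ≤
      4 * |lam| * π * distToInt (2 * θ + k * α) := by
  have hmean : (2 * π * (θ + n * α) + 2 * π * (θ + (k - n : ℤ) * α)) / 2 =
      π * (2 * θ + k * α) := by
    push_cast
    ring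
  simp only [amoPot]
  rw [← mul_sub, cos_sub_cos, hmean]
  set s := sin ((2 * π * (θ + n * α) - 2 * π * (θ + (k - n : ℤ) * α)) / 2)
  calc |2 * lam * (-2 * sin (π * (2 * θ + k * α)) * s)|
      = 4 * |lam| * (|sin (π * (2 * θ + k * α))| * |s|) := by
        simp only [abs_mul, abs_neg, abs_two]
        ring
    _ ≤ 4 * |lam| * (π * distToInt (2 * θ + k * α)) := by
        refine mul_le_mul_of_nonneg_left ?_ (by positivity)
        exact (mul_le_of_le_one_right (abs_nonneg _) (abs_sin_le_one _)).trans (abs_sin_pi_mul_le _)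
    _ = _ := by ring

theorem exists_frequently_distToInt_le_exp {α θ L₀ : ℝ} (hL₀ : 0 ≤ L₀)
    (h : L₀ < deltaPhase α θ) : ∃ L > L₀,
      ∃ᶠ k : ℤ in cofinite, distToInt (2 * θ + k * α) ≤ exp (-L * |(k : ℝ)|) := by
  have hnonneg (k : ℤ) : 0 ≤ -log (distToInt (2 * θ + k * α)) / |(k : ℝ)| := by
    have hle : distToInt (2 * θ + k * α) ≤ 1 := (abs_sub_round _).trans (by norm_num)
    exact div_nonneg (neg_nonneg.2 (log_nonpos (distToInt_nonneg _) hle)) (abs_nonneg _)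
  obtain ⟨L, hL, hLδ⟩ := exists_between h
  refine ⟨L, hL, (frequently_lt_of_lt_limsup (isCoboundedUnder_le_of_le cofinite hnonneg) hLδ).mono
    fun k hk => ?_⟩
  have hk0 : 0 < |(k : ℝ)| := by
    by_contra! h0
    rw [le_antisymm h0 (abs_nonneg _), div_zero] at hk
    exact hk.not_ge (hL₀.trans hL.le)
  obtain h0 | h0 := (distToInt_nonneg (2 * θ + k * α)).eq_or_lt
  · rw [← h0]
    positivity
  · rw [lt_div_iff₀ hk0] at hk
    exact (log_le_iff_le_exp h0).1 (by linarith)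

end Potential

end AlmostMathieu

open AlmostMathieu

theorem IsDiophantine.irrational {α : ℝ} (hα : IsDiophantine α) : Irrational α := by
  rintro ⟨q, rfl⟩
  obtain ⟨κ, τ, -, hτ, h⟩ := hα
  have hden : (0 : ℝ) < |((q.den : ℤ) : ℝ)| := by simp [q.den_pos]
  have hzero : distToInt ((q.den : ℤ) * (q : ℝ)) = 0 := by
    have hnum : ((q.den : ℤ) : ℝ) * q = (q.num : ℤ) := by exact_mod_cast q.den_mul_eq_num
    rw [hnum, distToInt, round_intCast, sub_self, abs_zero]
  have hle := h q.den (by exact_mod_cast q.den_nz)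
  rw [hzero] at hle
  exact hle.not_gt (div_pos hτ (rpow_pos_of_pos hden κ))

theorem amo_no_point_spectrum_general {lam α θ L : ℝ} (hlam : lam ≠ 0) (hα : Irrational α)
    (hL : 0 < L) (hlamL : log |lam| < L)
    (hθ : ∃ᶠ k : ℤ in cofinite, distToInt (2 * θ + k * α) ≤ exp (-L * |(k : ℝ)|)) {E : ℝ}
    {u : lp (fun _ : ℤ => ℝ) 2} (hu : IsEigenfunction (amoPot lam α θ) E u) : u = 0 := by
  by_contra hne
  obtain ⟨L', hL', hL'L⟩ := exists_between (max_lt hL hlamL)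
  have hL'0 : 0 ≤ L' := (le_max_left _ _).trans hL'.le
  obtain ⟨C, hC⟩ :=
    exists_norm_transfer_amoPot_le hlam hα hL'0 ((le_max_right _ _).trans_lt hL') hne hu
  refine hne (eq_zero_of_frequently_abs_sub_reflect_le (c := 4 * |lam| * π) hL'0 hL'L hC ?_ hu)
  refine hθ.mono fun k hk n => (abs_amoPot_sub_reflect_le lam α θ k n).trans ?_
  gcongr

theorem amo_no_point_spectrum
    (lam α θ : ℝ) (hlam : 1 < lam) (hα : IsDiophantine α)
    (hδ : Real.log lam < deltaPhase α θ)
    (E : ℝ) (u : lp (fun _ : ℤ => ℝ) 2)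
    (hu : IsEigenfunction (amoPot lam α θ) E (fun n => u n)) :
    u = 0 := by
  obtain ⟨L, hL, hfreq⟩ := exists_frequently_distToInt_le_exp (log_nonneg hlam.le) hδ
  exact amo_no_point_spectrum_general (zero_lt_one.trans hlam).ne' hα.irrational
    ((log_pos hlam).trans hL) (by rwa [log_abs]) hfreq hu
end
end

section
/- Let λ > 1, let α be Diophantine, and let θ ∈ ℝ satisfy 0 < δ(α,θ) < ln λ. Then the almost Mathieu operator H_{λ,α,θ} does not have SULE. -/
noncomputable section

open Filter Real

/-!
If `0 < c < δ(α, θ)`, then for infinitely many `n` the potential is symmetric under `j ↦ n - j` up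
to an error `exp (-c |n| / 2)`. The Wronskian of an eigenfunction with its reflection then varies
little, and it tends to `0` at infinity, so it is exponentially small in `|n|`. At the centre
`n / 2` this makes every normalized eigenfunction `φ` almost symmetric or almost antisymmetric, and
the eigenvalue equation propagates the symmetry to the site `m = n / 2 + t` with `t ≈ η |n|`, for a
small `η`. Thus `φ(m)²` is at most `|φ(m) φ(n - m)|` up to an exponentially small error, and SULE
makes this product exponentially small as well, uniformly over the eigenfunctions. This contradicts
completeness: under SULE, Parseval's identity at `m` provides, for every `κ > 0` and all large
`|n|`, an eigenfunction with `|φ(m)| ≥ exp (-κ |n|)`.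
-/

open scoped Topology

section HilbertBasis

variable {ι κ : Type*}

lemma summable_abs_mul_and_tsum_le {a b : ι → ℝ} {A B : ℝ}
    (ha : HasSum (fun i => a i ^ 2) A) (hb : HasSum (fun i => b i ^ 2) B) :
    Summable (fun i => |a i * b i|) ∧ ∑' i, |a i * b i| ≤ (A + B) / 2 := by
  have hmean : HasSum (fun i => (a i ^ 2 + b i ^ 2) / 2) ((A + B) / 2) := (ha.add hb).div_const 2
  have hle (i : ι) : |a i * b i| ≤ (a i ^ 2 + b i ^ 2) / 2 := by
    rw [abs_mul, ← sq_abs (a i), ← sq_abs (b i)]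
    linarith [two_mul_le_add_sq |a i| |b i|]
  have hsum := hmean.summable.of_nonneg_of_le (fun i => abs_nonneg _) hle
  exact ⟨hsum, hasSum_le hle hsum.hasSum hmean⟩

lemma hasSum_sq_coe_lp (u : lp (fun _ : κ => ℝ) 2) : HasSum (fun k => u k ^ 2) (‖u‖ ^ 2) := by
  simpa only [real_inner_self_eq_norm_sq, Real.norm_eq_abs, sq_abs] using
    lp.hasSum_inner (𝕜 := ℝ) u u

lemma abs_coe_lp_le_norm (u : lp (fun _ : κ => ℝ) 2) (k : κ) : |u k| ≤ ‖u‖ :=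
  lp.norm_apply_le_norm two_ne_zero u k

lemma hasSum_sq_hilbertBasis_apply (Φ : HilbertBasis ι ℝ (lp (fun _ : κ => ℝ) 2)) (m : κ) :
    HasSum (fun s => Φ s m ^ 2) 1 := by
  classical
  have hparseval := Φ.hasSum_inner_mul_inner (lp.single 2 m (1 : ℝ)) (lp.single 2 m (1 : ℝ))
  simpa [lp.inner_single_left, lp.inner_single_right, ← sq] using hparseval

/- Normalization in both indices gives `1 = ∑ₛ Φₛ(m)² = ∑ₖ ∑ₛ (Φₛ(m) Φₛ(k))²`, where one factor
`|Φₛ(m) Φₛ(k)|` is bounded by `w k` and the other is summed over `s` by Cauchy–Schwarz. -/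
lemma one_le_of_abs_mul_le_of_hasSum (Φ : HilbertBasis ι ℝ (lp (fun _ : κ => ℝ) 2)) {m : κ}
    {w : κ → ℝ} {W : ℝ} (hle : ∀ s k, |Φ s m * Φ s k| ≤ w k) (hw : HasSum w W) : 1 ≤ W := by
  obtain ⟨s₀⟩ : Nonempty ι := by
    by_contra hempty
    rw [not_nonempty_iff] at hempty
    exact one_ne_zero ((hasSum_sq_hilbertBasis_apply Φ m).unique hasSum_empty)
  refine hasSum_le_of_sum_le (hasSum_sq_hilbertBasis_apply Φ m) fun S => ?_
  have hexpand (s : ι) : HasSum (fun k => (Φ s m * Φ s k) ^ 2) (Φ s m ^ 2) := by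
    simpa only [mul_pow, Φ.orthonormal.1 s, one_pow, mul_one] using
      (hasSum_sq_coe_lp (Φ s)).mul_left (Φ s m ^ 2)
  refine hasSum_le (fun k => ?_) (hasSum_sum fun s _ => hexpand s) hw
  have hcauchy : ∑ s ∈ S, |Φ s m * Φ s k| ≤ 1 := by
    obtain ⟨hsum, hle_one⟩ := summable_abs_mul_and_tsum_le
      (hasSum_sq_hilbertBasis_apply Φ m) (hasSum_sq_hilbertBasis_apply Φ k)
    rw [add_self_div_two] at hle_one
    exact (hsum.sum_le_tsum S fun s _ => abs_nonneg _).trans hle_one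
  calc ∑ s ∈ S, (Φ s m * Φ s k) ^ 2
      ≤ ∑ s ∈ S, w k * |Φ s m * Φ s k| := by
        refine Finset.sum_le_sum fun s _ => ?_
        rw [← sq_abs, sq]
        exact mul_le_mul_of_nonneg_right (hle s k) (abs_nonneg _)
    _ = w k * ∑ s ∈ S, |Φ s m * Φ s k| := (Finset.mul_sum ..).symm
    _ ≤ w k := mul_le_of_le_one_right ((abs_nonneg _).trans (hle s₀ k)) hcauchy

end HilbertBasis

section Reflection

variable {g φ : ℤ → ℝ} {E L b : ℝ} {n : ℤ}

lemma IsEigenfunction.abs_eigenvalue_le {G : ℝ} (h : IsEigenfunction g E φ)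
    (hg : ∀ j, |g j| ≤ G) (hbdd : BddAbove (Set.range fun j => |φ j|)) (hne : φ ≠ 0) :
    |E| ≤ 2 + G := by
  set S := ⨆ j, |φ j| with hS
  have hle (j : ℤ) : |φ j| ≤ S := le_ciSup hbdd j
  have hSpos : 0 < S := by
    obtain ⟨j, hj⟩ := Function.ne_iff.1 hne
    exact (abs_pos.2 hj).trans_le (hle j)
  have hbound (j : ℤ) : |E| * |φ j| ≤ (2 + G) * S := by
    have hpot : |g j * φ j| ≤ G * S := by
      rw [abs_mul]
      exact mul_le_mul (hg j) (hle j) (abs_nonneg _) ((abs_nonneg _).trans (hg j))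
    calc |E| * |φ j| = |φ (j + 1) + φ (j - 1) + g j * φ j| := by rw [h j, abs_mul]
      _ ≤ |φ (j + 1)| + |φ (j - 1)| + |g j * φ j| := abs_add_three _ _ _
      _ ≤ (2 + G) * S := by linarith [hle (j + 1), hle (j - 1)]
  have hES : |E| * S ≤ (2 + G) * S := by
    rw [hS, Real.mul_iSup_of_nonneg (abs_nonneg E)]
    exact ciSup_le hbound
  exact le_of_mul_le_mul_right hES hSpos

/-- The Wronskian at `p` of `φ` and its reflection `j ↦ φ (n - j)`; it is constant in `p` when `φ`
is an eigenfunction of a potential that is invariant under `j ↦ n - j`. -/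
def reflectedWronskian (φ : ℤ → ℝ) (n p : ℤ) : ℝ :=
  φ (p + 1) * φ (n - p) - φ p * φ (n - (p + 1))

/-- The failure at `j` of `φ` to be symmetric (`σ = 1`) or antisymmetric (`σ = -1`) under
`j ↦ n - j`. -/
def reflectionDefect (φ : ℤ → ℝ) (n : ℤ) (σ : ℝ) (j : ℤ) : ℝ :=
  φ j - σ * φ (n - j)

lemma IsEigenfunction.eigen_eq_add_one (h : IsEigenfunction g E φ) (j : ℤ) :
    φ (j + 1 + 1) + φ j + g (j + 1) * φ (j + 1) = E * φ (j + 1) := by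
  simpa only [add_sub_cancel_right] using h (j + 1)

lemma IsEigenfunction.eigen_eq_reflection (h : IsEigenfunction g E φ) (n j : ℤ) :
    φ (n - j) + φ (n - (j + 1 + 1)) + g (n - (j + 1)) * φ (n - (j + 1)) =
      E * φ (n - (j + 1)) := by
  simpa only [show n - (j + 1) + 1 = n - j by ring, show n - (j + 1) - 1 = n - (j + 1 + 1) by ring]
    using h (n - (j + 1))

lemma IsEigenfunction.reflectedWronskian_succ_sub (h : IsEigenfunction g E φ) (n j : ℤ) :
    reflectedWronskian φ n (j + 1) - reflectedWronskian φ n j =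
      (g (n - (j + 1)) - g (j + 1)) * (φ (j + 1) * φ (n - (j + 1))) := by
  simp only [reflectedWronskian]
  linear_combination φ (n - (j + 1)) * h.eigen_eq_add_one j - φ (j + 1) * h.eigen_eq_reflection n j

lemma IsEigenfunction.reflectionDefect_succ_succ (h : IsEigenfunction g E φ) (n : ℤ) (σ : ℝ)
    (j : ℤ) :
    reflectionDefect φ n σ (j + 1 + 1) =
      (E - g (j + 1)) * reflectionDefect φ n σ (j + 1) - reflectionDefect φ n σ j
        + σ * ((g (n - (j + 1)) - g (j + 1)) * φ (n - (j + 1))) := by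
  simp only [reflectionDefect]
  linear_combination h.eigen_eq_add_one j - σ * h.eigen_eq_reflection n j

lemma tendsto_reflectedWronskian_cofinite (hφ : Tendsto φ cofinite (𝓝 0)) (n : ℤ) :
    Tendsto (reflectedWronskian φ n) cofinite (𝓝 0) := by
  have hsucc : Tendsto (fun j : ℤ => j + 1) cofinite cofinite :=
    (add_left_injective 1).tendsto_cofinite
  have hrefl : Tendsto (fun j : ℤ => φ (n - j)) cofinite (𝓝 0) :=
    hφ.comp (sub_right_injective (b := n)).tendsto_cofinite
  simpa only [mul_zero, zero_mul, sub_zero, Function.comp_def] using!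
    ((hφ.comp hsucc).mul hrefl).sub (hφ.mul (hrefl.comp hsucc))

lemma tendsto_coe_lp_cofinite (u : lp (fun _ : ℤ => ℝ) 2) : Tendsto u cofinite (𝓝 0) := by
  have hsqrt := (hasSum_sq_coe_lp u).summable.tendsto_cofinite_zero.sqrt
  simp only [Real.sqrt_sq_eq_abs, Real.sqrt_zero] at hsqrt
  exact (tendsto_zero_iff_abs_tendsto_zero _).2 hsqrt

lemma abs_reflectedWronskian_le {u : lp (fun _ : ℤ => ℝ) 2} {β : ℝ} (h : IsEigenfunction g E u)
    (hβ : ∀ j, |g (n - j) - g j| ≤ β) (p : ℤ) : |reflectedWronskian u n p| ≤ β * ‖u‖ ^ 2 := by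
  have hβ0 : 0 ≤ β := (abs_nonneg _).trans (hβ 0)
  obtain ⟨hsum, hsum_le⟩ := summable_abs_mul_and_tsum_le (hasSum_sq_coe_lp u)
    ((Equiv.subLeft n).hasSum_iff.2 (hasSum_sq_coe_lp u))
  rw [add_self_div_two] at hsum_le
  have hinj : Function.Injective fun T : ℕ => p + T + 1 := fun a b hab => by simpa using hab
  have hstep (T : ℕ) :
      dist (reflectedWronskian u n (p + T)) (reflectedWronskian u n (p + T.succ)) ≤
        β * |u (p + T + 1) * u (n - (p + T + 1))| := by
    rw [dist_comm, Real.dist_eq, Nat.cast_succ, ← add_assoc, h.reflectedWronskian_succ_sub, abs_mul]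
    exact mul_le_mul_of_nonneg_right (hβ _) (abs_nonneg _)
  have hlim : Tendsto (fun T : ℕ => reflectedWronskian u n (p + T)) atTop (𝓝 0) := by
    have hshift : Function.Injective fun T : ℕ => p + (T : ℤ) := fun a b hab => by simpa using hab
    rw [← Nat.cofinite_eq_atTop]
    exact (tendsto_reflectedWronskian_cofinite (tendsto_coe_lp_cofinite u) n).comp
      hshift.tendsto_cofinite
  calc |reflectedWronskian u n p|
      ≤ ∑' T : ℕ, β * |u (p + T + 1) * u (n - (p + T + 1))| := by
        simpa using dist_le_tsum_of_dist_le_of_tendsto₀ _ hstep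
          ((hsum.comp_injective hinj).mul_left β) hlim
    _ = β * ∑' T : ℕ, |u (p + T + 1) * u (n - (p + T + 1))| := tsum_mul_left
    _ ≤ β * ‖u‖ ^ 2 := mul_le_mul_of_nonneg_left
        ((tsum_comp_le_tsum_of_inj hsum (fun _ => abs_nonneg _) hinj).trans hsum_le) hβ0

lemma abs_le_or_abs_le_of_abs_mul_le_sq {x y : ℝ} (hb : 0 ≤ b) (h : |x * y| ≤ b ^ 2) :
    |x| ≤ b ∨ |y| ≤ b := by
  rw [abs_mul, sq] at h
  by_contra! hlt
  exact (mul_lt_mul'' hlt.1 hlt.2 hb hb).not_ge h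

/- At the centre of reflection the Wronskian factors into a part that vanishes for symmetric `φ` and
one that vanishes for antisymmetric `φ`; the factor that is small determines `σ`. -/
lemma IsEigenfunction.exists_sign_reflectionDefect_center_le (h : IsEigenfunction g E φ)
    (hL : ∀ j, |E - g j| ≤ L) (hb : 0 ≤ b) (hW : |reflectedWronskian φ n (n / 2)| ≤ b ^ 2) :
    ∃ σ : ℝ, |σ| = 1 ∧ |reflectionDefect φ n σ (n / 2)| ≤ (L + 2) * b ∧
      |reflectionDefect φ n σ (n / 2 + 1)| ≤ (L + 2) * b := by
  have hLb : 0 ≤ L * b := mul_nonneg ((abs_nonneg _).trans (hL 0)) hb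
  obtain ⟨p, hp | hp⟩ := Int.even_or_odd' n
  · obtain ⟨hcenter, hfix, hswap⟩ : n / 2 = p ∧ n - p = p ∧ n - (p + 1) = p - 1 := by omega
    simp only [reflectedWronskian, reflectionDefect, hcenter, hfix, hswap] at hW ⊢
    rw [show φ (p + 1) * φ p - φ p * φ (p - 1) = φ p * (φ (p + 1) - φ (p - 1)) by ring] at hW
    rcases abs_le_or_abs_le_of_abs_mul_le_sq hb hW with hval | hdiff
    · refine ⟨-1, by simp, ?_, ?_⟩
      · rw [show φ p - -1 * φ p = 2 * φ p by ring, abs_mul, abs_two]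
        linarith
      · rw [show φ (p + 1) - -1 * φ (p - 1) = (E - g p) * φ p by linear_combination h p, abs_mul]
        linarith [mul_le_mul (hL p) hval (abs_nonneg _) ((abs_nonneg _).trans (hL p))]
    · refine ⟨1, abs_one, ?_, ?_⟩ <;> rw [one_mul]
      · rw [sub_self, abs_zero]
        linarith
      · linarith
  · obtain ⟨hcenter, hswap, hswap'⟩ : n / 2 = p ∧ n - p = p + 1 ∧ n - (p + 1) = p := by omega
    simp only [reflectedWronskian, reflectionDefect, hcenter, hswap, hswap'] at hW ⊢
    rw [mul_self_sub_mul_self, mul_comm] at hW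
    rcases abs_le_or_abs_le_of_abs_mul_le_sq hb hW with hdiff | hsum
    · refine ⟨1, abs_one, ?_, ?_⟩ <;> rw [one_mul]
      · rw [abs_sub_comm]
        linarith
      · linarith
    · refine ⟨-1, by simp, ?_, ?_⟩ <;> rw [neg_one_mul, sub_neg_eq_add]
      · rw [add_comm]
        linarith
      · linarith

lemma le_pow_mul_of_two_step_recurrence {d : ℕ → ℝ} (hL : 0 ≤ L) (hb : 0 ≤ b)
    (h0 : d 0 ≤ (L + 2) * b) (h1 : d 1 ≤ (L + 2) * b)
    (hrec : ∀ t, d (t + 2) ≤ L * d (t + 1) + d t + b) (t : ℕ) : d t ≤ (L + 2) ^ (t + 1) * b := by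
  suffices hpair : d t ≤ (L + 2) ^ (t + 1) * b ∧ d (t + 1) ≤ (L + 2) ^ (t + 1) * b from hpair.1
  induction t with
  | zero => simpa using ⟨h0, h1⟩
  | succ t ih =>
    obtain ⟨ih₀, ih₁⟩ := ih
    have hb_le : b ≤ (L + 2) ^ (t + 1) * b :=
      le_mul_of_one_le_left hb (one_le_pow₀ (by linarith))
    have hLX := mul_le_mul_of_nonneg_left ih₁ hL
    have hLX0 : 0 ≤ L * ((L + 2) ^ (t + 1) * b) := by positivity
    rw [pow_succ' _ (t + 1), mul_assoc]
    constructor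
    · linarith
    · linarith [hrec t]

lemma abs_le_abs_reflection_add {u : lp (fun _ : ℤ => ℝ) 2} (h : IsEigenfunction g E u)
    (hL : ∀ j, |E - g j| ≤ L) (hb0 : 0 ≤ b) (hb1 : b ≤ 1)
    (hrefl : ∀ j, |g (n - j) - g j| ≤ b ^ 2) (t : ℕ) :
    |u (n / 2 + t)| ≤ |u (n - (n / 2 + t))| + (L + 2) ^ (t + 1) * (b * ‖u‖) := by
  have hbu : 0 ≤ b * ‖u‖ := by positivity
  have hW := abs_reflectedWronskian_le h hrefl (n / 2)
  rw [← mul_pow] at hW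
  obtain ⟨σ, hσ, h0, h1⟩ := h.exists_sign_reflectionDefect_center_le hL hbu hW
  have hforcing (j : ℤ) : |σ * ((g (n - j) - g j) * u (n - j))| ≤ b * ‖u‖ := by
    rw [abs_mul, hσ, one_mul, abs_mul]
    have hb_sq : b ^ 2 ≤ b := by nlinarith
    exact mul_le_mul ((hrefl j).trans hb_sq) (abs_coe_lp_le_norm u _) (abs_nonneg _) hb0
  have hrec (j : ℤ) : |reflectionDefect u n σ (j + 1 + 1)| ≤
      L * |reflectionDefect u n σ (j + 1)| + |reflectionDefect u n σ j| + b * ‖u‖ := by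
    rw [h.reflectionDefect_succ_succ]
    refine (abs_add_le _ _).trans (add_le_add ((abs_sub _ _).trans ?_) (hforcing _))
    rw [abs_mul]
    gcongr
    exact hL _
  have hdefect : |reflectionDefect u n σ (n / 2 + t)| ≤ (L + 2) ^ (t + 1) * (b * ‖u‖) := by
    refine le_pow_mul_of_two_step_recurrence
      (d := fun t : ℕ => |reflectionDefect u n σ (n / 2 + t)|)
      ((abs_nonneg _).trans (hL 0)) hbu (by simpa using h0) (by simpa using h1) (fun t => ?_) t
    simpa [add_assoc] using hrec (n / 2 + t)
  have htri : |u (n / 2 + t)| ≤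
      |reflectionDefect u n σ (n / 2 + t)| + |σ * u (n - (n / 2 + t))| := by
    simpa [reflectionDefect] using
      abs_add_le (reflectionDefect u n σ (n / 2 + t)) (σ * u (n - (n / 2 + t)))
  rw [abs_mul, hσ, one_mul] at htri
  linarith

lemma abs_le_abs_reflection_add_of_bounded {u : lp (fun _ : ℤ => ℝ) 2} {G c : ℝ}
    (h : IsEigenfunction g E u) (hu : ‖u‖ = 1) (hg : ∀ j, |g j| ≤ G) (hc : 0 ≤ c)
    (hrefl : ∀ j, |g (n - j) - g j| ≤ exp (-c * |(n : ℝ)|)) (t : ℕ) :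
    |u (n / 2 + t)| ≤ |u (n - (n / 2 + t))| +
      (2 * G + 4) ^ (t + 1) * exp (-(c / 2) * |(n : ℝ)|) := by
  have hE : |E| ≤ 2 + G := by
    refine h.abs_eigenvalue_le hg ⟨‖u‖, ?_⟩ fun hzero => ?_
    · rintro _ ⟨j, rfl⟩
      exact abs_coe_lp_le_norm u j
    · rw [lp.eq_zero_iff_coeFn_eq_zero.2 hzero, norm_zero] at hu
      exact zero_ne_one hu
  have hEg (j : ℤ) : |E - g j| ≤ 2 * G + 2 := by
    linarith [abs_sub E (g j), hg j]
  have hsqrt : exp (-c * |(n : ℝ)|) = exp (-(c / 2) * |(n : ℝ)|) ^ 2 := by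
    rw [← exp_nat_mul]
    push_cast
    ring_nf
  have hle_one : exp (-(c / 2) * |(n : ℝ)|) ≤ 1 := by
    rw [exp_le_one_iff, neg_mul, neg_nonpos]
    positivity
  have hmain := abs_le_abs_reflection_add h hEg (exp_pos _).le hle_one (hsqrt ▸ hrefl) t
  rwa [hu, mul_one, add_assoc, show (2 : ℝ) + 2 = 4 by norm_num] at hmain

end Reflection

section Localization

lemma abs_mul_le_of_sule_bound {φ : ℤ → ℝ} {C ε r γ x : ℝ} (hε : 0 ≤ ε) (hr : 0 ≤ r)
    (hγ : 2 * ε + r ≤ γ)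
    (hφ : ∀ n : ℤ, |φ n| ≤ C * exp (ε * |x|) * exp (-γ * |(n : ℝ) - x|)) (m k : ℤ) :
    |φ m * φ k| ≤ C ^ 2 * exp (2 * ε * |(m : ℝ)|) * exp (-r * |(m : ℝ) - k|) := by
  have hcenter : |x| ≤ |(m : ℝ)| + |(m : ℝ) - x| := by
    simpa using abs_sub (m : ℝ) (m - x)
  have htri : |(m : ℝ) - k| ≤ |(m : ℝ) - x| + |(k : ℝ) - x| := by
    simpa using abs_sub ((m : ℝ) - x) (k - x)
  have hexp : 2 * (ε * |x|) + (-γ * |(m : ℝ) - x| + -γ * |(k : ℝ) - x|) ≤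
      2 * ε * |(m : ℝ)| + -r * |(m : ℝ) - k| := by
    linarith [mul_le_mul_of_nonneg_left hcenter hε, mul_le_mul_of_nonneg_left htri hr,
      mul_le_mul_of_nonneg_right hγ (abs_nonneg ((m : ℝ) - x)),
      mul_le_mul_of_nonneg_right hγ (abs_nonneg ((k : ℝ) - x)),
      mul_nonneg hε (abs_nonneg ((k : ℝ) - x))]
  calc |φ m * φ k|
      ≤ C * exp (ε * |x|) * exp (-γ * |(m : ℝ) - x|) *
          (C * exp (ε * |x|) * exp (-γ * |(k : ℝ) - x|)) := by
        rw [abs_mul]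
        exact mul_le_mul (hφ m) (hφ k) (abs_nonneg _) ((abs_nonneg _).trans (hφ m))
    _ = C ^ 2 * exp (2 * (ε * |x|) + (-γ * |(m : ℝ) - x| + -γ * |(k : ℝ) - x|)) := by
        rw [two_mul]
        simp only [exp_add]
        ring
    _ ≤ C ^ 2 * exp (2 * ε * |(m : ℝ)| + -r * |(m : ℝ) - k|) := by gcongr
    _ = C ^ 2 * exp (2 * ε * |(m : ℝ)|) * exp (-r * |(m : ℝ) - k|) := by
        rw [exp_add, ← mul_assoc]

lemma hasSum_exp_neg_mul_abs_sub {r : ℝ} (hr : 0 < r) (m : ℤ) :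
    HasSum (fun k : ℤ => exp (-r * |(m : ℝ) - k|)) (∑' k : ℤ, exp (-r * |(k : ℝ)|)) := by
  have hnat : Summable fun k : ℕ => exp (-r * k) := by
    simpa only [mul_comm] using summable_exp_nat_mul_iff.2 (neg_lt_zero.2 hr)
  have hint : Summable fun k : ℤ => exp (-r * |(k : ℝ)|) :=
    .of_nat_of_neg (by simpa using hnat) (by simpa using hnat)
  simpa [Function.comp_def] using (Equiv.subLeft m).hasSum_iff.2 hint.hasSum

lemma one_le_mul_sq_of_one_le_sqrt_mul {x y : ℝ} (h : 1 ≤ √x * y) : 1 ≤ x * y ^ 2 := by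
  have hx : √x ≠ 0 := by
    intro h0
    rw [h0, zero_mul] at h
    exact zero_lt_one.not_ge h
  rw [← sq_sqrt (sqrt_ne_zero'.1 hx).le, ← mul_pow]
  exact one_le_pow₀ h

variable {ι : Type*} {m : ℤ} {P r : ℝ}

lemma one_le_of_abs_le_of_localized (Φ : HilbertBasis ι ℝ (lp (fun _ : ℤ => ℝ) 2)) {ν : ℝ}
    (hr : 0 < r) (hν : ∀ s, |Φ s m| ≤ ν)
    (hP : ∀ s k, |Φ s m * Φ s k| ≤ P * exp (-r * |(m : ℝ) - k|)) :
    1 ≤ ν * P * (∑' k : ℤ, exp (-(r / 2) * |(k : ℝ)|)) ^ 2 := by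
  refine one_le_mul_sq_of_one_le_sqrt_mul (one_le_of_abs_mul_le_of_hasSum Φ (m := m) (fun s k => ?_)
    ((hasSum_exp_neg_mul_abs_sub (half_pos hr) m).mul_left √(ν * P)))
  have hle : |Φ s m * Φ s k| ≤ ν := by
    rw [abs_mul]
    exact (mul_le_of_le_one_right (abs_nonneg _)
      ((abs_coe_lp_le_norm (Φ s) k).trans_eq (Φ.orthonormal.1 s))).trans (hν s)
  have hsq : (Φ s m * Φ s k) ^ 2 ≤ ν * P * exp (-(r / 2) * |(m : ℝ) - k|) ^ 2 := by
    calc (Φ s m * Φ s k) ^ 2 = |Φ s m * Φ s k| * |Φ s m * Φ s k| := by rw [abs_mul_abs_self, sq]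
      _ ≤ ν * (P * exp (-r * |(m : ℝ) - k|)) :=
          mul_le_mul hle (hP s k) (abs_nonneg _) ((abs_nonneg _).trans (hν s))
      _ = ν * P * exp (-(r / 2) * |(m : ℝ) - k|) ^ 2 := by
          rw [← exp_nat_mul, mul_assoc]
          congr 3
          push_cast
          ring
  simpa only [sqrt_mul' _ (sq_nonneg (exp _)), sqrt_sq (exp_pos _).le] using abs_le_sqrt hsq

lemma one_le_of_abs_le_add_of_localized (Φ : HilbertBasis ι ℝ (lp (fun _ : ℤ => ℝ) 2)) {m' : ℤ}
    {δ : ℝ} (hr : 0 < r) (hδ : 0 ≤ δ)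
    (hP : ∀ s k, |Φ s m * Φ s k| ≤ P * exp (-r * |(m : ℝ) - k|))
    (hle : ∀ s, |Φ s m| ≤ |Φ s m'| + δ) :
    1 ≤ (P * exp (-r * |(m : ℝ) - m'|) + δ) *
      (P * (∑' k : ℤ, exp (-(r / 2) * |(k : ℝ)|)) ^ 2) ^ 2 := by
  refine one_le_mul_sq_of_one_le_sqrt_mul ?_
  rw [← mul_assoc]
  refine one_le_of_abs_le_of_localized Φ hr (fun s => abs_le_sqrt ?_) hP
  have hone : |Φ s m| ≤ 1 := (abs_coe_lp_le_norm (Φ s) m).trans_eq (Φ.orthonormal.1 s)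
  calc Φ s m ^ 2 = |Φ s m| * |Φ s m| := by rw [abs_mul_abs_self, sq]
    _ ≤ |Φ s m| * (|Φ s m'| + δ) := mul_le_mul_of_nonneg_left (hle s) (abs_nonneg _)
    _ = |Φ s m * Φ s m'| + |Φ s m| * δ := by rw [mul_add, abs_mul]
    _ ≤ P * exp (-r * |(m : ℝ) - m'|) + δ := add_le_add (hP s m') (mul_le_of_le_one_left hδ hone)

end Localization

section Scales

lemma eventually_mul_exp_neg_abs_lt_one (A : ℝ) {c : ℝ} (hc : 0 < c) :
    ∀ᶠ n : ℤ in cofinite, A * exp (-c * |(n : ℝ)|) < 1 := by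
  have habs : Tendsto (fun n : ℤ => |(n : ℝ)|) cofinite atTop :=
    tendsto_norm_cocompact_atTop.comp Int.tendsto_coe_cofinite
  have hexp : Tendsto (fun n : ℤ => A * exp (-c * |(n : ℝ)|)) cofinite (𝓝 (A * 0)) :=
    (tendsto_exp_atBot.comp (habs.const_mul_atTop_of_neg (neg_lt_zero.2 hc))).const_mul A
  rw [mul_zero] at hexp
  exact hexp.eventually_lt_const one_pos

lemma abs_half_add_floor_le {η : ℝ} (hη : η ≤ 1) (n : ℤ) :
    |((n / 2 + ⌊η * |(n : ℝ)|⌋₊ : ℤ) : ℝ)| ≤ 2 * |(n : ℝ)| := by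
  have hhalf : |n / 2| ≤ |n| := by grind
  have hfloor : (⌊η * |(n : ℝ)|⌋₊ : ℝ) ≤ |(n : ℝ)| := by
    refine (Nat.cast_le.2 (Nat.floor_mono ?_)).trans (Nat.floor_le (abs_nonneg (n : ℝ)))
    exact mul_le_of_le_one_left (abs_nonneg _) hη
  push_cast
  calc |((n / 2 : ℤ) : ℝ) + (⌊η * |(n : ℝ)|⌋₊ : ℝ)|
      ≤ |((n / 2 : ℤ) : ℝ)| + |(⌊η * |(n : ℝ)|⌋₊ : ℝ)| := abs_add_le _ _
    _ ≤ |(n : ℝ)| + |(n : ℝ)| := add_le_add (by exact_mod_cast hhalf) (by rwa [Nat.abs_cast])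
    _ = 2 * |(n : ℝ)| := (two_mul _).symm

lemma exp_neg_mul_floor_le {r : ℝ} (hr : 0 ≤ r) (x : ℝ) :
    exp (-r * ⌊x⌋₊) ≤ exp r * exp (-r * x) := by
  rw [← exp_add, exp_le_exp]
  linarith [mul_le_mul_of_nonneg_left (Nat.lt_floor_add_one x).le hr]

lemma pow_floor_add_one_le {Q x : ℝ} (hQ : 1 ≤ Q) (hx : 0 ≤ x) :
    Q ^ (⌊x⌋₊ + 1) ≤ Q * exp (x * log Q) := by
  have hQpos : 0 < Q := one_pos.trans_le hQ
  rw [pow_succ', ← exp_log (pow_pos hQpos _), log_pow]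
  gcongr
  · exact log_nonneg hQ
  · exact Nat.floor_le hx

lemma localization_bound_floor_le {r c Q η ε ρ N y : ℝ} (hr : 0 ≤ r) (hQ : 1 ≤ Q) (hη : 0 ≤ η)
    (hηQ : η * log Q ≤ c / 4) (hε : 0 ≤ ε) (hρr : 12 * ε + ρ ≤ r * η) (hρc : 8 * ε + ρ ≤ c / 4)
    (hN : 0 ≤ N) (hy : y ≤ 2 * N) (C K : ℝ) :
    (C ^ 2 * exp (2 * ε * y) * exp (-r * ⌊η * N⌋₊) + Q ^ (⌊η * N⌋₊ + 1) * exp (-(c / 2) * N)) *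
        (C ^ 2 * exp (2 * ε * y) * K) ^ 2 ≤
      (C ^ 2 * exp r + Q) * (C ^ 2 * K) ^ 2 * exp (-ρ * N) := by
  have hcenter : exp (2 * ε * y) ≤ exp (4 * ε * N) := by
    rw [exp_le_exp]
    linarith [mul_le_mul_of_nonneg_left hy hε]
  have hpow : Q ^ (⌊η * N⌋₊ + 1) ≤ Q * exp (c / 4 * N) :=
    (pow_floor_add_one_le hQ (mul_nonneg hη hN)).trans <| by
      rw [mul_right_comm]
      gcongr
  have hlocalized : exp (12 * ε * N - r * (η * N)) ≤ exp (-ρ * N) := by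
    rw [exp_le_exp]
    linarith [mul_le_mul_of_nonneg_right hρr hN]
  have hreflected : exp (8 * ε * N - c / 4 * N) ≤ exp (-ρ * N) := by
    rw [exp_le_exp]
    linarith [mul_le_mul_of_nonneg_right hρc hN]
  calc _ ≤ (C ^ 2 * exp (4 * ε * N) * (exp r * exp (-r * (η * N))) +
            Q * exp (c / 4 * N) * exp (-(c / 2) * N)) * (C ^ 2 * exp (4 * ε * N) * K) ^ 2 := by
        rw [mul_pow _ K, mul_pow _ K]
        gcongr
        exact exp_neg_mul_floor_le hr _
    _ = (C ^ 2 * exp r * exp (12 * ε * N - r * (η * N)) + Q * exp (8 * ε * N - c / 4 * N)) *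
          (C ^ 2 * K) ^ 2 := by
        rw [show 12 * ε * N - r * (η * N) =
            4 * ε * N + 4 * ε * N + 4 * ε * N + -r * (η * N) by ring,
          show 8 * ε * N - c / 4 * N = 4 * ε * N + 4 * ε * N + (c / 4 * N + -(c / 2) * N) by ring]
        simp only [exp_add]
        ring
    _ ≤ (C ^ 2 * exp r * exp (-ρ * N) + Q * exp (-ρ * N)) * (C ^ 2 * K) ^ 2 := by gcongr
    _ = (C ^ 2 * exp r + Q) * (C ^ 2 * K) ^ 2 * exp (-ρ * N) := by ring

/- At distance `t ≈ η |n|` from the centre `n / 2`, with `η` small, the growth `Q ^ t` of the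
reflection error is beaten by `exp (-(c / 2) |n|)`, while the decay `exp (-r t)` still beats the
loss `exp (O(ε |n|))` of the localization bound. -/
lemma exists_rate_eventually_localization_bound_lt_one {r c Q : ℝ} (hr : 0 < r) (hc : 0 < c)
    (hQ : 1 < Q) :
    ∃ ε : ℝ, 0 < ε ∧ 2 * ε ≤ r ∧ ∀ C K : ℝ, ∀ᶠ n : ℤ in cofinite, ∃ t : ℕ,
      (C ^ 2 * exp (2 * ε * |((n / 2 + t : ℤ) : ℝ)|) * exp (-r * t) +
          Q ^ (t + 1) * exp (-(c / 2) * |(n : ℝ)|)) *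
        (C ^ 2 * exp (2 * ε * |((n / 2 + t : ℤ) : ℝ)|) * K) ^ 2 < 1 := by
  have hlogQ : 0 < log Q := log_pos hQ
  obtain ⟨η, hη, hη_one, hηQ⟩ : ∃ η : ℝ, 0 < η ∧ η ≤ 1 ∧ η * log Q ≤ c / 4 :=
    ⟨min 1 (c / 4 / log Q), by positivity, min_le_left _ _,
      (le_div_iff₀ hlogQ).1 (min_le_right _ _)⟩
  obtain ⟨ρ, hρ, hρr, hρc⟩ : ∃ ρ : ℝ, 0 < ρ ∧ 2 * ρ ≤ r * η ∧ 2 * ρ ≤ c / 4 :=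
    ⟨min (r * η) (c / 4) / 2, by positivity, by linarith [min_le_left (r * η) (c / 4)],
      by linarith [min_le_right (r * η) (c / 4)]⟩
  have hrη : r * η ≤ r := mul_le_of_le_one_right hr.le hη_one
  refine ⟨ρ / 12, by positivity, by linarith, fun C K => ?_⟩
  filter_upwards [eventually_mul_exp_neg_abs_lt_one ((C ^ 2 * exp r + Q) * (C ^ 2 * K) ^ 2) hρ]
    with n hn
  exact ⟨⌊η * |(n : ℝ)|⌋₊, (localization_bound_floor_le hr.le hQ.le hη.le hηQ (by positivity)
    (by linarith) (by linarith) (abs_nonneg _) (abs_half_add_floor_le hη_one n) C K).trans_lt hn⟩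

end Scales

lemma natCast_le_abs_sub_reflection (n : ℤ) (t : ℕ) :
    (t : ℝ) ≤ |((n / 2 + t : ℤ) : ℝ) - ((n - (n / 2 + t) : ℤ) : ℝ)| := by
  have hint : (t : ℤ) ≤ |n / 2 + t - (n - (n / 2 + t))| := by grind
  exact_mod_cast hint

theorem not_hasSULE_of_frequently_abs_reflection_sub_le {g : ℤ → ℝ} {G c : ℝ}
    (hg : ∀ j, |g j| ≤ G) (hc : 0 < c)
    (hrefl : ∃ᶠ n : ℤ in cofinite, ∀ j, |g (n - j) - g j| ≤ exp (-c * |(n : ℝ)|)) :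
    ¬ HasSULE g := by
  rintro ⟨Φ, ns, γ, hγ, heigen, hloc⟩
  have hG : 0 ≤ G := (abs_nonneg _).trans (hg 0)
  have hr : 0 < γ / 2 := half_pos hγ
  obtain ⟨ε, hε, hεγ, hlt⟩ := exists_rate_eventually_localization_bound_lt_one hr hc
    (show 1 < 2 * G + 4 by linarith)
  obtain ⟨C, hC⟩ := hloc ε hε
  obtain ⟨n, hn, t, ht⟩ := (hrefl.and_eventually
    (hlt C ((∑' k : ℤ, exp (-(γ / 2 / 2) * |(k : ℝ)|)) ^ 2))).exists
  have htwo_point (s : ℕ) := abs_mul_le_of_sule_bound hε.le hr.le (by linarith) (hC s) (n / 2 + t)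
  have hreflect (s : ℕ) :
      |Φ s (n / 2 + t)| ≤ |Φ s (n - (n / 2 + t))| +
        (2 * G + 4) ^ (t + 1) * exp (-(c / 2) * |(n : ℝ)|) := by
    obtain ⟨E, hE⟩ := heigen s
    exact abs_le_abs_reflection_add_of_bounded hE (Φ.orthonormal.1 s) hg hc.le hn t
  have hexp : exp (-(γ / 2) * |((n / 2 + t : ℤ) : ℝ) - ((n - (n / 2 + t) : ℤ) : ℝ)|) ≤
      exp (-(γ / 2) * t) :=
    exp_le_exp.2 (mul_le_mul_of_nonpos_left (natCast_le_abs_sub_reflection n t) (by linarith))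
  refine ht.not_ge
    ((one_le_of_abs_le_add_of_localized Φ hr (by positivity) htwo_point hreflect).trans ?_)
  gcongr

lemma abs_amoPot_le (lam α θ : ℝ) (j : ℤ) : |amoPot lam α θ j| ≤ 2 * |lam| := by
  rw [amoPot, abs_mul, abs_mul, abs_two]
  exact mul_le_of_le_one_right (by positivity) (abs_cos_le_one _)

lemma abs_amoPot_reflection_sub_le (lam α θ : ℝ) (n j : ℤ) :
    |amoPot lam α θ (n - j) - amoPot lam α θ j| ≤
      4 * π * |lam| * distToInt (2 * θ + n * α) := by
  set k := round (2 * θ + n * α)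
  have hperiod : cos (2 * π * (θ + j * α)) = cos (k * (2 * π) - 2 * π * (θ + j * α)) :=
    (cos_int_mul_two_pi_sub _ _).symm
  calc |amoPot lam α θ (n - j) - amoPot lam α θ j|
      = 2 * |lam| * |cos (2 * π * (θ + (n - j : ℤ) * α)) -
          cos (k * (2 * π) - 2 * π * (θ + j * α))| := by
        rw [amoPot, amoPot, hperiod, ← mul_sub, abs_mul, abs_mul, abs_two]
    _ ≤ 2 * |lam| * |2 * π * (θ + (n - j : ℤ) * α) - (k * (2 * π) - 2 * π * (θ + j * α))| := by
        exact mul_le_mul_of_nonneg_left (abs_cos_sub_cos_le _ _) (by positivity)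
    _ = 2 * |lam| * |2 * π * (2 * θ + n * α - k)| := by
        push_cast
        ring_nf
    _ = 4 * π * |lam| * distToInt (2 * θ + n * α) := by
        rw [abs_mul, abs_of_pos two_pi_pos, distToInt]
        ring

lemma frequently_distToInt_le_exp {α θ c : ℝ} (hc : 0 ≤ c) (hcδ : c < deltaPhase α θ) :
    ∃ᶠ n : ℤ in cofinite, distToInt (2 * θ + n * α) ≤ exp (-c * |(n : ℝ)|) := by
  have hdist_nonneg (x : ℝ) : 0 ≤ distToInt x := abs_nonneg _
  have hdist_le_one (x : ℝ) : distToInt x ≤ 1 := (abs_sub_round x).trans (by norm_num)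
  have hbdd : IsBoundedUnder (· ≥ ·) cofinite
      fun n : ℤ => -log (distToInt (2 * θ + n * α)) / |(n : ℝ)| :=
    isBoundedUnder_of ⟨0, fun n => div_nonneg
      (neg_nonneg.2 (log_nonpos (hdist_nonneg _) (hdist_le_one _))) (abs_nonneg _)⟩
  refine (frequently_lt_of_lt_limsup hbdd.isCoboundedUnder_le hcδ).mono fun n hn => ?_
  rcases (hdist_nonneg (2 * θ + n * α)).eq_or_lt with hzero | hpos
  · rw [← hzero]
    positivity
  · have habs : 0 < |(n : ℝ)| := by
      refine (abs_nonneg _).lt_of_ne fun h0 => ?_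
      rw [← h0, div_zero] at hn
      exact hn.not_ge hc
    rw [lt_div_iff₀ habs] at hn
    rw [← log_le_iff_le_exp hpos]
    linarith

lemma frequently_abs_amoPot_reflection_sub_le {lam α θ c : ℝ} (hc : 0 < c)
    (hcδ : c < deltaPhase α θ) :
    ∃ᶠ n : ℤ in cofinite, ∀ j,
      |amoPot lam α θ (n - j) - amoPot lam α θ j| ≤ exp (-(c / 2) * |(n : ℝ)|) := by
  refine ((frequently_distToInt_le_exp hc.le hcδ).and_eventually
    (eventually_mul_exp_neg_abs_lt_one (4 * π * |lam|) (half_pos hc))).mono ?_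
  rintro n ⟨hdist, hconst⟩ j
  calc |amoPot lam α θ (n - j) - amoPot lam α θ j|
      ≤ 4 * π * |lam| * distToInt (2 * θ + n * α) := abs_amoPot_reflection_sub_le lam α θ n j
    _ ≤ 4 * π * |lam| * exp (-c * |(n : ℝ)|) := by gcongr
    _ = 4 * π * |lam| * exp (-(c / 2) * |(n : ℝ)|) * exp (-(c / 2) * |(n : ℝ)|) := by
        rw [mul_assoc _ (exp _), ← exp_add]
        ring_nf
    _ ≤ exp (-(c / 2) * |(n : ℝ)|) := mul_le_of_le_one_left (exp_pos _).le hconst.le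

theorem amo_no_SULE_of_deltaPhase_pos_general (lam α θ : ℝ) (hδ : 0 < deltaPhase α θ) :
    ¬ HasSULE (amoPot lam α θ) := by
  obtain ⟨c, hc, hcδ⟩ := exists_between hδ
  exact not_hasSULE_of_frequently_abs_reflection_sub_le (abs_amoPot_le lam α θ) (half_pos hc)
    (frequently_abs_amoPot_reflection_sub_le hc hcδ)

theorem amo_no_SULE_of_deltaPhase_pos
    (lam α θ : ℝ) (hlam : 1 < lam) (hα : IsDiophantine α)
    (hδpos : 0 < deltaPhase α θ) (hδ : deltaPhase α θ < Real.log lam) :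
    ¬ HasSULE (amoPot lam α θ) :=
  amo_no_SULE_of_deltaPhase_pos_general lam α θ hδpos
end
end

section
/- Suppose H on ℓ²(ℤ) has SULE, with normalized eigenfunctions {φ_s} (‖φ_s‖ = 1), centers n_s ∈ ℤ, and decay rate γ > 0 as in the SULE definition. For each s let m_s ∈ ℤ be any global maximum of |φ_s|. Then for any ε > 0 there exists N such that whenever |n_s| ≥ N one has |m_s − n_s| ≤ ε|m_s| and |m_s − n_s| ≤ ε|n_s|. -/
noncomputable section

open Filter Real

/-!
If `f` decays like `A * exp (-γ * ‖x - c‖)` away from `c` and `‖f‖` is largest at `m`, then `‖f x‖`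
is bounded by the value of that envelope at `x` and by its value at `m`, hence by their geometric
mean `A * exp (-γ / 2 * ‖m - c‖) * exp (-γ / 2 * ‖x - c‖)`. Taking `ℓᵖ` norms in `x` gives
`‖f‖ ≤ K * A * exp (-γ / 2 * ‖m - c‖)` with `K` independent of `c`. For normalized SULE
eigenfunctions `A` is subexponential in the center, so `‖m - c‖` is sublinear in `‖c‖`.
-/

section Domination

variable {α β : Type*} {E : α → Type*} [∀ a, NormedAddCommGroup (E a)]
  {F : β → Type*} [∀ b, NormedAddCommGroup (F b)] {p : ENNReal}

theorem lp_norm_le_of_forall_norm_le_comp (hp : p ≠ 0) {f : lp E p} {g : lp F p} (e : α ↪ β)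
    (h : ∀ a, ‖f a‖ ≤ ‖g (e a)‖) : ‖f‖ ≤ ‖g‖ := by
  obtain rfl | rfl | hp_pos := p.trichotomy
  · exact absurd rfl hp
  · exact lp.norm_le_of_forall_le (lp.norm_nonneg' g)
      fun a ↦ (h a).trans (lp.norm_apply_le_norm hp g (e a))
  · refine lp.norm_le_of_forall_sum_le hp_pos (lp.norm_nonneg' g) fun s ↦ ?_
    calc ∑ a ∈ s, ‖f a‖ ^ p.toReal
        ≤ ∑ a ∈ s, ‖g (e a)‖ ^ p.toReal := by gcongr with a; exact h a
      _ = ∑ b ∈ s.map e, ‖g b‖ ^ p.toReal := (Finset.sum_map s e fun b ↦ ‖g b‖ ^ p.toReal).symm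
      _ ≤ ‖g‖ ^ p.toReal := lp.sum_rpow_le_norm_rpow hp_pos g (s.map e)

theorem lp_norm_le_mul_of_forall_norm_le_mul_comp (hp : p ≠ 0) {f : lp E p}
    {w : β → ℝ} (hw : Memℓp w p) (e : α ↪ β) {A : ℝ} (hA : 0 ≤ A)
    (h : ∀ a, ‖f a‖ ≤ A * w (e a)) :
    ‖f‖ ≤ A * ‖(⟨w, hw⟩ : lp (fun _ : β ↦ ℝ) p)‖ := by
  set W : lp (fun _ : β ↦ ℝ) p := ⟨w, hw⟩
  calc ‖f‖ ≤ ‖A • W‖ :=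
        lp_norm_le_of_forall_norm_le_comp hp e fun a ↦ (h a).trans (le_abs_self (A * w (e a)))
    _ ≤ ‖A‖ * ‖W‖ := lp.norm_const_smul_le hp A W
    _ = A * ‖W‖ := by rw [norm_of_nonneg hA]

end Domination

/-- The exponential envelope of rate `β` centered at the origin; the envelope centered at `c` is
`fun x ↦ expDecay β (x - c)`. -/
def expDecay {X : Type*} [Norm X] (β : ℝ) (x : X) : ℝ := exp (-β * ‖x‖)

theorem expDecay_pos {X : Type*} [Norm X] (β : ℝ) (x : X) : 0 < expDecay β x :=
  exp_pos _

theorem summable_expDecay_int {β : ℝ} (hβ : 0 < β) : Summable (expDecay β : ℤ → ℝ) := by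
  have h_nat : Summable fun n : ℕ ↦ exp (-β * n) := by
    simpa only [mul_comm] using summable_exp_nat_mul_iff.mpr (neg_lt_zero.mpr hβ)
  refine .of_nat_of_neg ?_ ?_ <;> simpa [expDecay] using h_nat

theorem memℓp_expDecay_int {β : ℝ} (hβ : 0 < β) {p : ENNReal} (hp : 1 ≤ p) :
    Memℓp (expDecay β : ℤ → ℝ) p := by
  have h_one : Memℓp (expDecay β : ℤ → ℝ) 1 :=
    memℓp_gen <| by simpa using (summable_expDecay_int hβ).abs
  exact h_one.of_exponent_ge hp

section Localization

variable {X : Type*} [SeminormedAddCommGroup X]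

theorem norm_sub_le_mul_norm_left {x y : X} {ε : ℝ} (hε : 0 ≤ ε)
    (h : ‖x - y‖ ≤ ε / (1 + ε) * ‖y‖) : ‖x - y‖ ≤ ε * ‖x‖ := by
  have h_cleared : (1 + ε) * ‖x - y‖ ≤ ε * ‖y‖ := by
    rwa [div_mul_eq_mul_div, le_div_iff₀' (by positivity)] at h
  have h_triangle : ε * ‖y‖ ≤ ε * (‖x‖ + ‖x - y‖) := by
    gcongr
    exact norm_le_norm_add_norm_sub x y
  linarith

variable {E : X → Type*} [∀ x, NormedAddCommGroup (E x)]

theorem norm_le_mul_expDecay_half_of_forall_le {f : ∀ x, E x} {c m : X} {A γ : ℝ} (hA : 0 ≤ A)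
    (hf : ∀ x, ‖f x‖ ≤ A * expDecay γ (x - c)) (hm : ∀ x, ‖f x‖ ≤ ‖f m‖) (x : X) :
    ‖f x‖ ≤ A * expDecay (γ / 2) (m - c) * expDecay (γ / 2) (x - c) := by
  have h_le_exp {y : X} (hy : ‖f x‖ ≤ A * expDecay γ (y - c))
      (h_half : γ / 2 * ‖m - c‖ + γ / 2 * ‖x - c‖ ≤ γ * ‖y - c‖) :
      ‖f x‖ ≤ A * expDecay (γ / 2) (m - c) * expDecay (γ / 2) (x - c) := by
    rw [mul_assoc, expDecay, expDecay, ← exp_add]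
    refine hy.trans ?_
    unfold expDecay
    gcongr
    linarith
  obtain h | h := le_total (γ * ‖m - c‖) (γ * ‖x - c‖)
  · exact h_le_exp (hf x) (by linarith)
  · exact h_le_exp ((hm x).trans (hf m)) (by linarith)

variable {p : ENNReal}

theorem lp_norm_le_mul_expDecay_of_forall_le (hp : p ≠ 0) {γ : ℝ}
    (hw : Memℓp (expDecay (γ / 2) : X → ℝ) p) {f : lp E p} {c m : X} {A : ℝ}
    (hf : ∀ x, ‖f x‖ ≤ A * expDecay γ (x - c)) (hm : ∀ x, ‖f x‖ ≤ ‖f m‖) :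
    ‖f‖ ≤ A * expDecay (γ / 2) (m - c) *
      ‖(⟨expDecay (γ / 2), hw⟩ : lp (fun _ : X ↦ ℝ) p)‖ := by
  have hA : 0 ≤ A :=
    nonneg_of_mul_nonneg_left ((norm_nonneg (f m)).trans (hf m)) (expDecay_pos γ (m - c))
  exact lp_norm_le_mul_of_forall_norm_le_mul_comp hp hw (Equiv.subRight c).toEmbedding
    (mul_nonneg hA (expDecay_pos _ _).le) (norm_le_mul_expDecay_half_of_forall_le hA hf hm)

/-- Semi-uniform localization with rate `γ` of the family `f` about the centers `c`: the decay
condition in the definition of SULE. -/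
def IsSemiuniformlyLocalized {ι : Type*} (f : ι → ∀ x, E x) (c : ι → X) (γ : ℝ) : Prop :=
  ∀ ε : ℝ, 0 < ε → ∃ C : ℝ, ∀ s x, ‖f s x‖ ≤ C * exp (ε * ‖c s‖) * expDecay γ (x - c s)

variable {ι : Type*} {f : ι → lp E p} {c m : ι → X} {γ : ℝ}

theorem IsSemiuniformlyLocalized.exists_norm_sub_le
    (hf : IsSemiuniformlyLocalized (fun s ↦ ⇑(f s)) c γ) (hp : p ≠ 0) (hγ : 0 < γ)
    (hw : Memℓp (expDecay (γ / 2) : X → ℝ) p) (hnorm : ∀ s, ‖f s‖ = 1)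
    (hm : ∀ s x, ‖f s x‖ ≤ ‖f s (m s)‖) {δ : ℝ} (hδ : 0 < δ) :
    ∃ B : ℝ, ∀ s, ‖m s - c s‖ ≤ δ * ‖c s‖ + B := by
  obtain ⟨C, hC⟩ := hf (γ / 2 * δ) (by positivity)
  set K : ℝ := ‖(⟨expDecay (γ / 2), hw⟩ : lp (fun _ : X ↦ ℝ) p)‖
  refine ⟨C * K / (γ / 2), fun s ↦ ?_⟩
  set t : ℝ := γ / 2 * (‖m s - c s‖ - δ * ‖c s‖) with ht
  have h_one : 1 ≤ C * K * exp (-t) :=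
    calc 1 = ‖f s‖ := (hnorm s).symm
      _ ≤ C * exp (γ / 2 * δ * ‖c s‖) * expDecay (γ / 2) (m s - c s) * K :=
        lp_norm_le_mul_expDecay_of_forall_le hp hw (hC s) (hm s)
      _ = C * K * (exp (γ / 2 * δ * ‖c s‖) * expDecay (γ / 2) (m s - c s)) := by ring
      _ = C * K * exp (-t) := by rw [expDecay, ← exp_add, ht]; ring_nf
  have h_exp : exp t ≤ C * K := by
    rwa [exp_neg, ← div_eq_mul_inv, one_le_div (exp_pos t)] at h_one
  have h_linear : t ≤ C * K := by linarith [add_one_le_exp t]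
  rw [← sub_le_iff_le_add', le_div_iff₀' (by positivity)]
  exact h_linear

theorem SULE_maxima_near_centers_general
    (hf : IsSemiuniformlyLocalized (fun s ↦ ⇑(f s)) c γ) (hp : p ≠ 0) (hγ : 0 < γ)
    (hw : Memℓp (expDecay (γ / 2) : X → ℝ) p) (hnorm : ∀ s, ‖f s‖ = 1)
    (hm : ∀ s x, ‖f s x‖ ≤ ‖f s (m s)‖) {ε : ℝ} (hε : 0 < ε) :
    ∃ N : ℝ, ∀ s, N ≤ ‖c s‖ → ‖m s - c s‖ ≤ ε * ‖m s‖ ∧ ‖m s - c s‖ ≤ ε * ‖c s‖ := by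
  set δ : ℝ := ε / (1 + ε)
  have hδ : 0 < δ := by positivity
  obtain ⟨B, hB⟩ := hf.exists_norm_sub_le hp hγ hw hnorm hm (half_pos hδ)
  refine ⟨B / (δ / 2), fun s hs ↦ ?_⟩
  have h_const : B ≤ δ / 2 * ‖c s‖ := (div_le_iff₀' (half_pos hδ)).mp hs
  have h_near : ‖m s - c s‖ ≤ δ * ‖c s‖ := by linarith [hB s]
  have hδε : δ ≤ ε := div_le_self hε.le (by linarith)
  exact ⟨norm_sub_le_mul_norm_left hε.le h_near, h_near.trans (by gcongr)⟩

end Localization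

theorem SULE_maxima_near_centers
    (H : lp (fun _ : ℤ => ℝ) 2 →L[ℝ] lp (fun _ : ℤ => ℝ) 2)
    (Φ : HilbertBasis ℕ ℝ (lp (fun _ : ℤ => ℝ) 2)) (ns : ℕ → ℤ) (γ : ℝ)
    (hγ : 0 < γ)
    (heig : ∀ s : ℕ, ∃ E : ℝ, H (Φ s) = E • (Φ s : lp (fun _ : ℤ => ℝ) 2))
    (hnorm : ∀ s : ℕ, ‖(Φ s : lp (fun _ : ℤ => ℝ) 2)‖ = 1)
    (hSULE : ∀ ε : ℝ, 0 < ε → ∃ C : ℝ, ∀ (s : ℕ) (n : ℤ),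
      |Φ s n| ≤ C * Real.exp (ε * |(ns s : ℝ)|) * Real.exp (-γ * |(n : ℝ) - (ns s : ℝ)|))
    (m : ℕ → ℤ) (hm : ∀ (s : ℕ) (n : ℤ), |Φ s n| ≤ |Φ s (m s)|)
    (ε : ℝ) (hε : 0 < ε) :
    ∃ N : ℝ, ∀ s : ℕ, N ≤ |(ns s : ℝ)| →
      |(m s : ℝ) - (ns s : ℝ)| ≤ ε * |(m s : ℝ)| ∧
      |(m s : ℝ) - (ns s : ℝ)| ≤ ε * |(ns s : ℝ)| := by
  have hloc : IsSemiuniformlyLocalized (fun s ↦ ⇑(Φ s)) ns γ := by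
    simpa [IsSemiuniformlyLocalized, expDecay, Int.norm_eq_abs] using hSULE
  simpa [Int.norm_eq_abs] using
    SULE_maxima_near_centers_general hloc two_ne_zero hγ
      (memℓp_expDecay_int (half_pos hγ) one_le_two) hnorm hm hε
end
end
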